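/- Let d ≥ 3 and 0 < α < d/2. For every ρ with max(1/α, 1) < ρ < d/(2α), ℙ-almost surely, log P₀(A(t) ≥ t^ρ) / log t → −αρ + 1 as t → ∞; that is, P₀(A(t) ≥ t^ρ) = t^{−αρ+1+o(1)} as t → ∞. -/

import Mathlib

open MeasureTheory ProbabilityTheory Filter Set

noncomputable section

/-- `n`-step transition probabilities of the discrete-time simple random walk on `ℤ^m`. -/
def srwKernel (m : ℕ) : ℕ → (Fin m → ℤ) → (Fin m → ℤ) → ℝ
  | 0, x, y => if x = y then 1 else 0
  | n + 1, x, y =>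
      (∑ i : Fin m, (srwKernel m n (Function.update x i (x i + 1)) y
        + srwKernel m n (Function.update x i (x i - 1)) y)) / (2 * m)

/-- Transition kernel of the continuous-time simple random walk on `ℤ^m` which jumps to
each of its `2m` nearest neighbours at rate `1` (total jump rate `2m`). -/
def heatKernel (m : ℕ) (t : ℝ) (x y : Fin m → ℤ) : ℝ :=
  ∑' n : ℕ, Real.exp (-(2 * m) * t) * ((2 * m) * t) ^ n / n.factorial * srwKernel m n x y

/-- `(P, S)` is (a realization of) the continuous-time simple random walk on `ℤ^m`:
under `P x` the process `S` starts at `x`, has right-continuous (piecewise constant)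
paths, and its finite-dimensional distributions are given by the heat kernel. -/
structure IsCTSRW (m : ℕ) {Ω : Type*} [MeasurableSpace Ω]
    (P : (Fin m → ℤ) → Measure Ω) (S : ℝ → Ω → (Fin m → ℤ)) : Prop where
  prob : ∀ x, IsProbabilityMeasure (P x)
  meas : Measurable fun p : ℝ × Ω => S p.1 p.2
  start : ∀ x, ∀ᵐ ω ∂ P x, S 0 ω = x
  rightCont : ∀ x, ∀ᵐ ω ∂ P x, ∀ t : ℝ, 0 ≤ t →
    ∃ ε > (0 : ℝ), ∀ u, t ≤ u → u < t + ε → S u ω = S t ω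
  fdd : ∀ x (n : ℕ) (t : Fin (n + 1) → ℝ), 0 ≤ t 0 →
    (∀ i : Fin n, t i.castSucc ≤ t i.succ) →
    ∀ y : Fin (n + 1) → (Fin m → ℤ),
      (P x {ω | ∀ i, S (t i) ω = y i}).toReal
        = heatKernel m (t 0) x (y 0)
          * ∏ i : Fin n, heatKernel m (t i.succ - t i.castSucc) (y i.castSucc) (y i.succ)

/-- `z` is an i.i.d. nonnegative random scenery on `ℤ^d` whose common upper tail decays
like `r^{-α+o(1)}`. -/
structure IsScenery (d : ℕ) (α : ℝ) {Ω : Type*} [MeasurableSpace Ω]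
    (μ : Measure Ω) (z : (Fin d → ℤ) → Ω → ℝ) : Prop where
  prob : IsProbabilityMeasure μ
  meas : ∀ x, Measurable (z x)
  nonneg : ∀ x ω, 0 ≤ z x ω
  indep : iIndepFun z μ
  ident : ∀ x, IdentDistrib (z x) (z 0) μ μ
  tail : Tendsto (fun r : ℝ => Real.log (μ {ω | r < z 0 ω}).toReal / Real.log r)
    atTop (nhds (-α))

/-- The random walk in random scenery `A(t) = ∫₀ᵗ z(S_u) du`. -/
def rwrs {Ωz Ωw : Type*} (d : ℕ) (z : (Fin d → ℤ) → Ωz → ℝ)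
    (S : ℝ → Ωw → (Fin d → ℤ)) (t : ℝ) (ζ : Ωz) (ω : Ωw) : ℝ :=
  ∫ u in Set.Ioc (0 : ℝ) t, z (S u ω) ζ

end

open MeasureTheory ProbabilityTheory Filter Set

namespace RWRS

/-! Part 1: analytic estimates on the kernels -/

lemma srw_nonneg (m n : ℕ) (x y : Fin m → ℤ) : 0 ≤ srwKernel m n x y := by
  induction n generalizing x with
  | zero => simp only [srwKernel]; split_ifs <;> norm_num
  | succ n ih =>
    simp only [srwKernel]
    exact div_nonneg (Finset.sum_nonneg fun i _ => add_nonneg (ih _) (ih _)) (by positivity)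

lemma heat_nonneg (m : ℕ) {t : ℝ} (ht : 0 ≤ t) (x y : Fin m → ℤ) : 0 ≤ heatKernel m t x y := by
  unfold heatKernel
  refine tsum_nonneg fun n => mul_nonneg ?_ (srw_nonneg _ _ _ _)
  positivity

noncomputable def ph (m : ℕ) (θ : Fin m → ℝ) : ℝ := (∑ i, Real.cos (θ i)) / m

noncomputable def nu : Measure ℝ := volume.restrict (Ioc (-Real.pi) Real.pi)
noncomputable def Nu (m : ℕ) : Measure (Fin m → ℝ) := Measure.pi (fun _ => nu)

instance : IsFiniteMeasure nu := by unfold nu; infer_instance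
instance (m : ℕ) : IsFiniteMeasure (Nu m) := by unfold Nu; infer_instance

lemma nu_univ : nu.real univ = 2 * Real.pi := by
  simp [nu, Measure.real]
  rw [ENNReal.toReal_ofReal (by positivity)]
  ring

lemma integral_nu_exp (k : ℤ) : ∫ θ, Complex.exp (Complex.I * (θ * k)) ∂nu
    = if k = 0 then (2 * Real.pi : ℂ) else 0 := by
  unfold nu
  rw [← intervalIntegral.integral_of_le (by linarith [Real.pi_pos])]
  split_ifs with hk
  · simp [hk]; ring
  · have : ∀ θ : ℝ, Complex.exp (Complex.I * (θ * k)) = Complex.exp ((Complex.I * k) * θ) := by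
      intro θ; congr 1; ring
    simp_rw [this]
    rw [integral_exp_mul_complex (by simp [hk])]
    have : Complex.exp (Complex.I * k * (Real.pi : ℝ)) = Complex.exp (Complex.I * k * ((-Real.pi : ℝ))) := by
      rw [Complex.exp_eq_exp_iff_exists_int]
      refine ⟨k, ?_⟩
      push_cast; ring
    rw [this]; simp

lemma base_fourier (m : ℕ) (k : Fin m → ℤ) :
    ∫ θ, Real.cos (∑ j, θ j * k j) ∂(Nu m) = if k = 0 then (2 * Real.pi) ^ m else 0 := by
  have h1 : ∫ θ : Fin m → ℝ, ∏ j, Complex.exp (Complex.I * (θ j * k j)) ∂(Nu m)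
      = ∏ j, if k j = 0 then (2 * Real.pi : ℂ) else 0 := by
    unfold Nu
    rw [integral_fintype_prod_eq_prod (fun j (x : ℝ) => Complex.exp (Complex.I * (x * k j)))]
    simp_rw [integral_nu_exp]
  have h2 : ∀ θ : Fin m → ℝ, ∏ j, Complex.exp (Complex.I * (θ j * k j))
      = Complex.exp ((∑ j, θ j * k j : ℝ) * Complex.I) := by
    intro θ
    rw [← Complex.exp_sum]; congr 1; push_cast; rw [Finset.sum_mul]
    exact Finset.sum_congr rfl fun _ _ => by ring
  simp_rw [h2] at h1
  have hIntg : Integrable (fun θ : Fin m → ℝ => Complex.exp ((∑ j, θ j * k j : ℝ) * Complex.I)) (Nu m) := by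
    refine Integrable.of_bound (C := 1) ?_ ?_
    · exact (by fun_prop : Continuous _).aestronglyMeasurable
    · filter_upwards with θ
      rw [Complex.norm_exp_ofReal_mul_I]
  have h3 := congrArg Complex.re h1
  rw [← RCLike.re_eq_complex_re, ← integral_re hIntg] at h3
  simp only [RCLike.re_eq_complex_re, Complex.exp_ofReal_mul_I_re] at h3
  rw [h3]
  split_ifs with hk
  · subst hk; simp; norm_cast
  · obtain ⟨j, hj⟩ := Function.ne_iff.mp hk
    rw [Finset.prod_eq_zero (Finset.mem_univ j)]; · simp
    simpa using hj

lemma ph_abs (m : ℕ) (θ : Fin m → ℝ) : |ph m θ| ≤ 1 := by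
  unfold ph
  rcases Nat.eq_zero_or_pos m with rfl | hm
  · simp
  have hm' : (0 : ℝ) < m := by exact_mod_cast hm
  rw [abs_div, abs_of_pos hm', div_le_one hm']
  refine (Finset.abs_sum_le_sum_abs _ _).trans ?_
  refine (Finset.sum_le_sum fun i _ => Real.abs_cos_le_one (θ i)).trans ?_
  simp

lemma ph_cont (m : ℕ) : Continuous (ph m) := by unfold ph; fun_prop

lemma int_term (m n : ℕ) (k : Fin m → ℤ) :
    Integrable (fun θ => ph m θ ^ n * Real.cos (∑ j, θ j * k j)) (Nu m) := by
  refine Integrable.of_bound (C := 1) ?_ ?_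
  · have := ph_cont m
    exact (by fun_prop : Continuous _).aestronglyMeasurable
  · filter_upwards with θ
    rw [norm_mul, norm_pow, Real.norm_eq_abs, Real.norm_eq_abs]
    exact mul_le_one₀ (pow_le_one₀ (abs_nonneg _) (ph_abs m θ)) (abs_nonneg _) (Real.abs_cos_le_one _)

lemma srw_fourier (m n : ℕ) (x y : Fin m → ℤ) :
    srwKernel m n x y * (2 * Real.pi) ^ m
      = ∫ θ, ph m θ ^ n * Real.cos (∑ j, θ j * ((x - y) j : ℤ)) ∂(Nu m) := by
  induction n generalizing x with
  | zero =>
    simp only [srwKernel, pow_zero, one_mul]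
    rw [base_fourier]
    simp only [sub_eq_zero]
    split_ifs <;> simp
  | succ n ih =>
    simp only [srwKernel]
    rw [div_mul_eq_mul_div, Finset.sum_mul]
    simp_rw [add_mul, ih]
    have hstep : ∀ i : Fin m, ∀ s : ℤ, ∀ θ : Fin m → ℝ,
        ∑ j, θ j * (((Function.update x i (x i + s)) - y) j : ℤ) = ∑ j, θ j * ((x - y) j : ℤ) + s * θ i := by
      intro i s θ
      have : ∀ j, θ j * (((Function.update x i (x i + s)) - y) j : ℤ)
          = θ j * ((x - y) j : ℤ) + (if j = i then s * θ i else 0) := by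
        intro j
        by_cases h : j = i
        · subst h; simp; ring
        · simp [h]
      simp_rw [this, Finset.sum_add_distrib]
      simp
    have e1 : ∀ i : Fin m, (∫ θ, ph m θ ^ n * Real.cos (∑ j, θ j * (((Function.update x i (x i + 1)) - y) j : ℤ)) ∂(Nu m)
        + ∫ θ, ph m θ ^ n * Real.cos (∑ j, θ j * (((Function.update x i (x i - 1)) - y) j : ℤ)) ∂(Nu m))
        = ∫ θ, 2 * (ph m θ ^ n * Real.cos (∑ j, θ j * ((x - y) j : ℤ))) * Real.cos (θ i) ∂(Nu m) := by
      intro i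
      rw [← integral_add (int_term m n _) (int_term m n _)]
      congr 1; ext θ
      have h1 := hstep i 1 θ
      have h2 := hstep i (-1) θ
      rw [← sub_eq_add_neg] at h2
      rw [h1, h2]
      have := Real.cos_add (∑ j, θ j * ((x - y) j : ℤ)) (θ i)
      have := Real.cos_sub (∑ j, θ j * ((x - y) j : ℤ)) (θ i)
      push_cast
      rw [one_mul, neg_one_mul, ← sub_eq_add_neg]
      push_cast at *
      rw [Real.cos_add, Real.cos_sub]; ring
    simp_rw [e1]
    rw [← integral_finsetSum]
    · rw [← integral_div]
      congr 1; ext θ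
      rw [← Finset.mul_sum, pow_succ]
      nth_rewrite 3 [ph]
      rcases Nat.eq_zero_or_pos m with rfl | hm
      · simp
      have hm' : (m : ℝ) ≠ 0 := by positivity
      field_simp
    · intro i _
      refine ((int_term m n (x - y)).const_mul 2).mul_bdd (c := 1) ?_ ?_
      · exact (by fun_prop : Continuous _).aestronglyMeasurable
      · filter_upwards with θ
        exact Real.abs_cos_le_one _

lemma poisson_hasSum (a : ℝ) : HasSum (fun n : ℕ => a ^ n / n.factorial) (Real.exp a) := by
  rw [Real.exp_eq_exp_ℝ]; exact NormedSpace.expSeries_div_hasSum_exp a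

noncomputable def wt (m : ℕ) (t : ℝ) (θ : Fin m → ℝ) : ℝ := ∏ j, Real.exp (-(2 * t) * (1 - Real.cos (θ j)))

lemma wt_eq (m : ℕ) (t : ℝ) (θ : Fin m → ℝ) :
    wt m t θ = Real.exp (-(2 * m) * t) * Real.exp ((2 * m) * t * ph m θ) := by
  unfold wt ph
  rw [← Real.exp_sum, ← Real.exp_add]; congr 1
  rcases Nat.eq_zero_or_pos m with rfl | hm
  · simp
  have hm' : (m : ℝ) ≠ 0 := by positivity
  rw [← Finset.mul_sum]
  simp only [Finset.sum_sub_distrib, Finset.sum_const, Finset.card_univ, Fintype.card_fin, nsmul_eq_mul, mul_one]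
  field_simp; ring

lemma heat_fourier (m : ℕ) {t : ℝ} (ht : 0 ≤ t) (x y : Fin m → ℤ) :
    heatKernel m t x y * (2 * Real.pi) ^ m
      = ∫ θ, wt m t θ * Real.cos (∑ j, θ j * ((x - y) j : ℤ)) ∂(Nu m) := by
  unfold heatKernel
  set c : ℕ → ℝ := fun n => Real.exp (-(2 * m) * t) * ((2 * m) * t) ^ n / n.factorial with hc
  have hcn : ∀ n, 0 ≤ c n := fun n => by simp only [hc]; positivity
  have hcs : Summable c := by
    have := (poisson_hasSum ((2 * m) * t)).summable.mul_left (Real.exp (-(2 * m) * t))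
    refine this.congr fun n => ?_
    simp only [hc]; ring
  rw [← tsum_mul_right]
  have e : ∀ n, c n * srwKernel m n x y * (2 * Real.pi) ^ m
     = ∫ θ, c n * (ph m θ ^ n * Real.cos (∑ j, θ j * ((x - y) j : ℤ))) ∂(Nu m) := by
    intro n; rw [mul_assoc, srw_fourier, integral_const_mul]
  change ∑' n, c n * srwKernel m n x y * (2 * Real.pi) ^ m = _
  simp_rw [e]
  have key := hasSum_integral_of_summable_integral_norm (μ := Nu m)
    (F := fun n θ => c n * (ph m θ ^ n * Real.cos (∑ j, θ j * ((x - y) j : ℤ))))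
    (fun n => (int_term m n _).const_mul _) ?_
  · rw [key.tsum_eq]
    congr 1; ext θ
    have hs := ((poisson_hasSum ((2 * m) * t * ph m θ)).mul_left (Real.exp (-(2 * m) * t))).mul_right
      (Real.cos (∑ j, θ j * ((x - y) j : ℤ)))
    rw [wt_eq, ← hs.tsum_eq]
    congr 1; ext n
    simp only [hc]; rw [mul_pow]; ring
  · refine Summable.of_nonneg_of_le (fun n => integral_nonneg fun _ => norm_nonneg _) (fun n => ?_)
      (hcs.mul_left ((Nu m).real univ))
    refine (integral_mono_of_nonneg (g := fun _ => c n) (ae_of_all _ fun _ => norm_nonneg _) (integrable_const _)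
      (ae_of_all _ fun θ => ?_)).trans ?_
    · simp only [norm_mul, norm_pow, Real.norm_eq_abs]
      rw [abs_of_nonneg (hcn n)]
      refine mul_le_of_le_one_right (hcn n) ?_
      exact mul_le_one₀ (pow_le_one₀ (abs_nonneg _) (ph_abs m θ)) (abs_nonneg _) (Real.abs_cos_le_one _)
    · simp

lemma wt_nonneg (m : ℕ) (t : ℝ) (θ : Fin m → ℝ) : 0 ≤ wt m t θ := by
  unfold wt; exact Finset.prod_nonneg fun _ _ => (Real.exp_pos _).le

lemma wt_le_one (m : ℕ) {t : ℝ} (ht : 0 ≤ t) (θ : Fin m → ℝ) : wt m t θ ≤ 1 := by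
  unfold wt; refine Finset.prod_le_one (fun _ _ => (Real.exp_pos _).le) fun j _ => ?_
  rw [Real.exp_le_one_iff]
  have := Real.cos_le_one (θ j)
  nlinarith

lemma wt_cont (m : ℕ) (t : ℝ) : Continuous (wt m t) := by unfold wt; fun_prop

lemma wt_int (m : ℕ) {t : ℝ} (ht : 0 ≤ t) : Integrable (wt m t) (Nu m) := by
  refine Integrable.of_bound (C := 1) (wt_cont m t).aestronglyMeasurable ?_
  filter_upwards with θ
  rw [Real.norm_eq_abs, abs_of_nonneg (wt_nonneg _ _ _)]; exact wt_le_one m ht θ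

lemma wt_integral (m : ℕ) (t : ℝ) : ∫ θ, wt m t θ ∂(Nu m)
    = (∫ θ, Real.exp (-(2 * t) * (1 - Real.cos θ)) ∂nu) ^ m := by
  unfold wt Nu
  rw [integral_fintype_prod_eq_prod (fun j (x : ℝ) => Real.exp (-(2 * t) * (1 - Real.cos x)))]
  simp

lemma nu_mem : ∀ᵐ θ ∂nu, |θ| ≤ Real.pi := by
  unfold nu
  filter_upwards [ae_restrict_mem measurableSet_Ioc] with θ hθ
  exact abs_le.mpr ⟨hθ.1.le, hθ.2⟩

lemma gauss_upper {t : ℝ} (ht : 0 < t) :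
    ∫ θ, Real.exp (-(2 * t) * (1 - Real.cos θ)) ∂nu ≤ 4 * t ^ (-(1/2) : ℝ) := by
  have hb : 0 < 4 * t / Real.pi ^ 2 := by positivity
  have hg := integrable_exp_neg_mul_sq hb
  calc ∫ θ, Real.exp (-(2 * t) * (1 - Real.cos θ)) ∂nu
      ≤ ∫ θ, Real.exp (-(4 * t / Real.pi ^ 2) * θ ^ 2) ∂nu := by
        refine integral_mono_of_nonneg (ae_of_all _ fun _ => (Real.exp_pos _).le) hg.restrict ?_
        filter_upwards [nu_mem] with θ hθ
        have h := Real.cos_le_one_sub_mul_cos_sq hθ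
        refine Real.exp_le_exp.mpr ?_
        have e : -(4 * t / Real.pi ^ 2) * θ ^ 2 = -(2 * t) * (2 / Real.pi ^ 2 * θ ^ 2) := by ring
        rw [e]
        nlinarith
    _ ≤ ∫ θ, Real.exp (-(4 * t / Real.pi ^ 2) * θ ^ 2) := by
        exact setIntegral_le_integral hg (ae_of_all _ fun _ => (Real.exp_pos _).le)
    _ = √(Real.pi / (4 * t / Real.pi ^ 2)) := integral_gaussian _
    _ ≤ 4 * t ^ (-(1/2) : ℝ) := by
        rw [Real.rpow_neg ht.le, ← Real.sqrt_eq_rpow]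
        rw [Real.sqrt_le_left (by positivity)]
        rw [mul_pow, inv_pow, Real.sq_sqrt ht.le]
        have h4 := Real.pi_lt_four
        have h0 := Real.pi_pos
        have : Real.pi / (4 * t / Real.pi ^ 2) = (Real.pi ^ 3 / 4) * t⁻¹ := by field_simp
        rw [this]
        refine mul_le_mul_of_nonneg_right ?_ (by positivity)
        have : Real.pi ^ 3 ≤ 4 ^ 3 := by gcongr
        linarith

lemma gauss_lower {t : ℝ} (ht : 1 ≤ t) :
    Real.exp (-1) * t ^ (-(1/2) : ℝ) ≤ ∫ θ, Real.exp (-(2 * t) * (1 - Real.cos θ)) ∂nu := by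
  have ht0 : 0 < t := by linarith
  set h := t ^ (-(1/2) : ℝ) with hh
  have hpos : 0 < h := by positivity
  have h1 : h ≤ 1 := Real.rpow_le_one_of_one_le_of_nonpos ht (by norm_num)
  have hsq : h ^ 2 * t = 1 := by
    rw [hh, ← Real.rpow_natCast, ← Real.rpow_mul ht0.le]; norm_num
    rw [Real.rpow_neg_one]; field_simp
  have hIntg : Integrable (fun θ => Real.exp (-(2 * t) * (1 - Real.cos θ))) nu := by
    refine Integrable.of_bound (C := 1) (by fun_prop : Continuous _).aestronglyMeasurable ?_
    filter_upwards with θ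
    rw [Real.norm_eq_abs, abs_of_pos (Real.exp_pos _), Real.exp_le_one_iff]
    have := Real.cos_le_one θ
    nlinarith
  have hsub : Ioc 0 h ⊆ Ioc (-Real.pi) Real.pi := by
    intro θ hθ; constructor
    · linarith [hθ.1, Real.pi_pos]
    · linarith [hθ.2, Real.pi_gt_three]
  calc Real.exp (-1) * h = ∫ θ in Ioc 0 h, Real.exp (-1) := by
        simp [hpos.le]; ring
    _ ≤ ∫ θ in Ioc 0 h, Real.exp (-(2 * t) * (1 - Real.cos θ)) := by
        refine setIntegral_mono_on (by simp) (IntegrableOn.mono_set hIntg hsub) measurableSet_Ioc fun θ hθ => ?_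
        refine Real.exp_le_exp.mpr ?_
        have := Real.one_sub_sq_div_two_le_cos (x := θ)
        have h2 : θ ^ 2 ≤ h ^ 2 := by have := hθ.1; have := hθ.2; gcongr
        nlinarith
    _ ≤ _ := by
        unfold nu
        exact setIntegral_mono_set hIntg (ae_of_all _ fun _ => (Real.exp_pos _).le) hsub.eventuallyLE

lemma heat_le (m : ℕ) {t : ℝ} (ht : 0 < t) (x y : Fin m → ℤ) :
    heatKernel m t x y ≤ (t ^ (-(1/2) : ℝ)) ^ m := by
  have h := heat_fourier m ht.le x y
  have h2 : ∫ θ, wt m t θ * Real.cos (∑ j, θ j * ((x - y) j : ℤ)) ∂(Nu m) ≤ ∫ θ, wt m t θ ∂(Nu m) := by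
    refine integral_mono ?_ (wt_int m ht.le) fun θ => ?_
    rotate_left
    · exact mul_le_of_le_one_right (wt_nonneg _ _ _) (Real.cos_le_one _)
    · refine (wt_int m ht.le).mul_bdd (c := 1) (by fun_prop : Continuous _).aestronglyMeasurable ?_
      filter_upwards with θ
      exact Real.abs_cos_le_one _
  rw [← h, wt_integral] at h2
  have h3 : (∫ θ, Real.exp (-(2 * t) * (1 - Real.cos θ)) ∂nu) ^ m ≤ (4 * t ^ (-(1/2) : ℝ)) ^ m :=
    pow_le_pow_left₀ (integral_nonneg fun _ => (Real.exp_pos _).le) (gauss_upper ht) m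
  rw [mul_pow] at h3
  have h4 : (4 : ℝ) ^ m ≤ (2 * Real.pi) ^ m := by
    gcongr; linarith [Real.pi_gt_three]
  have h5 : 0 ≤ (t ^ (-(1/2) : ℝ)) ^ m := by positivity
  have h6 : (0 : ℝ) < (2 * Real.pi) ^ m := by positivity
  have : heatKernel m t x y * (2 * Real.pi) ^ m ≤ (t ^ (-(1/2) : ℝ)) ^ m * (2 * Real.pi) ^ m := by nlinarith
  exact le_of_mul_le_mul_right this h6

lemma heat_ge (m : ℕ) {t h : ℝ} (ht : 1 ≤ t) (hh : 0 ≤ h) (x y : Fin m → ℤ)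
    (hxy : ∑ j, h * |((x - y) j : ℤ)| ≤ (1 : ℝ)) :
    Real.exp (-m) / 2 / (2 * Real.pi) ^ m * (t ^ (-(1/2) : ℝ)) ^ m - 2 * Real.exp (- (4 / Real.pi ^ 2 * t * h ^ 2))
      ≤ heatKernel m t x y := by
  have ht0 : 0 ≤ t := by linarith
  have hf := heat_fourier m ht0 x y
  set τ := Real.exp (- (4 / Real.pi ^ 2 * t * h ^ 2)) with hτ
  have hae : ∀ᵐ θ ∂(Nu m), ∀ j, |θ j| ≤ Real.pi := by
    rw [ae_all_iff]; intro j
    exact (Measure.tendsto_eval_ae_ae (μ := fun _ : Fin m => nu) (i := j)).eventually nu_mem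
  have h2 : ∫ θ, (wt m t θ / 2 - 2 * τ) ∂(Nu m)
      ≤ ∫ θ, wt m t θ * Real.cos (∑ j, θ j * ((x - y) j : ℤ)) ∂(Nu m) := by
    refine integral_mono_ae (((wt_int m ht0).div_const 2).sub (integrable_const _)) ?_ ?_
    · refine (wt_int m ht0).mul_bdd (c := 1) (by fun_prop : Continuous _).aestronglyMeasurable ?_
      filter_upwards with θ
      exact Real.abs_cos_le_one _
    · filter_upwards [hae] with θ hθ
      have hτ0 : 0 < τ := Real.exp_pos _
      have hw := wt_nonneg m t θ
      by_cases hG : ∀ j, |θ j| ≤ h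
      · have h3 : |∑ j, θ j * ((x - y) j : ℤ)| ≤ 1 := by
          refine (Finset.abs_sum_le_sum_abs _ _).trans (le_trans (Finset.sum_le_sum fun j _ => ?_) hxy)
          rw [abs_mul]
          push_cast
          exact mul_le_mul_of_nonneg_right (hG j) (abs_nonneg _)
        have h4 := Real.one_sub_sq_div_two_le_cos (x := ∑ j, θ j * ((x - y) j : ℤ))
        have h5 := (sq_le_one_iff_abs_le_one _).mpr h3
        nlinarith
      · push Not at hG
        obtain ⟨j, hj⟩ := hG
        have hw2 : wt m t θ ≤ τ := by
          unfold wt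
          rw [← Finset.mul_prod_erase _ _ (Finset.mem_univ j)]
          have a1 : Real.exp (-(2 * t) * (1 - Real.cos (θ j))) ≤ τ := by
            refine Real.exp_le_exp.mpr ?_
            have := Real.cos_le_one_sub_mul_cos_sq (hθ j)
            have hsq : h ^ 2 ≤ θ j ^ 2 := by rw [← sq_abs (θ j)]; gcongr
            have e : 4 / Real.pi ^ 2 * t * h ^ 2 = 2 * t * (2 / Real.pi ^ 2 * h ^ 2) := by ring
            have : 2 / Real.pi ^ 2 * h ^ 2 ≤ 2 / Real.pi ^ 2 * θ j ^ 2 := by gcongr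
            rw [e]; nlinarith
          have a2 : ∏ i ∈ Finset.univ.erase j, Real.exp (-(2 * t) * (1 - Real.cos (θ i))) ≤ 1 := by
            refine Finset.prod_le_one (fun _ _ => (Real.exp_pos _).le) fun j _ => ?_
            rw [Real.exp_le_one_iff]
            have := Real.cos_le_one (θ j)
            nlinarith
          calc _ ≤ τ * 1 := mul_le_mul a1 a2 (Finset.prod_nonneg fun _ _ => (Real.exp_pos _).le) hτ0.le
            _ = τ := mul_one _
        have := Real.neg_one_le_cos (∑ j, θ j * ((x - y) j : ℤ))
        nlinarith
  rw [← hf, integral_sub ((wt_int m ht0).div_const 2) (integrable_const _), integral_div, wt_integral] at h2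
  have hNu : (Nu m).real univ = (2 * Real.pi) ^ m := by
    unfold Nu
    rw [Measure.real, Measure.pi_univ, ENNReal.toReal_prod]
    have := nu_univ
    rw [Measure.real] at this
    simp [this]
  simp only [integral_const, hNu, smul_eq_mul] at h2
  have h3 : (Real.exp (-1) * t ^ (-(1/2) : ℝ)) ^ m ≤ (∫ θ, Real.exp (-(2 * t) * (1 - Real.cos θ)) ∂nu) ^ m :=
    pow_le_pow_left₀ (by positivity) (gauss_lower ht) m
  rw [mul_pow, ← Real.exp_nat_mul, mul_neg_one] at h3
  have h6 : (0 : ℝ) < (2 * Real.pi) ^ m := by positivity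
  refine le_of_mul_le_mul_right ?_ h6
  rw [sub_mul]
  have : Real.exp (-m) / 2 / (2 * Real.pi) ^ m * (t ^ (-(1/2) : ℝ)) ^ m * (2 * Real.pi) ^ m
    = (Real.exp (-m) * (t ^ (-(1/2) : ℝ)) ^ m) / 2 := by field_simp
  rw [this]
  linarith

end RWRS

namespace RWRS

lemma srw_le_one (m n : ℕ) (x y : Fin m → ℤ) : srwKernel m n x y ≤ 1 := by
  induction n generalizing x with
  | zero => simp only [srwKernel]; split_ifs <;> norm_num
  | succ n ih =>
    simp only [srwKernel]
    rcases Nat.eq_zero_or_pos m with rfl | hm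
    · simp
    have hm' : (0 : ℝ) < 2 * m := by positivity
    rw [div_le_one hm']
    calc _ ≤ ∑ i : Fin m, (2 : ℝ) := Finset.sum_le_sum fun i _ => by
          have := ih (Function.update x i (x i + 1)); have := ih (Function.update x i (x i - 1)); linarith
      _ = 2 * m := by simp; ring

lemma pois_summable (m : ℕ) (t : ℝ) :
    HasSum (fun n : ℕ => Real.exp (-(2 * m) * t) * ((2 * m) * t) ^ n / n.factorial) 1 := by
  have := (poisson_hasSum ((2 * m) * t)).mul_left (Real.exp (-(2 * m) * t))
  rw [← Real.exp_add, neg_mul, neg_add_cancel, Real.exp_zero] at this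
  refine this.congr_fun ?_ |> fun h => h
  intro n; simp only [neg_mul]; ring

lemma heat_summable (m : ℕ) {t : ℝ} (ht : 0 ≤ t) (x y : Fin m → ℤ) :
    Summable fun n : ℕ => Real.exp (-(2 * m) * t) * ((2 * m) * t) ^ n / n.factorial * srwKernel m n x y := by
  refine Summable.of_nonneg_of_le (fun n => mul_nonneg (by positivity) (srw_nonneg _ _ _ _)) (fun n => ?_)
    (pois_summable m t).summable
  exact mul_le_of_le_one_right (by positivity) (srw_le_one _ _ _ _)

lemma heat_diag (m : ℕ) {t : ℝ} (ht : 0 ≤ t) (x : Fin m → ℤ) :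
    Real.exp (-(2 * m * t)) ≤ heatKernel m t x x := by
  have := (heat_summable m ht x x).le_tsum 0 (fun n _ => mul_nonneg (by positivity) (srw_nonneg _ _ _ _))
  simpa [srwKernel, heatKernel] using this

lemma srw_exp_sum {m : ℕ} (hm : 0 < m) (n : ℕ) (θ : ℝ) (i : Fin m) (x : Fin m → ℤ) :
    ∑' y : Fin m → ℤ, ENNReal.ofReal (srwKernel m n x y * Real.exp (θ * (y i - x i)))
      ≤ ENNReal.ofReal (Real.cosh θ ^ n) := by
  induction n generalizing x with
  | zero =>
    rw [tsum_eq_single x]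
    · simp [srwKernel]
    · intro y hy; simp [srwKernel, hy.symm]
  | succ n ih =>
    have hm' : (0 : ℝ) < 2 * m := by positivity
    have e : ∀ y : Fin m → ℤ, ENNReal.ofReal (srwKernel m (n + 1) x y * Real.exp (θ * (y i - x i)))
        = ∑ j, (ENNReal.ofReal (Real.exp (θ * ((Function.update x j (x j + 1)) i - x i)) / (2 * m)) *
            ENNReal.ofReal (srwKernel m n (Function.update x j (x j + 1)) y * Real.exp (θ * (y i - (Function.update x j (x j + 1)) i)))
          + ENNReal.ofReal (Real.exp (θ * ((Function.update x j (x j - 1)) i - x i)) / (2 * m)) *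
            ENNReal.ofReal (srwKernel m n (Function.update x j (x j - 1)) y * Real.exp (θ * (y i - (Function.update x j (x j - 1)) i)))) := by
      intro y
      simp only [srwKernel]
      rw [Finset.sum_div, Finset.sum_mul, ENNReal.ofReal_sum_of_nonneg]
      · refine Finset.sum_congr rfl fun j _ => ?_
        rw [← ENNReal.ofReal_mul (by positivity), ← ENNReal.ofReal_mul (by positivity), ← ENNReal.ofReal_add]
        · congr 1
          have h : ∀ a : ℝ, Real.exp (θ * (y i - x i)) = Real.exp (θ * (a - x i)) * Real.exp (θ * (y i - a)) := by
            intro a; rw [← Real.exp_add]; congr 1; ring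
          rw [add_div, add_mul]
          nth_rewrite 1 [h ((Function.update x j (x j + 1)) i)]
          rw [h ((Function.update x j (x j - 1)) i)]
          ring
        · have := srw_nonneg m n (Function.update x j (x j + 1)) y; positivity
        · have := srw_nonneg m n (Function.update x j (x j - 1)) y; positivity
      · intro j _
        have := srw_nonneg m n (Function.update x j (x j + 1)) y
        have := srw_nonneg m n (Function.update x j (x j - 1)) y
        positivity
    simp_rw [e]
    rw [Summable.tsum_finsetSum (fun _ _ => ENNReal.summable)]
    have hc : (1 : ℝ) ≤ Real.cosh θ := Real.one_le_cosh θ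
    calc _ ≤ ∑ j : Fin m, ENNReal.ofReal (2 * Real.cosh θ / (2 * m) * Real.cosh θ ^ n) := by
          refine Finset.sum_le_sum fun j _ => ?_
          rw [ENNReal.tsum_add, ENNReal.tsum_mul_left, ENNReal.tsum_mul_left]
          refine (add_le_add (mul_le_mul_right (ih _) _) (mul_le_mul_right (ih _) _)).trans ?_
          rw [← add_mul, ← ENNReal.ofReal_add (by positivity) (by positivity), ← ENNReal.ofReal_mul (by positivity)]
          refine ENNReal.ofReal_le_ofReal ?_
          refine mul_le_mul_of_nonneg_right ?_ (by positivity)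
          rw [← add_div]
          refine div_le_div_of_nonneg_right ?_ hm'.le
          by_cases h : i = j
          · subst h
            simp only [Function.update_self]
            push_cast
            rw [Real.cosh_eq]
            ring_nf; rfl
          · simp only [Function.update_of_ne h]; simp; linarith
      _ = ENNReal.ofReal (Real.cosh θ ^ (n + 1)) := by
          rw [Finset.sum_const, Finset.card_univ, Fintype.card_fin, nsmul_eq_mul, ← ENNReal.ofReal_natCast,
            ← ENNReal.ofReal_mul (by positivity)]
          congr 1; field_simp; ring

lemma heat_exp_sum {m : ℕ} (hm : 0 < m) {t : ℝ} (ht : 0 ≤ t) (θ : ℝ) (i : Fin m) (x : Fin m → ℤ) :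
    ∑' y : Fin m → ℤ, ENNReal.ofReal (heatKernel m t x y * Real.exp (θ * (y i - x i)))
      ≤ ENNReal.ofReal (Real.exp (2 * m * t * (Real.cosh θ - 1))) := by
  set c : ℕ → ℝ := fun n => Real.exp (-(2 * m) * t) * ((2 * m) * t) ^ n / n.factorial with hc
  have hcn : ∀ n, 0 ≤ c n := fun n => by simp only [hc]; positivity
  have e : ∀ y : Fin m → ℤ, ENNReal.ofReal (heatKernel m t x y * Real.exp (θ * (y i - x i)))
      = ∑' n, ENNReal.ofReal (c n) * ENNReal.ofReal (srwKernel m n x y * Real.exp (θ * (y i - x i))) := by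
    intro y
    rw [heatKernel, ← tsum_mul_right, ENNReal.ofReal_tsum_of_nonneg]
    · congr 1; ext n; rw [← ENNReal.ofReal_mul (hcn n), mul_assoc]
    · intro n; exact mul_nonneg (mul_nonneg (hcn n) (srw_nonneg _ _ _ _)) (Real.exp_pos _).le
    · exact (heat_summable m ht x y).mul_right _
  simp_rw [e]
  rw [ENNReal.tsum_comm]
  simp_rw [ENNReal.tsum_mul_left]
  have hs : HasSum (fun n => c n * Real.cosh θ ^ n) (Real.exp (2 * m * t * (Real.cosh θ - 1))) := by
    have := (poisson_hasSum ((2 * m) * t * Real.cosh θ)).mul_left (Real.exp (-(2 * m) * t))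
    rw [← Real.exp_add] at this
    have e1 : -(2 * (m : ℝ)) * t + 2 * m * t * Real.cosh θ = 2 * m * t * (Real.cosh θ - 1) := by ring
    rw [e1] at this
    have e2 : (fun n => c n * Real.cosh θ ^ n) = fun i : ℕ =>
        Real.exp (-(2 * m) * t) * ((2 * m * t * Real.cosh θ) ^ i / i.factorial) := by
      ext n; simp only [hc]; rw [mul_pow _ (Real.cosh θ)]; ring
    rw [e2]; exact this
  have hcosh : 0 < Real.cosh θ := Real.cosh_pos θ
  rw [← hs.tsum_eq, ENNReal.ofReal_tsum_of_nonneg (fun n => mul_nonneg (hcn n) (by positivity)) hs.summable]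
  refine ENNReal.tsum_le_tsum fun n => ?_
  rw [ENNReal.ofReal_mul (hcn n)]
  exact mul_le_mul_right (srw_exp_sum hm n θ i x) _

lemma cosh_sub_one_le {θ : ℝ} (h : |θ| ≤ 1) : Real.cosh θ - 1 ≤ θ ^ 2 := by
  have h1 := Real.cosh_le_exp_half_sq θ
  have h2 : θ ^ 2 ≤ 1 := (sq_le_one_iff_abs_le_one _).mpr h
  have h3 := Real.abs_exp_sub_one_le (x := θ ^ 2 / 2) (by rw [abs_of_nonneg (by positivity)]; linarith)
  rw [abs_of_nonneg (by positivity : 0 ≤ θ ^ 2 / 2)] at h3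
  have := le_abs_self (Real.exp (θ ^ 2 / 2) - 1)
  linarith

/-- exponential moment at diffusive scale -/
lemma heat_exp_sum' {m : ℕ} (hm : 0 < m) {t T : ℝ} (ht : 0 ≤ t) (hT : 1 ≤ T) (htT : t ≤ T) {θ : ℝ}
    (hθ : |θ| = T ^ (-(1/2) : ℝ)) (i : Fin m) (x : Fin m → ℤ) :
    ∑' y : Fin m → ℤ, ENNReal.ofReal (heatKernel m t x y * Real.exp (θ * (y i - x i)))
      ≤ ENNReal.ofReal (Real.exp (2 * m)) := by
  refine (heat_exp_sum hm ht θ i x).trans (ENNReal.ofReal_le_ofReal (Real.exp_le_exp.mpr ?_))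
  have h1 : |θ| ≤ 1 := by rw [hθ]; exact Real.rpow_le_one_of_one_le_of_nonpos hT (by norm_num)
  have h2 := cosh_sub_one_le h1
  have hT0 : 0 < T := by linarith
  have hsq : θ ^ 2 * T = 1 := by
    rw [← sq_abs, hθ, ← Real.rpow_natCast, ← Real.rpow_mul hT0.le]; norm_num
    rw [Real.rpow_neg_one]; field_simp
  have h3 : 0 ≤ Real.cosh θ - 1 := by linarith [Real.one_le_cosh θ]
  have h4 : t * (Real.cosh θ - 1) ≤ 1 := by
    calc t * (Real.cosh θ - 1) ≤ T * θ ^ 2 := by gcongr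
      _ = 1 := by linarith
  have : 0 ≤ (2 * m : ℝ) := by positivity
  nlinarith

lemma heat_le_exp {m : ℕ} (hm : 0 < m) {t T : ℝ} (ht : 0 ≤ t) (hT : 1 ≤ T) (htT : t ≤ T)
    (i : Fin m) (x y : Fin m → ℤ) :
    heatKernel m t x y ≤ Real.exp (2 * m) * Real.exp (-(T ^ (-(1/2) : ℝ) * |((y i - x i : ℤ) : ℝ)|)) := by
  have hp := heat_nonneg m ht x y
  have hT0 : 0 < T := by linarith
  set q := T ^ (-(1/2) : ℝ)
  have hq : 0 < q := by positivity
  obtain ⟨θ, hθ, hθ2⟩ : ∃ θ : ℝ, |θ| = q ∧ θ * (y i - x i) = q * |((y i - x i : ℤ) : ℝ)| := by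
    push_cast
    rcases le_total 0 ((y i : ℝ) - x i) with h | h
    · exact ⟨q, abs_of_pos hq, by rw [abs_of_nonneg h]⟩
    · exact ⟨-q, by rw [abs_neg, abs_of_pos hq], by rw [abs_of_nonpos h]; ring⟩
  have h := (ENNReal.le_tsum y).trans (heat_exp_sum' hm ht hT htT hθ i x)
  rw [ENNReal.ofReal_le_ofReal_iff (Real.exp_pos _).le, hθ2] at h
  rw [Real.exp_neg, ← div_eq_mul_inv, le_div_iff₀ (Real.exp_pos _)]
  exact h

end RWRS

namespace RWRS

open scoped ENNReal

noncomputable def pk (m : ℕ) (u : ℝ) (x y : Fin m → ℤ) : ℝ≥0∞ := ENNReal.ofReal (heatKernel m u x y)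
noncomputable def pkf (m : ℕ) (u : ℝ) (f : (Fin m → ℤ) → ℝ≥0∞) (x : Fin m → ℤ) : ℝ≥0∞ :=
  ∑' y, pk m u x y * f y

section walk
variable {m : ℕ} {Ω : Type*} [MeasurableSpace Ω] {P : (Fin m → ℤ) → Measure Ω} {S : ℝ → Ω → (Fin m → ℤ)}

lemma meas_S (hS : IsCTSRW m P S) (u : ℝ) : Measurable (S u) :=
  hS.meas.comp (measurable_const.prodMk measurable_id)

lemma lint_count {α : Type*} [Countable α] [MeasurableSpace α] [MeasurableSingletonClass α] (μ : Measure Ω) {X : Ω → α}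
    (hX : Measurable X) (H : α → ℝ≥0∞) : ∫⁻ ω, H (X ω) ∂μ = ∑' a, H a * μ {ω | X ω = a} := by
  rw [← lintegral_map (f := H) (measurable_of_countable H) hX, lintegral_countable']
  congr 1; ext a
  rw [Measure.map_apply hX (measurableSet_singleton a)]; rfl

lemma prob_at (hS : IsCTSRW m P S) (x y : Fin m → ℤ) {u : ℝ} (hu : 0 ≤ u) :
    P x {ω | S u ω = y} = pk m u x y := by
  have := hS.prob x
  have h := hS.fdd x 0 (fun _ => u) hu (fun i => i.elim0) (fun _ => y)
  simp only [Finset.univ_eq_empty, Finset.prod_empty, mul_one, forall_const] at h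
  rw [pk, ← h, ENNReal.ofReal_toReal (measure_ne_top _ _)]

lemma lint_at (hS : IsCTSRW m P S) (x : Fin m → ℤ) {u : ℝ} (hu : 0 ≤ u) (f : (Fin m → ℤ) → ℝ≥0∞) :
    ∫⁻ ω, f (S u ω) ∂P x = pkf m u f x := by
  rw [lint_count (P x) (meas_S hS u) f]
  simp_rw [prob_at hS x _ hu, pkf, mul_comm]

lemma pkf_one (hS : IsCTSRW m P S) (x : Fin m → ℤ) {u : ℝ} (hu : 0 ≤ u) : pkf m u (fun _ => 1) x = 1 := by
  have := hS.prob x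
  rw [← lint_at hS x hu]; simp

lemma fdd_snoc (hS : IsCTSRW m P S) (x : Fin m → ℤ) (n : ℕ) (t : Fin (n + 1) → ℝ) (h0 : 0 ≤ t 0)
    (ht : ∀ i : Fin n, t i.castSucc ≤ t i.succ) {T : ℝ} (hT : t (Fin.last n) ≤ T)
    (v : Fin (n + 1) → (Fin m → ℤ)) (y : Fin m → ℤ) :
    P x {ω | (fun i => S (t i) ω) = v ∧ S T ω = y}
      = P x {ω | (fun i => S (t i) ω) = v} * pk m (T - t (Fin.last n)) (v (Fin.last n)) y := by
  have := hS.prob x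
  have h1 := hS.fdd x n t h0 ht v
  have h2 := hS.fdd x (n + 1) (Fin.snoc t T) (by
      have : (0 : Fin (n + 1 + 1)) = Fin.castSucc 0 := rfl
      rw [this, Fin.snoc_castSucc]; exact h0) (by
      intro i
      refine Fin.lastCases ?_ (fun j => ?_) i
      · rw [Fin.succ_last, Fin.snoc_last, Fin.snoc_castSucc]; exact hT
      · rw [Fin.succ_castSucc, Fin.snoc_castSucc, Fin.snoc_castSucc]; exact ht j) (Fin.snoc v y)
  have e1 : {ω | (fun i => S (t i) ω) = v} = {ω | ∀ i, S (t i) ω = v i} := by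
    ext ω; simp [funext_iff]
  have e2 : {ω | (fun i => S (t i) ω) = v ∧ S T ω = y}
      = {ω | ∀ i : Fin (n + 1 + 1), S ((Fin.snoc t T : Fin (n + 1 + 1) → ℝ) i) ω = (Fin.snoc v y : Fin (n + 1 + 1) → (Fin m → ℤ)) i} := by
    ext ω
    simp only [Set.mem_ofPred_eq]
    constructor
    · rintro ⟨a, b⟩ i
      refine Fin.lastCases ?_ (fun j => ?_) i
      · rw [Fin.snoc_last, Fin.snoc_last]; exact b
      · rw [Fin.snoc_castSucc, Fin.snoc_castSucc]; exact congrFun a j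
    · intro h
      refine ⟨funext fun j => ?_, ?_⟩
      · have := h j.castSucc; rwa [Fin.snoc_castSucc, Fin.snoc_castSucc] at this
      · have := h (Fin.last _); rwa [Fin.snoc_last, Fin.snoc_last] at this
  rw [Fin.prod_univ_castSucc] at h2
  have e3 : (Fin.snoc t T : Fin (n + 1 + 1) → ℝ) 0 = t 0 := by
    have : (0 : Fin (n + 1 + 1)) = Fin.castSucc 0 := rfl
    rw [this, Fin.snoc_castSucc]
  have e4 : (Fin.snoc v y : Fin (n + 1 + 1) → (Fin m → ℤ)) 0 = v 0 := by
    have : (0 : Fin (n + 1 + 1)) = Fin.castSucc 0 := rfl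
    rw [this, Fin.snoc_castSucc]
  simp only [Fin.succ_castSucc, Fin.succ_last, Fin.snoc_castSucc, Fin.snoc_last, e3, e4] at h2
  rw [← mul_assoc, ← h1] at h2
  rw [e1, e2, pk, ← ENNReal.ofReal_toReal (measure_ne_top (P x) {ω | ∀ i, S (t i) ω = v i}),
    ← ENNReal.ofReal_mul ENNReal.toReal_nonneg, ← h2, ENNReal.ofReal_toReal (measure_ne_top _ _)]

lemma markov (hS : IsCTSRW m P S) (x : Fin m → ℤ) (n : ℕ) (t : Fin (n + 1) → ℝ) (h0 : 0 ≤ t 0)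
    (ht : ∀ i : Fin n, t i.castSucc ≤ t i.succ) {T : ℝ} (hT : t (Fin.last n) ≤ T)
    (F : (Fin (n + 1) → (Fin m → ℤ)) → ℝ≥0∞) (f : (Fin m → ℤ) → ℝ≥0∞) :
    ∫⁻ ω, F (fun i => S (t i) ω) * f (S T ω) ∂P x
      = ∫⁻ ω, F (fun i => S (t i) ω) * pkf m (T - t (Fin.last n)) f (S (t (Fin.last n)) ω) ∂P x := by
  have hm1 : Measurable (fun ω => (fun i => S (t i) ω)) := measurable_pi_lambda _ fun i => meas_S hS _
  have hm2 : Measurable (fun ω => ((fun i => S (t i) ω), S T ω)) := hm1.prodMk (meas_S hS T)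
  rw [lint_count (P x) hm2 (fun a => F a.1 * f a.2),
    lint_count (P x) hm1 (fun v => F v * pkf m (T - t (Fin.last n)) f (v (Fin.last n))), ENNReal.tsum_prod']
  congr 1; ext v
  simp_rw [Prod.mk.injEq, fdd_snoc hS x n t h0 ht hT]
  rw [pkf, ← ENNReal.tsum_mul_left, ← ENNReal.tsum_mul_right]
  congr 1; ext y; ring

lemma markov1 (hS : IsCTSRW m P S) (x : Fin m → ℤ) {u T : ℝ} (hu : 0 ≤ u) (hT : u ≤ T)
    (F f : (Fin m → ℤ) → ℝ≥0∞) :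
    ∫⁻ ω, F (S u ω) * f (S T ω) ∂P x = ∫⁻ ω, F (S u ω) * pkf m (T - u) f (S u ω) ∂P x :=
  markov hS x 0 (fun _ => u) hu (fun i => i.elim0) hT (fun v => F (v 0)) f

lemma pkf_add (hS : IsCTSRW m P S) (x : Fin m → ℤ) {u v : ℝ} (hu : 0 ≤ u) (hv : 0 ≤ v)
    (f : (Fin m → ℤ) → ℝ≥0∞) : pkf m u (pkf m v f) x = pkf m (u + v) f x := by
  have := markov1 hS x hu (by linarith : u ≤ u + v) (fun _ => 1) f
  simp only [one_mul, add_sub_cancel_left] at this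
  rw [← lint_at hS x hu, ← this, lint_at hS x (by linarith)]

/-- hitting estimate on a finite grid inside an interval of length at most one -/
lemma hit_grid (hS : IsCTSRW m P S) (x : Fin m → ℤ) (N : ℕ) (t : ℕ → ℝ) (h0 : 0 ≤ t 0)
    (ht : Monotone t) {T : ℝ} (hT : t N ≤ T) (hT1 : T ≤ t 0 + 1) (H : Set (Fin m → ℤ)) :
    P x {ω | ∃ j ≤ N, S (t j) ω ∈ H} ≤ ENNReal.ofReal (Real.exp (2 * m)) * P x {ω | S T ω ∈ H} := by
  classical
  set U : ℕ → Set Ω := fun j => {ω | S (t j) ω ∈ H} with hU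
  have hUm : ∀ j, MeasurableSet (U j) := fun j => (meas_S hS _) (DiscreteMeasurableSpace.forall_measurableSet H)
  set D : ℕ → Set Ω := fun i => disjointed U i with hD
  have hDm : ∀ i, MeasurableSet (D i) := fun i => MeasurableSet.disjointed hUm i
  have hTm : MeasurableSet {ω | S T ω ∈ H} := (meas_S hS _) (DiscreteMeasurableSpace.forall_measurableSet H)
  have key : ∀ i ≤ N, P x (D i) ≤ ENNReal.ofReal (Real.exp (2 * m)) * P x (D i ∩ {ω | S T ω ∈ H}) := by
    intro i hi
    have hmk := markov hS x i (fun j => t j) (by simpa using h0) (fun j => ht (by simp)) (T := T)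
      (by simpa using (ht hi).trans hT)
      (fun v => if v (Fin.last i) ∈ H ∧ ∀ j : Fin (i + 1), j ≠ Fin.last i → v j ∉ H then 1 else 0)
      (fun y => if y ∈ H then 1 else 0)
    have hmem : ∀ ω, ω ∈ D i ↔ (S (t (Fin.last i)) ω ∈ H ∧ ∀ j : Fin (i + 1), j ≠ Fin.last i → S (t j) ω ∉ H) := by
      intro ω
      simp only [hD, disjointed_eq_inter_compl, hU]
      simp only [Set.mem_inter_iff, Set.mem_ofPred_eq, Set.mem_iInter, Set.mem_compl_iff, Fin.val_last]
      refine and_congr_right fun _ => ⟨fun h j hj => h j ?_, fun h j hj => ?_⟩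
      · have := Fin.lt_last_iff_ne_last.mpr hj
        exact this
      · exact h ⟨j, by omega⟩ (by intro hh; rw [Fin.ext_iff] at hh; simp at hh; omega)
    have hL : ∫⁻ ω, (if S (t (Fin.last i)) ω ∈ H ∧ ∀ j : Fin (i + 1), j ≠ Fin.last i → S (t j) ω ∉ H then (1 : ℝ≥0∞) else 0)
        * (if S T ω ∈ H then 1 else 0) ∂P x = P x (D i ∩ {ω | S T ω ∈ H}) := by
      rw [← lintegral_indicator_one ((hDm i).inter hTm)]
      congr 1; ext ω
      simp only [← hmem]
      by_cases h1 : ω ∈ D i <;> by_cases h2 : S T ω ∈ H <;> simp [h1, h2]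
    have hR : ENNReal.ofReal (Real.exp (-(2 * m))) * P x (D i) ≤ ∫⁻ ω, (if S (t (Fin.last i)) ω ∈ H ∧ ∀ j : Fin (i + 1), j ≠ Fin.last i → S (t j) ω ∉ H then (1 : ℝ≥0∞) else 0)
        * pkf m (T - t (Fin.last i)) (fun y => if y ∈ H then 1 else 0) (S (t (Fin.last i)) ω) ∂P x := by
      rw [← lintegral_indicator_one (hDm i), ← lintegral_const_mul _ (measurable_one.indicator (hDm i))]
      refine lintegral_mono fun ω => ?_
      simp only [← hmem]
      by_cases h1 : ω ∈ D i
      · simp only [h1, Set.indicator_of_mem, if_true, one_mul, Pi.one_apply, mul_one]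
        have hin := ((hmem ω).mp h1).1
        refine le_trans ?_ (ENNReal.le_tsum (S (t (Fin.last i)) ω))
        simp only [hin, if_true, mul_one, pk]
        refine ENNReal.ofReal_le_ofReal ?_
        have hti : t i ≤ T := (ht hi).trans hT
        have ht0 : t 0 ≤ t i := ht (Nat.zero_le _)
        refine le_trans ?_ (heat_diag m (by simpa using hti) _)
        refine Real.exp_le_exp.mpr ?_
        have : (T - t (Fin.last i)) ≤ 1 := by simp; linarith
        have : 0 ≤ (2 * m : ℝ) := by positivity
        nlinarith
      · simp [h1]
    have h3 := hR.trans (hmk.symm.le.trans hL.le)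
    calc P x (D i) = ENNReal.ofReal (Real.exp (2 * m)) * (ENNReal.ofReal (Real.exp (-(2 * m))) * P x (D i)) := by
          rw [← mul_assoc, ← ENNReal.ofReal_mul (Real.exp_pos _).le, ← Real.exp_add]; simp
      _ ≤ _ := mul_le_mul_right h3 _
  have hsub : {ω | ∃ j ≤ N, S (t j) ω ∈ H} ⊆ ⋃ i ∈ Finset.range (N + 1), D i := by
    rintro ω ⟨j, hj, hω⟩
    have hex : ∃ j, ω ∈ U j := ⟨j, hω⟩
    have h1 : Nat.find hex ≤ j := Nat.find_min' hex hω
    simp only [Set.mem_iUnion]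
    refine ⟨Nat.find hex, Finset.mem_range.mpr (by omega), ?_⟩
    simp only [hD, disjointed_eq_inter_compl]
    refine ⟨Nat.find_spec hex, ?_⟩
    simp only [Set.mem_iInter, Set.mem_compl_iff]
    exact fun k hk => Nat.find_min hex hk
  calc _ ≤ P x (⋃ i ∈ Finset.range (N + 1), D i) := measure_mono hsub
    _ ≤ ∑ i ∈ Finset.range (N + 1), P x (D i) := measure_biUnion_finset_le _ _
    _ ≤ ∑ i ∈ Finset.range (N + 1), ENNReal.ofReal (Real.exp (2 * m)) * P x (D i ∩ {ω | S T ω ∈ H}) :=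
        Finset.sum_le_sum fun i hi => key i (by simp at hi; omega)
    _ = ENNReal.ofReal (Real.exp (2 * m)) * P x (⋃ i ∈ Finset.range (N + 1), (D i ∩ {ω | S T ω ∈ H})) := by
        rw [← Finset.mul_sum, measure_biUnion_finset]
        · intro i _ j _ hij
          exact ((disjoint_disjointed U) hij).mono inter_subset_left inter_subset_left
        · intro i _; exact (hDm i).inter hTm
    _ ≤ _ := by
        gcongr
        simp

end walk
end RWRS

namespace RWRS
open scoped ENNReal

section walk
variable {m : ℕ} {Ω : Type*} [MeasurableSpace Ω] {P : (Fin m → ℤ) → Measure Ω} {S : ℝ → Ω → (Fin m → ℤ)}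

lemma hit_cont (hS : IsCTSRW m P S) (x : Fin m → ℤ) (n : ℕ) (H : Set (Fin m → ℤ)) :
    P x {ω | ∃ u : ℝ, 0 ≤ u ∧ u < n ∧ S u ω ∈ H}
      ≤ ENNReal.ofReal (Real.exp (2 * m)) * ∑ k ∈ Finset.range n, P x {ω | S ((k : ℝ) + 1) ω ∈ H} := by
  set E : ℕ → Set Ω := fun M => {ω | ∃ k : ℕ, k < n ∧ ∃ j : ℕ, j ≤ 2 ^ M ∧ S ((k : ℝ) + (j : ℝ) / 2 ^ M) ω ∈ H} with hE
  have hmono : Monotone E := by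
    refine monotone_nat_of_le_succ fun M => ?_
    rintro ω ⟨k, hk, j, hj, h⟩
    refine ⟨k, hk, 2 * j, by rw [pow_succ]; omega, ?_⟩
    have : ((2 * j : ℕ) : ℝ) / 2 ^ (M + 1) = (j : ℝ) / 2 ^ M := by
      push_cast; rw [pow_succ]; field_simp
    rw [this]; exact h
  have hle : ∀ M, P x (E M) ≤ ENNReal.ofReal (Real.exp (2 * m)) * ∑ k ∈ Finset.range n, P x {ω | S ((k : ℝ) + 1) ω ∈ H} := by
    intro M
    have hsub : E M ⊆ ⋃ k ∈ Finset.range n, {ω | ∃ j : ℕ, j ≤ 2 ^ M ∧ S ((k : ℝ) + (j : ℝ) / 2 ^ M) ω ∈ H} := by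
      rintro ω ⟨k, hk, j, hj, h⟩
      exact Set.mem_biUnion (Finset.mem_coe.mpr (Finset.mem_range.mpr hk)) ⟨j, hj, h⟩
    refine (measure_mono hsub).trans ((measure_biUnion_finset_le _ _).trans ?_)
    rw [Finset.mul_sum]
    refine Finset.sum_le_sum fun k _ => ?_
    refine hit_grid hS x (2 ^ M) (fun j => (k : ℝ) + (j : ℝ) / 2 ^ M) (by simp) ?_ ?_ ?_ H
    · intro a b hab
      have : (a : ℝ) ≤ b := by exact_mod_cast hab
      simp only; gcongr
    · simp
    · simp
  have hsub : ∀ᵐ ω ∂P x, (∃ u : ℝ, 0 ≤ u ∧ u < n ∧ S u ω ∈ H) → ω ∈ ⋃ M, E M := by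
    filter_upwards [hS.rightCont x] with ω hω
    rintro ⟨u, hu0, hun, hu⟩
    obtain ⟨ε, hε, hc⟩ := hω u hu0
    set k := ⌊u⌋₊ with hk
    have hk1 : (k : ℝ) ≤ u := Nat.floor_le hu0
    have hk2 : u < k + 1 := Nat.lt_floor_add_one u
    obtain ⟨M, hM⟩ := exists_pow_lt_of_lt_one (y := (1/2 : ℝ)) (lt_min hε (by linarith : 0 < (k : ℝ) + 1 - u)) (by norm_num)
    have hM1 := lt_of_lt_of_le hM (min_le_left _ _)
    have hM2 := lt_of_lt_of_le hM (min_le_right _ _)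
    rw [one_div, inv_pow] at hM1 hM2
    have h2 : (0 : ℝ) < 2 ^ M := by positivity
    set j := ⌈(u - k) * 2 ^ M⌉₊ with hj
    have hj1 : (u - k) * 2 ^ M ≤ j := Nat.le_ceil _
    have hj2 : (j : ℝ) < (u - k) * 2 ^ M + 1 := Nat.ceil_lt_add_one (mul_nonneg (by linarith) h2.le)
    have h3 : u - k ≤ (j : ℝ) / 2 ^ M := by rw [le_div_iff₀ h2]; exact hj1
    have h4 : (j : ℝ) / 2 ^ M < u - k + (2 ^ M)⁻¹ := by
      rw [div_lt_iff₀ h2, add_mul, inv_mul_cancel₀ h2.ne']; exact hj2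
    refine Set.mem_iUnion.mpr ⟨M, k, ?_, j, ?_, ?_⟩
    · exact_mod_cast lt_of_le_of_lt hk1 hun
    · have : (j : ℝ) / 2 ^ M ≤ 1 := by linarith
      rw [div_le_one h2] at this
      exact_mod_cast this
    · rw [hc _ (by linarith) (by linarith)]; exact hu
  calc _ ≤ P x (⋃ M, E M) := measure_mono_ae hsub
    _ = ⨆ M, P x (E M) := hmono.measure_iUnion
    _ ≤ _ := iSup_le hle

lemma pkf_zero (hS : IsCTSRW m P S) (x : Fin m → ℤ) (f : (Fin m → ℤ) → ℝ≥0∞) : pkf m 0 f x = f x := by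
  have := hS.prob x
  rw [← lint_at hS x le_rfl]
  rw [lintegral_congr_ae (g := fun _ => f x)]
  · simp
  · filter_upwards [hS.start x] with ω hω
    rw [hω]

lemma pkf_le (hS : IsCTSRW m P S) (x : Fin m → ℤ) {u : ℝ} (hu : 0 ≤ u) {f : (Fin m → ℤ) → ℝ≥0∞} {M : ℝ≥0∞}
    (hf : ∀ y, f y ≤ M) : pkf m u f x ≤ M := by
  have := hS.prob x
  rw [← lint_at hS x hu]
  refine (lintegral_mono fun ω => hf _).trans ?_
  simp

lemma pkf_lin (hS : IsCTSRW m P S) (x : Fin m → ℤ) {u : ℝ} (hu : 0 ≤ u) (c : ℝ≥0∞) (s : Finset ℕ)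
    (f : ℕ → (Fin m → ℤ) → ℝ≥0∞) :
    pkf m u (fun y => 1 + c * ∑ j ∈ s, f j y) x = 1 + c * ∑ j ∈ s, pkf m u (f j) x := by
  have := hS.prob x
  have hm : ∀ g : (Fin m → ℤ) → ℝ≥0∞, Measurable (fun ω => g (S u ω)) := fun g =>
    (measurable_of_countable g).comp (meas_S hS u)
  rw [← lint_at hS x hu, lintegral_add_left measurable_const, lintegral_const_mul, lintegral_finsetSum]
  · simp_rw [lint_at hS x hu]; simp
  · intro j _; exact hm _
  · exact hm (fun y => ∑ j ∈ s, f j y)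

lemma exp_rec (hS : IsCTSRW m P S) (x : Fin m → ℤ) (V : (Fin m → ℤ) → ℝ≥0∞) (c M : ℝ≥0∞) (n : ℕ)
    (hVM : ∀ y, V y ≤ M)
    (hV : ∀ y, V y ≠ 0 → 2 * c * ∑ j ∈ Finset.range n, pkf m ((j : ℝ) + 1) V y ≤ 1) {s : ℝ} (hs : 0 ≤ s) :
    ∫⁻ ω, ∏ j ∈ Finset.range n, (1 + c * V (S (s + j) ω)) ∂P x ≤ 1 + 2 * c * (n * M) := by
  set φ : ℕ → (Fin m → ℤ) → ℝ≥0∞ := fun i y => 1 + 2 * c * ∑ j ∈ Finset.range i, pkf m (j : ℝ) V y with hφ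
  have hstep : ∀ i < n, ∀ y, (1 + c * V y) * pkf m 1 (φ i) y ≤ φ (i + 1) y := by
    intro i hi y
    have e1 : pkf m 1 (φ i) y = 1 + 2 * c * ∑ j ∈ Finset.range i, pkf m ((j : ℝ) + 1) V y := by
      simp only [hφ]
      rw [pkf_lin hS y zero_le_one]
      congr 2
      refine Finset.sum_congr rfl fun j _ => ?_
      rw [pkf_add hS y zero_le_one (Nat.cast_nonneg j), add_comm]
    have e2 : φ (i + 1) y = 1 + 2 * c * (∑ j ∈ Finset.range i, pkf m ((j : ℝ) + 1) V y + V y) := by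
      simp only [hφ]
      rw [Finset.sum_range_succ']
      simp [pkf_zero hS]
    rw [e1, e2]
    by_cases h0 : V y = 0
    · simp [h0]
    · set B := ∑ j ∈ Finset.range i, pkf m ((j : ℝ) + 1) V y with hB
      have hB1 : 2 * c * B ≤ 1 := by
        refine le_trans ?_ (hV y h0)
        gcongr
        exact Finset.sum_le_sum_of_subset (Finset.range_subset_range.mpr hi.le)
      calc (1 + c * V y) * (1 + 2 * c * B) = 1 + 2 * c * B + c * V y * (1 + 2 * c * B) := by ring
        _ ≤ 1 + 2 * c * B + c * V y * (1 + 1) := by gcongr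
        _ = _ := by ring
  have hind : ∀ l i, l + i ≤ n → ∫⁻ ω, (∏ j ∈ Finset.range l, (1 + c * V (S (s + j) ω))) * φ i (S (s + l) ω) ∂P x
      ≤ ∫⁻ ω, φ (i + l) (S s ω) ∂P x := by
    intro l
    induction l with
    | zero => intro i _; simp
    | succ l ih =>
      intro i hi
      have hmk := markov hS x l (fun j => s + j) (by simpa using hs) (fun j => by simp) (T := s + (l + 1 : ℕ))
        (by simp) (fun v => ∏ j, (1 + c * V (v j))) (φ i)
      have e : s + ((l + 1 : ℕ) : ℝ) - (s + ((Fin.last l : Fin (l + 1)) : ℕ)) = 1 := by simp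
      rw [e] at hmk
      have e3 : ∀ ω, ∏ j : Fin (l + 1), (1 + c * V (S (s + (j : ℕ)) ω)) = ∏ j ∈ Finset.range (l + 1), (1 + c * V (S (s + j) ω)) := by
        intro ω; rw [Finset.prod_range]
      simp only [e3] at hmk
      rw [hmk]
      calc _ ≤ ∫⁻ ω, (∏ j ∈ Finset.range l, (1 + c * V (S (s + j) ω))) * φ (i + 1) (S (s + l) ω) ∂P x := by
            refine lintegral_mono fun ω => ?_
            simp only [Finset.prod_range_succ, mul_assoc, Fin.val_last]
            gcongr
            exact hstep i (by omega) _
        _ ≤ _ := by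
            have := ih (i + 1) (by omega)
            have e4 : i + 1 + l = i + (l + 1) := by ring
            rwa [e4] at this
  have h1 := hind n 0 (by omega)
  have h2 : ∀ y, φ n y ≤ 1 + 2 * c * (n * M) := by
    intro y
    simp only [hφ]
    gcongr
    refine (Finset.sum_le_sum fun j _ => pkf_le hS y (Nat.cast_nonneg j) hVM).trans ?_
    simp
  have := hS.prob x
  calc _ ≤ ∫⁻ ω, φ (0 + n) (S s ω) ∂P x := by
        refine le_trans (lintegral_mono fun ω => ?_) h1
        simp [hφ]
    _ ≤ ∫⁻ ω, (1 + 2 * c * (n * M)) ∂P x := lintegral_mono fun ω => by rw [zero_add]; exact h2 _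
    _ = _ := by simp

end walk
end RWRS

namespace RWRS
open scoped ENNReal

/-- Box of radius `R` in sup norm. -/
noncomputable def box {d : ℕ} (x : Fin d → ℤ) (R : ℕ) : Finset (Fin d → ℤ) :=
  Finset.Icc (x - fun _ => (R : ℤ)) (x + fun _ => (R : ℤ))

lemma mem_box {d : ℕ} {x y : Fin d → ℤ} {R : ℕ} : y ∈ box x R ↔ ∀ i, |y i - x i| ≤ (R : ℤ) := by
  simp only [box, Finset.mem_Icc, Pi.le_def, Pi.sub_apply, Pi.add_apply]
  constructor
  · rintro ⟨h1, h2⟩ i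
    rw [abs_le]; constructor
    · linarith [h1 i]
    · linarith [h2 i]
  · intro h
    constructor <;> intro i <;> have := abs_le.mp (h i) <;> linarith [this.1, this.2]

lemma card_box {d : ℕ} (x : Fin d → ℤ) (R : ℕ) : (box x R).card = (2 * R + 1) ^ d := by
  rw [box, Pi.card_Icc]
  simp only [Pi.sub_apply, Pi.add_apply, Int.card_Icc]
  have : ∀ i : Fin d, (x i + (R : ℤ) + 1 - (x i - R)).toNat = 2 * R + 1 := by intro i; omega
  simp [this]

lemma box_mono {d : ℕ} {x : Fin d → ℤ} {R R' : ℕ} (h : R ≤ R') : box x R ⊆ box x R' := by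
  intro y hy
  rw [mem_box] at *
  intro i; exact (hy i).trans (by exact_mod_cast h)

lemma rpow_half_pow_le {d : ℕ} (hd : 3 ≤ d) {t : ℝ} (ht : 1 ≤ t) :
    (t ^ (-(1/2):ℝ)) ^ d ≤ t ^ (-(3/2):ℝ) := by
  have h1 : t ^ (-(1/2):ℝ) ≤ 1 := Real.rpow_le_one_of_one_le_of_nonpos ht (by norm_num)
  have h0 : 0 ≤ t ^ (-(1/2):ℝ) := by positivity
  calc _ ≤ (t ^ (-(1/2):ℝ)) ^ 3 := pow_le_pow_of_le_one h0 h1 hd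
    _ = _ := by rw [← Real.rpow_natCast, ← Real.rpow_mul (by linarith)]; norm_num

/-- the Green function constant -/
noncomputable def Gc (d : ℕ) : ℝ := (∑' k : ℕ, ((k : ℝ) + 1) ^ (-(3/2):ℝ)) + 2 ^ d + Real.exp (2 * d)

lemma summ32 : Summable fun k : ℕ => ((k : ℝ) + 1) ^ (-(3/2):ℝ) := by
  have := (summable_nat_add_iff 1).mpr (Real.summable_nat_rpow.mpr (by norm_num : (-(3/2):ℝ) < -1))
  simpa using this

lemma Gc_pos (d : ℕ) : 0 < Gc d := by
  have : 0 ≤ ∑' k : ℕ, ((k : ℝ) + 1) ^ (-(3/2):ℝ) := tsum_nonneg fun k => by positivity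
  unfold Gc; positivity

lemma green_bound {d : ℕ} (hd : 3 ≤ d) (n : ℕ) {l : ℝ} (hl : 1 ≤ l) (F : Finset (Fin d → ℤ)) {a b : ℝ}
    (ha : 0 ≤ a) (hb : 0 ≤ b) (x : Fin d → ℤ)
    (hF : ∀ R : ℕ, 1 ≤ R → (R : ℝ) ≤ 2 * √n * l → ((F.filter (· ∈ box x R)).card : ℝ) ≤ a + b * (R : ℝ) ^ d) :
    ∑ k ∈ Finset.range n, ∑ y ∈ F, heatKernel d ((k : ℝ) + 1) x y
      ≤ Gc d * (a + b * (n * l ^ d) + n * F.card * Real.exp (-l)) := by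
  have hk : ∀ k ∈ Finset.range n, ∑ y ∈ F, heatKernel d ((k : ℝ) + 1) x y
      ≤ ((k : ℝ) + 1) ^ (-(3/2):ℝ) * a + 2 ^ d * (b * l ^ d) + F.card * (Real.exp (2 * d) * Real.exp (-l)) := by
    intro k hk
    set t : ℝ := (k : ℝ) + 1 with ht
    have ht1 : 1 ≤ t := by simp [ht]
    have ht0 : 0 < t := by linarith
    have hsq1 : 1 ≤ √t := by rw [Real.one_le_sqrt]; exact ht1
    have htn : √t ≤ √n := by
      apply Real.sqrt_le_sqrt
      have := Finset.mem_range.mp hk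
      simp only [ht]; exact_mod_cast this
    set R := ⌈√t * l⌉₊ with hR
    have h1 : 1 ≤ √t * l := by nlinarith
    have hR1 : √t * l ≤ R := Nat.le_ceil _
    have hR2 : (R : ℝ) ≤ 2 * √t * l := by
      have := Nat.ceil_lt_add_one (by linarith : 0 ≤ √t * l)
      simp only [hR]; linarith
    have hsplit := (Finset.sum_filter_add_sum_filter_not F (· ∈ box x R) (fun y => heatKernel d t x y)).symm
    rw [hsplit]
    have hc := hF R (by exact_mod_cast h1.trans hR1) (hR2.trans (by gcongr))
    have hinv : t ^ (-(1/2):ℝ) * √t = 1 := by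
      rw [Real.sqrt_eq_rpow, ← Real.rpow_add ht0]; norm_num
    have hp0 : 0 ≤ t ^ (-(1/2):ℝ) := by positivity
    have A1 : ∑ y ∈ F.filter (· ∈ box x R), heatKernel d t x y ≤ t ^ (-(3/2):ℝ) * a + 2 ^ d * (b * l ^ d) := by
      calc _ ≤ ∑ y ∈ F.filter (· ∈ box x R), (t ^ (-(1/2):ℝ)) ^ d := Finset.sum_le_sum fun y _ => heat_le d ht0 x y
        _ = ((F.filter (· ∈ box x R)).card : ℝ) * (t ^ (-(1/2):ℝ)) ^ d := by simp
        _ ≤ (a + b * (R : ℝ) ^ d) * (t ^ (-(1/2):ℝ)) ^ d := by gcongr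
        _ ≤ (a + b * (2 * √t * l) ^ d) * (t ^ (-(1/2):ℝ)) ^ d := by gcongr
        _ = (t ^ (-(1/2):ℝ)) ^ d * a + b * (2 * (t ^ (-(1/2):ℝ) * √t) * l) ^ d := by
            rw [mul_pow, mul_pow, mul_pow, mul_pow, mul_pow]; ring
        _ ≤ _ := by
            rw [hinv, mul_one, mul_pow]
            have := rpow_half_pow_le hd ht1
            nlinarith [mul_le_mul_of_nonneg_right this ha]
    have A2 : ∑ y ∈ F.filter (¬ · ∈ box x R), heatKernel d t x y ≤ F.card * (Real.exp (2 * d) * Real.exp (-l)) := by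
      calc _ ≤ ∑ y ∈ F.filter (¬ · ∈ box x R), Real.exp (2 * d) * Real.exp (-l) := by
            refine Finset.sum_le_sum fun y hy => ?_
            have hy := (Finset.mem_filter.mp hy).2
            rw [mem_box] at hy
            push Not at hy
            obtain ⟨i, hi⟩ := hy
            refine (heat_le_exp (by omega) ht0.le ht1 le_rfl i x y).trans ?_
            have hi' : (R : ℝ) ≤ |((y i - x i : ℤ) : ℝ)| := by
              rw [← Int.cast_abs]; exact_mod_cast hi.le
            gcongr
            calc l = t ^ (-(1/2):ℝ) * (√t * l) := by rw [← mul_assoc, hinv, one_mul]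
              _ ≤ _ := by gcongr; linarith
        _ = ((F.filter (¬ · ∈ box x R)).card : ℝ) * (Real.exp (2 * d) * Real.exp (-l)) := by simp
        _ ≤ _ := by gcongr; exact Finset.filter_subset _ _
    linarith
  refine (Finset.sum_le_sum hk).trans ?_
  rw [Finset.sum_add_distrib, Finset.sum_add_distrib, ← Finset.sum_mul]
  simp only [Finset.sum_const, Finset.card_range, nsmul_eq_mul]
  have hs : ∑ k ∈ Finset.range n, ((k : ℝ) + 1) ^ (-(3/2):ℝ) ≤ ∑' k : ℕ, ((k : ℝ) + 1) ^ (-(3/2):ℝ) :=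
    summ32.sum_le_tsum _ fun k _ => by positivity
  have hT0 : 0 ≤ ∑' k : ℕ, ((k : ℝ) + 1) ^ (-(3/2):ℝ) := tsum_nonneg fun k => by positivity
  have e1 : (∑ k ∈ Finset.range n, ((k : ℝ) + 1) ^ (-(3/2):ℝ)) * a ≤ Gc d * a := by
    gcongr; unfold Gc; have := Real.exp_pos (2 * d); have : (0:ℝ) < 2 ^ d := by positivity
    linarith
  have e2 : (n : ℝ) * (2 ^ d * (b * l ^ d)) ≤ Gc d * (b * (n * l ^ d)) := by
    have : (2:ℝ) ^ d ≤ Gc d := by unfold Gc; have := Real.exp_pos (2 * d); linarith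
    calc _ = (2:ℝ) ^ d * (b * (n * l ^ d)) := by ring
      _ ≤ _ := by gcongr
  have e3 : (n : ℝ) * (F.card * (Real.exp (2 * d) * Real.exp (-l))) ≤ Gc d * (n * F.card * Real.exp (-l)) := by
    have : Real.exp (2 * d) ≤ Gc d := by unfold Gc; have : (0:ℝ) < 2 ^ d := by positivity
                                         linarith
    calc _ = Real.exp (2 * d) * (n * F.card * Real.exp (-l)) := by ring
      _ ≤ _ := by gcongr
  linarith

/-- indicator of a finset, `ℝ≥0∞`-valued -/
noncomputable def ind {d : ℕ} (F : Finset (Fin d → ℤ)) (y : Fin d → ℤ) : ℝ≥0∞ := by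
  classical exact if y ∈ F then 1 else 0

lemma pkf_ind {d : ℕ} {u : ℝ} (hu : 0 ≤ u) (F : Finset (Fin d → ℤ)) (x : Fin d → ℤ) :
    pkf d u (ind F) x = ENNReal.ofReal (∑ y ∈ F, heatKernel d u x y) := by
  classical
  rw [ENNReal.ofReal_sum_of_nonneg fun y _ => heat_nonneg d hu x y, pkf, tsum_eq_sum (s := F)]
  · refine Finset.sum_congr rfl fun y hy => ?_
    simp [ind, hy, pk]
  · intro y hy; simp [ind, hy]

lemma green_ind {d : ℕ} (hd : 3 ≤ d) (n : ℕ) {l : ℝ} (hl : 1 ≤ l) (F : Finset (Fin d → ℤ)) {a b : ℝ}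
    (ha : 0 ≤ a) (hb : 0 ≤ b) (x : Fin d → ℤ)
    (hF : ∀ R : ℕ, 1 ≤ R → (R : ℝ) ≤ 2 * √n * l → ((F.filter (· ∈ box x R)).card : ℝ) ≤ a + b * (R : ℝ) ^ d) :
    ∑ k ∈ Finset.range n, pkf d ((k : ℝ) + 1) (ind F) x
      ≤ ENNReal.ofReal (Gc d * (a + b * (n * l ^ d) + n * F.card * Real.exp (-l))) := by
  have h := green_bound hd n hl F ha hb x hF
  refine le_trans (le_of_eq ?_) (ENNReal.ofReal_le_ofReal h)
  rw [ENNReal.ofReal_sum_of_nonneg]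
  · exact Finset.sum_congr rfl fun k _ => pkf_ind (by positivity) F x
  · intro k _; exact Finset.sum_nonneg fun y _ => heat_nonneg d (by positivity) x y

end RWRS

namespace RWRS
open scoped ENNReal

lemma lint_shift (f : ℝ → ℝ≥0∞) (n : ℕ) :
    ∫⁻ u in Ioc (0:ℝ) n, f u = ∑ j ∈ Finset.range n, ∫⁻ s in Ioc (0:ℝ) 1, f (s + j) := by
  induction n with
  | zero => simp
  | succ n ih =>
    rw [Finset.sum_range_succ, ← ih]
    have h1 : Ioc (0:ℝ) ((n + 1 : ℕ) : ℝ) = Ioc (0:ℝ) n ∪ Ioc (n:ℝ) (n + 1) := by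
      rw [Ioc_union_Ioc_eq_Ioc (Nat.cast_nonneg n) (by linarith)]; push_cast; rfl
    rw [h1, lintegral_union measurableSet_Ioc]
    · congr 1
      have := (measurePreserving_add_right volume (n:ℝ)).setLIntegral_comp_preimage_emb
        (measurableEmbedding_addRight (n:ℝ)) f (Ioc (n:ℝ) (n + 1))
      rw [← this]
      congr 2
      ext s; simp
    · rw [Set.disjoint_left]; intro a ha hb; exact absurd ha.2 (not_le.mpr hb.1)

section walk
variable {m : ℕ} {Ω : Type*} [MeasurableSpace Ω] {P : (Fin m → ℤ) → Measure Ω} {S : ℝ → Ω → (Fin m → ℤ)}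

lemma meas_joint (hS : IsCTSRW m P S) (f : (Fin m → ℤ) → ℝ≥0∞) (j : ℝ) :
    Measurable fun p : ℝ × Ω => f (S (p.1 + j) p.2) := by
  have h1 : Measurable fun p : ℝ × Ω => (p.1 + j, p.2) := by fun_prop
  exact (measurable_of_countable f).comp (hS.meas.comp h1)

lemma meas_joint0 (hS : IsCTSRW m P S) (f : (Fin m → ℤ) → ℝ≥0∞) :
    Measurable fun p : ℝ × Ω => f (S p.1 p.2) := (measurable_of_countable f).comp hS.meas

lemma meas_A (hS : IsCTSRW m P S) (f : (Fin m → ℤ) → ℝ≥0∞) (s : Set ℝ) :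
    Measurable fun ω => ∫⁻ u in s, f (S u ω) := 
  Measurable.lintegral_prod_left' (meas_joint0 hS f)

lemma exp_half_le {x : ℝ} (h0 : 0 ≤ x) (h1 : x ≤ 1) : Real.exp (x / 2) ≤ 1 + x := by
  have := Real.abs_exp_sub_one_sub_id_le (x := x / 2) (by rw [abs_le]; constructor <;> linarith)
  have := (abs_le.mp this).2
  nlinarith

lemma low_tail (hS : IsCTSRW m P S) (x : Fin m → ℤ) (v : (Fin m → ℤ) → ℝ) {c M T : ℝ} (n : ℕ)
    (hc : 0 ≤ c) (hM : 0 ≤ M) (hT : 0 ≤ T)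
    (hv0 : ∀ y, 0 ≤ v y) (hvM : ∀ y, v y ≤ M) (hcM : c * M ≤ 1)
    (hV : ∀ y, v y ≠ 0 → 2 * ENNReal.ofReal c *
      ∑ j ∈ Finset.range n, pkf m ((j : ℝ) + 1) (fun y => ENNReal.ofReal (v y)) y ≤ 1) :
    P x {ω | ENNReal.ofReal T ≤ ∫⁻ u in Ioc (0:ℝ) n, ENNReal.ofReal (v (S u ω))}
      ≤ ENNReal.ofReal ((1 + 2 * c * (n * M)) * Real.exp (-(c * T / 2))) := by
  have := hS.prob x
  set V : (Fin m → ℤ) → ℝ≥0∞ := fun y => ENNReal.ofReal (v y) with hVd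
  have hr : ∀ s, 0 ≤ s → ∫⁻ ω, ∏ j ∈ Finset.range n, (1 + ENNReal.ofReal c * V (S (s + j) ω)) ∂P x
      ≤ ENNReal.ofReal (1 + 2 * c * (n * M)) := by
    intro s hs
    have := exp_rec hS x V (ENNReal.ofReal c) (ENNReal.ofReal M) n (fun y => ENNReal.ofReal_le_ofReal (hvM y))
      (fun y hy => hV y fun h => hy (by simp [hVd, h])) hs
    refine this.trans (le_of_eq ?_)
    rw [ENNReal.ofReal_add (by norm_num) (by positivity), ENNReal.ofReal_mul (by positivity),
      ENNReal.ofReal_mul (by positivity), ENNReal.ofReal_mul (by positivity)]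
    simp
  set g := Real.exp (c * T / 2) with hg
  have hg0 : 0 < g := Real.exp_pos _
  have hpt : ∀ s ω, ENNReal.ofReal g + ENNReal.ofReal (g * (c / 2)) * ∑ j ∈ Finset.range n, V (S (s + j) ω)
      ≤ (∏ j ∈ Finset.range n, (1 + ENNReal.ofReal c * V (S (s + j) ω))) + ENNReal.ofReal (g * (c / 2) * T) := by
    intro s ω
    have e1 : ∑ j ∈ Finset.range n, V (S (s + j) ω) = ENNReal.ofReal (∑ j ∈ Finset.range n, v (S (s + j) ω)) := by
      rw [ENNReal.ofReal_sum_of_nonneg fun j _ => hv0 _]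
    have e2 : (∏ j ∈ Finset.range n, (1 + ENNReal.ofReal c * V (S (s + j) ω)))
        = ENNReal.ofReal (∏ j ∈ Finset.range n, (1 + c * v (S (s + j) ω))) := by
      rw [ENNReal.ofReal_prod_of_nonneg fun j _ => by have := hv0 (S (s + j) ω); positivity]
      refine Finset.prod_congr rfl fun j _ => ?_
      rw [ENNReal.ofReal_add (by norm_num) (mul_nonneg hc (hv0 _)), ENNReal.ofReal_mul hc]; simp [hVd]
    have hsn : 0 ≤ ∑ j ∈ Finset.range n, v (S (s + j) ω) := Finset.sum_nonneg fun j _ => hv0 _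
    have hpn : 0 ≤ ∏ j ∈ Finset.range n, (1 + c * v (S (s + j) ω)) :=
      Finset.prod_nonneg fun j _ => by have := hv0 (S (s + j) ω); positivity
    rw [e1, e2, ← ENNReal.ofReal_mul (by positivity), ← ENNReal.ofReal_add (by positivity) (by positivity),
      ← ENNReal.ofReal_add (by positivity) (by positivity)]
    apply ENNReal.ofReal_le_ofReal
    set B := ∑ j ∈ Finset.range n, v (S (s + j) ω) with hB
    have h1 : Real.exp (c * B / 2) ≤ ∏ j ∈ Finset.range n, (1 + c * v (S (s + j) ω)) := by
      have : c * B / 2 = ∑ j ∈ Finset.range n, (c * v (S (s + j) ω)) / 2 := by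
        rw [hB, Finset.mul_sum, Finset.sum_div]
      rw [this, Real.exp_sum]
      refine Finset.prod_le_prod (fun j _ => (Real.exp_pos _).le) fun j _ => ?_
      exact exp_half_le (mul_nonneg hc (hv0 _)) (le_trans (mul_le_mul_of_nonneg_left (hvM _) hc) hcM)
    have h2 : Real.exp (c * B / 2) = g * Real.exp (c * B / 2 - c * T / 2) := by
      rw [hg, ← Real.exp_add]; ring_nf
    have h3 := Real.add_one_le_exp (c * B / 2 - c * T / 2)
    nlinarith [mul_le_mul_of_nonneg_left h3 hg0.le]
  set J : Ω → ℝ≥0∞ := fun ω => ∫⁻ s in Ioc (0:ℝ) 1, ∏ j ∈ Finset.range n, (1 + ENNReal.ofReal c * V (S (s + j) ω)) with hJ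
  have hmj : Measurable fun p : ℝ × Ω => ∏ j ∈ Finset.range n, (1 + ENNReal.ofReal c * V (S (p.1 + j) p.2)) := by
    refine Finset.measurable_prod _ fun j _ => ?_
    exact (measurable_const.add ((meas_joint hS V j).const_mul _))
  have hJint : ∫⁻ ω, J ω ∂P x ≤ ENNReal.ofReal (1 + 2 * c * (n * M)) := by
    simp only [hJ]
    rw [lintegral_lintegral_swap (f := fun ω s => ∏ j ∈ Finset.range n, (1 + ENNReal.ofReal c * V (S (s + j) ω)))
      (hmj.comp measurable_swap).aemeasurable]
    calc _ ≤ ∫⁻ s in Ioc (0:ℝ) 1, ENNReal.ofReal (1 + 2 * c * (n * M)) :=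
          setLIntegral_mono measurable_const fun s hs => hr s hs.1.le
      _ = _ := by simp
  have hJm : Measurable J := Measurable.lintegral_prod_left' hmj
  have hsub : {ω | ENNReal.ofReal T ≤ ∫⁻ u in Ioc (0:ℝ) n, V (S u ω)} ⊆ {ω | ENNReal.ofReal g ≤ J ω} := by
    intro ω hω
    have hω : ENNReal.ofReal T ≤ ∫⁻ u in Ioc (0:ℝ) n, V (S u ω) := hω
    rw [lint_shift (fun u => V (S u ω))] at hω
    have hms : ∀ j : ℕ, Measurable fun s : ℝ => V (S (s + j) ω) := fun j =>
      (meas_joint hS V j).comp (measurable_id.prodMk measurable_const)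
    have h1 := setLIntegral_mono' (μ := volume) (measurableSet_Ioc (a := (0:ℝ)) (b := 1)) fun s _ => hpt s ω
    rw [lintegral_add_left measurable_const, lintegral_add_right _ measurable_const,
      lintegral_const_mul _ (Finset.measurable_sum _ fun j _ => hms j),
      lintegral_finsetSum _ fun j _ => hms j] at h1
    simp only [lintegral_const, Measure.restrict_apply MeasurableSet.univ, univ_inter, Real.volume_Ioc, sub_zero,
      ENNReal.ofReal_one, mul_one] at h1
    have h2 : ENNReal.ofReal g + ENNReal.ofReal (g * (c / 2) * T) ≤ J ω + ENNReal.ofReal (g * (c / 2) * T) := by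
      refine le_trans ?_ h1
      rw [ENNReal.ofReal_mul (by positivity : 0 ≤ g * (c / 2))]
      gcongr
    exact (ENNReal.add_le_add_iff_right ENNReal.ofReal_ne_top).mp h2
  refine (measure_mono hsub).trans ?_
  refine (meas_ge_le_lintegral_div hJm.aemeasurable (by simpa using hg0) ENNReal.ofReal_ne_top).trans ?_
  refine (ENNReal.div_le_div_right hJint _).trans (le_of_eq ?_)
  rw [← ENNReal.ofReal_div_of_pos hg0, hg, Real.exp_neg, div_eq_mul_inv]

/-- Probability that the additive functional of a function supported in `H` is positive. -/
lemma high_tail (hS : IsCTSRW m P S) (x : Fin m → ℤ) (f : (Fin m → ℤ) → ℝ≥0∞) (n : ℕ) (H : Finset (Fin m → ℤ))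
    (hf : ∀ y, f y ≠ 0 → y ∈ H) :
    P x {ω | ∫⁻ u in Ioc (0:ℝ) n, f (S u ω) ≠ 0}
      ≤ ENNReal.ofReal (Real.exp (2 * m)) * ∑ k ∈ Finset.range n, pkf m ((k : ℝ) + 1) (ind H) x := by
  have h := hit_cont hS x n (H : Set (Fin m → ℤ))
  have e : ∀ k : ℕ, P x {ω | S ((k : ℝ) + 1) ω ∈ (H : Set (Fin m → ℤ))} = pkf m ((k : ℝ) + 1) (ind H) x := by
    intro k
    rw [← lint_at hS x (by positivity)]
    have : MeasurableSet {ω | S ((k : ℝ) + 1) ω ∈ (H : Set (Fin m → ℤ))} := 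
      (meas_S hS _) (Set.to_countable _).measurableSet
    rw [← lintegral_indicator_one this]
    refine lintegral_congr fun ω => ?_
    by_cases hh : S ((k : ℝ) + 1) ω ∈ H <;> simp [ind, hh]
  simp_rw [e] at h
  refine le_trans (measure_mono ?_) h
  intro ω hω
  by_contra hno
  apply hω
  have hno : ¬ ∃ u : ℝ, 0 ≤ u ∧ u < n ∧ S u ω ∈ H := hno
  push Not at hno
  rw [setLIntegral_congr Ioo_ae_eq_Ioc.symm]
  rw [setLIntegral_congr_fun (g := fun _ => 0) measurableSet_Ioo]
  · simp
  · intro u hu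
    by_contra h0
    exact hno u hu.1.le hu.2 (hf _ h0)

end walk
end RWRS

namespace RWRS
open scoped ENNReal

lemma growth_exp {d : ℕ} (z : (Fin d → ℤ) → ℝ) {C0 : ℝ} (hC0 : 0 ≤ C0) (Q : ℕ)
    (hz : ∀ R : ℕ, 1 ≤ R → ∀ y ∈ box 0 R, z y ≤ C0 * (R : ℝ) ^ Q) {n : ℝ} (hn : 1 ≤ n) (L : ℕ)
    (y : Fin d → ℤ) (hy : y ∉ box 0 L) :
    z y ≤ C0 * ((2 * √n) ^ Q * Q.factorial * Real.exp (-(L / √n / 2))) *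
      ∑ i, (Real.exp (n ^ (-(1/2):ℝ) * (y i)) + Real.exp (-n ^ (-(1/2):ℝ) * (y i))) := by
  have hy' := hy
  rw [mem_box] at hy'
  push Not at hy'
  obtain ⟨i0, hi0⟩ := hy'
  obtain ⟨i, -, hi⟩ := Finset.exists_max_image Finset.univ (fun i => |y i|) ⟨i0, Finset.mem_univ _⟩
  have hR : ((y i).natAbs : ℤ) = |y i| := (Int.abs_eq_natAbs _).symm
  set R := (y i).natAbs with hRd
  have hLR : L < R := by
    have h1 := hi i0 (Finset.mem_univ _)
    simp only [Pi.zero_apply, sub_zero] at hi0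
    have : (L : ℤ) < R := by rw [hR]; exact lt_of_lt_of_le hi0 h1
    exact_mod_cast this
  have hzy := hz R (by omega) y (by
    rw [mem_box]; intro j; simp only [Pi.zero_apply, sub_zero]; rw [hR]; exact hi j (Finset.mem_univ _))
  refine hzy.trans ?_
  rw [mul_assoc]
  refine mul_le_mul_of_nonneg_left ?_ hC0
  have hs : 0 < √n := Real.sqrt_pos.mpr (by linarith)
  have hθ : n ^ (-(1/2):ℝ) = (√n)⁻¹ := by rw [Real.rpow_neg (by linarith), Real.sqrt_eq_rpow]
  have hsum : Real.exp (R / √n) ≤ ∑ i, (Real.exp (n ^ (-(1/2):ℝ) * (y i)) + Real.exp (-n ^ (-(1/2):ℝ) * (y i))) := by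
    refine le_trans ?_ (Finset.single_le_sum (f := fun i => Real.exp (n ^ (-(1/2):ℝ) * (y i)) + Real.exp (-n ^ (-(1/2):ℝ) * (y i)))
      (fun j _ => by positivity) (Finset.mem_univ i))
    have hRr : (R : ℝ) = |(y i : ℝ)| := by
      rw [← Int.cast_abs, ← hR]; simp
    rw [hθ]
    rcases abs_choice (y i : ℝ) with h | h <;> rw [hRr, h]
    · have := Real.exp_pos (-(√n)⁻¹ * (y i))
      rw [div_eq_inv_mul]; linarith
    · have := Real.exp_pos ((√n)⁻¹ * (y i))
      have e : -(y i : ℝ) / √n = -(√n)⁻¹ * y i := by rw [div_eq_inv_mul]; ring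
      rw [e]; linarith
  have h1 : (R : ℝ) ^ Q ≤ (2 * √n) ^ Q * Q.factorial * Real.exp (R / √n / 2) := by
    have := Real.pow_div_factorial_le_exp (R / √n / 2) (by positivity) Q
    rw [div_le_iff₀ (by positivity)] at this
    have e : (R : ℝ) ^ Q = (2 * √n) ^ Q * (R / √n / 2) ^ Q := by
      rw [← mul_pow]; congr 1; field_simp
    rw [e, mul_assoc]; gcongr; linarith
  have h2 : Real.exp (R / √n / 2) ≤ Real.exp (-(L / √n / 2)) * Real.exp (R / √n) := by
    rw [← Real.exp_add]
    apply Real.exp_le_exp.mpr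
    have : (L : ℝ) / √n / 2 ≤ R / √n / 2 := by gcongr
    linarith
  calc _ ≤ (2 * √n) ^ Q * Q.factorial * Real.exp (R / √n / 2) := h1
    _ ≤ (2 * √n) ^ Q * Q.factorial * (Real.exp (-(L / √n / 2)) * Real.exp (R / √n)) := by gcongr
    _ ≤ (2 * √n) ^ Q * Q.factorial * (Real.exp (-(L / √n / 2)) * ∑ i, (Real.exp (n ^ (-(1/2):ℝ) * (y i)) + Real.exp (-n ^ (-(1/2):ℝ) * (y i)))) := by gcongr
    _ = _ := by ring

section walk
variable {m : ℕ} {Ω : Type*} [MeasurableSpace Ω] {P : (Fin m → ℤ) → Measure Ω} {S : ℝ → Ω → (Fin m → ℤ)}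

lemma out_mean (hS : IsCTSRW m P S) (hm : 0 < m) (f : (Fin m → ℤ) → ℝ≥0∞) {B : ℝ} (hB : 0 ≤ B) {n : ℕ} (hn : 1 ≤ n)
    (hf : ∀ y, f y ≤ ENNReal.ofReal (B * ∑ i, (Real.exp ((n:ℝ) ^ (-(1/2):ℝ) * (y i)) + Real.exp (-(n:ℝ) ^ (-(1/2):ℝ) * (y i))))) :
    ∫⁻ ω, (∫⁻ u in Ioc (0:ℝ) n, f (S u ω)) ∂P 0 ≤ ENNReal.ofReal (n * (B * (m * (2 * Real.exp (2 * m))))) := by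
  have := hS.prob 0
  have hn1 : (1:ℝ) ≤ n := by exact_mod_cast hn
  rw [lintegral_lintegral_swap (f := fun ω u => f (S u ω)) ((meas_joint0 hS f).comp measurable_swap).aemeasurable]
  have key : ∀ u ∈ Ioc (0:ℝ) n, ∫⁻ ω, f (S u ω) ∂P 0 ≤ ENNReal.ofReal (B * (m * (2 * Real.exp (2 * m)))) := by
    intro u hu
    rw [lint_at hS 0 hu.1.le, pkf]
    set θ := (n:ℝ) ^ (-(1/2):ℝ) with hθ
    have hθ0 : 0 ≤ θ := by positivity
    have hterm : ∀ y, pk m u 0 y * f y ≤ ENNReal.ofReal B * ∑ i, (ENNReal.ofReal (heatKernel m u 0 y * Real.exp (θ * (y i - (0 : Fin m → ℤ) i)))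
        + ENNReal.ofReal (heatKernel m u 0 y * Real.exp (-θ * (y i - (0 : Fin m → ℤ) i)))) := by
      intro y
      have hh := heat_nonneg m hu.1.le 0 y
      calc _ ≤ ENNReal.ofReal (heatKernel m u 0 y) * ENNReal.ofReal (B * ∑ i, (Real.exp (θ * (y i)) + Real.exp (-θ * (y i)))) := by
            unfold pk; exact mul_le_mul_right (hf y) _
        _ = ENNReal.ofReal (B * ∑ i, (heatKernel m u 0 y * Real.exp (θ * (y i)) + heatKernel m u 0 y * Real.exp (-θ * (y i)))) := by
            rw [← ENNReal.ofReal_mul hh]; congr 1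
            simp_rw [← mul_add, ← Finset.mul_sum]; ring
        _ = _ := by
            rw [ENNReal.ofReal_mul hB, ENNReal.ofReal_sum_of_nonneg (fun i _ => by positivity)]
            congr 1
            refine Finset.sum_congr rfl fun i _ => ?_
            rw [ENNReal.ofReal_add (by positivity) (by positivity)]; simp
    refine (ENNReal.tsum_le_tsum hterm).trans ?_
    rw [ENNReal.tsum_mul_left, Summable.tsum_finsetSum (fun i _ => ENNReal.summable)]
    have : ∀ i ∈ Finset.univ, ∑' y, (ENNReal.ofReal (heatKernel m u 0 y * Real.exp (θ * (y i - (0 : Fin m → ℤ) i)))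
        + ENNReal.ofReal (heatKernel m u 0 y * Real.exp (-θ * (y i - (0 : Fin m → ℤ) i)))) ≤ ENNReal.ofReal (2 * Real.exp (2 * m)) := by
      intro i _
      rw [ENNReal.tsum_add, two_mul, ENNReal.ofReal_add (by positivity) (by positivity)]
      refine add_le_add ?_ ?_
      · exact heat_exp_sum' hm hu.1.le hn1 hu.2 (abs_of_nonneg hθ0) i 0
      · exact heat_exp_sum' hm hu.1.le hn1 hu.2 (by rw [abs_neg]; exact abs_of_nonneg hθ0) i 0
    calc _ ≤ ENNReal.ofReal B * ∑ i : Fin m, ENNReal.ofReal (2 * Real.exp (2 * m)) := by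
          gcongr with i hi; exact this i hi
      _ = _ := by
          rw [ENNReal.ofReal_mul hB, ENNReal.ofReal_mul (by positivity)]; simp
  calc _ ≤ ∫⁻ u in Ioc (0:ℝ) n, ENNReal.ofReal (B * (m * (2 * Real.exp (2 * m)))) :=
        setLIntegral_mono measurable_const key
    _ = _ := by
        rw [ENNReal.ofReal_mul (by positivity : (0:ℝ) ≤ n)]; simp [mul_comm]

end walk
end RWRS

namespace RWRS
open scoped ENNReal

lemma ev_pow (A : ℝ) {a b : ℝ} (h : a < b) : ∀ᶠ n : ℕ in atTop, A * (n:ℝ) ^ a ≤ (n:ℝ) ^ b := by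
  have h1 : Tendsto (fun n : ℕ => (n:ℝ) ^ (b - a)) atTop atTop :=
    (tendsto_rpow_atTop (by linarith)).comp tendsto_natCast_atTop_atTop
  filter_upwards [h1.eventually_ge_atTop A, eventually_ge_atTop 1] with n hn h1
  have h0 : (0:ℝ) < n := by exact_mod_cast h1
  calc A * (n:ℝ) ^ a ≤ (n:ℝ) ^ (b - a) * (n:ℝ) ^ a := by gcongr
    _ = _ := by rw [← Real.rpow_add h0]; ring_nf

lemma ev_exp (A a b : ℝ) {κ c : ℝ} (hκ : 0 < κ) (hc : 0 < c) :
    ∀ᶠ n : ℕ in atTop, A * (n:ℝ) ^ a * Real.exp (-(c * (n:ℝ) ^ κ)) ≤ (n:ℝ) ^ b := by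
  have h1 : Tendsto (fun n : ℕ => (n:ℝ) ^ κ) atTop atTop :=
    (tendsto_rpow_atTop hκ).comp tendsto_natCast_atTop_atTop
  have h2 := (tendsto_rpow_mul_exp_neg_mul_atTop_nhds_zero ((a + 1 - b) / κ) c hc).comp h1
  have h3 := h2.eventually (gt_mem_nhds (zero_lt_one))
  filter_upwards [h3, eventually_ge_atTop 1, ev_pow A (by linarith : a < a + 1)] with n hn h1 hA
  have h0 : (0:ℝ) < n := by exact_mod_cast h1
  simp only [Function.comp] at hn
  rw [← Real.rpow_mul h0.le, mul_div_cancel₀ _ hκ.ne', neg_mul] at hn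
  calc _ ≤ (n:ℝ) ^ (a + 1) * Real.exp (-(c * (n:ℝ) ^ κ)) := by gcongr
    _ = (n:ℝ) ^ b * ((n:ℝ) ^ (a + 1 - b) * Real.exp (-(c * (n:ℝ) ^ κ))) := by
        rw [← mul_assoc, ← Real.rpow_add h0]; ring_nf
    _ ≤ (n:ℝ) ^ b * 1 := by gcongr
    _ = _ := mul_one _

/-- the set of sites in a box with value above `h` -/
noncomputable def hi {d : ℕ} (z : (Fin d → ℤ) → ℝ) (h : ℝ) (x : Fin d → ℤ) (R : ℕ) : Finset (Fin d → ℤ) := by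
  classical exact (box x R).filter (fun y => h < z y)

lemma mem_hi {d : ℕ} {z : (Fin d → ℤ) → ℝ} {h : ℝ} {x y : Fin d → ℤ} {R : ℕ} :
    y ∈ hi z h x R ↔ y ∈ box x R ∧ h < z y := by classical simp [hi]

/-- density estimate for high sites -/
def E1 {d : ℕ} (α : ℝ) (z : (Fin d → ℤ) → ℝ) (s ε : ℝ) : Prop :=
  ∀ᶠ n : ℕ in atTop, ∀ x ∈ box (0 : Fin d → ℤ) n, ∀ R : ℕ, 1 ≤ R → R ≤ n →
    ((hi z ((n:ℝ) ^ s) x R).card : ℝ) ≤ (n:ℝ) ^ ε * (1 + (n:ℝ) ^ (-(α * s)) * (R : ℝ) ^ d)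

/-- growth estimate -/
def E2 {d : ℕ} (z : (Fin d → ℤ) → ℝ) (q : ℝ) : Prop :=
  ∃ C : ℝ, 0 < C ∧ ∀ R : ℕ, 1 ≤ R → ∀ y ∈ box (0 : Fin d → ℤ) R, z y ≤ C * (R : ℝ) ^ q

/-- the box scale -/
noncomputable def Ls (ε : ℝ) (n : ℕ) : ℕ := ⌈(n:ℝ) ^ (1/2 + ε)⌉₊

lemma ev_scale {ε : ℝ} (hε : ε ≤ 1/4) : ∀ᶠ n : ℕ in atTop, Ls ε n ≤ n ∧ 2 * √(n:ℝ) * (n:ℝ) ^ ε ≤ n := by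
  filter_upwards [ev_pow 2 (by linarith : (1/2 + ε) < 1), eventually_ge_atTop 1] with n hn h1
  have h0 : (0:ℝ) < n := by exact_mod_cast h1
  rw [Real.rpow_one] at hn
  constructor
  · apply Nat.ceil_le.mpr
    have : (0:ℝ) ≤ (n:ℝ) ^ (1/2 + ε) := by positivity
    linarith
  · rw [Real.sqrt_eq_rpow, mul_assoc, ← Real.rpow_add h0]; exact hn

/-- Green function of the high set, for `n` large, from any point in the box -/
lemma green_hi {d : ℕ} (hd : 3 ≤ d) {α s ε : ℝ} (z : (Fin d → ℤ) → ℝ) (hε : 0 < ε) (hε4 : ε ≤ 1/4)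
    (hE : E1 α z s ε) : ∀ᶠ n : ℕ in atTop, ∀ L ≤ n, ∀ x ∈ box (0 : Fin d → ℤ) n,
      ∑ k ∈ Finset.range n, pkf d ((k : ℝ) + 1) (ind (hi z ((n:ℝ) ^ s) 0 L)) x
      ≤ ENNReal.ofReal (Gc d * (2 * (n:ℝ) ^ ε + (n:ℝ) ^ (1 - α * s + (d + 1) * ε))) := by
  filter_upwards [hE, ev_scale hε4, eventually_ge_atTop 1, ev_exp (3 ^ d) (d + 1) 0 hε one_pos] with n hn hsc h1 hexp
  intro L hL x hx
  have h0 : (0:ℝ) < n := by exact_mod_cast h1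
  have h1' : (1:ℝ) ≤ n := by exact_mod_cast h1
  have hl : (1:ℝ) ≤ (n:ℝ) ^ ε := Real.one_le_rpow h1' hε.le
  refine (green_ind hd n hl (hi z ((n:ℝ) ^ s) 0 L) (a := (n:ℝ) ^ ε) (b := (n:ℝ) ^ ε * (n:ℝ) ^ (-(α * s)))
    (by positivity) (by positivity) x ?_).trans ?_
  · intro R hR1 hR2
    have hRn : R ≤ n := by exact_mod_cast hR2.trans hsc.2
    refine le_trans ?_ ((hn x hx R hR1 hRn).trans (le_of_eq (by ring)))
    have : (hi z ((n:ℝ) ^ s) 0 L).filter (· ∈ box x R) ⊆ hi z ((n:ℝ) ^ s) x R := by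
      intro y hy
      rw [Finset.mem_filter, mem_hi] at hy
      exact mem_hi.mpr ⟨hy.2, hy.1.2⟩
    exact_mod_cast Finset.card_le_card this
  · apply ENNReal.ofReal_le_ofReal
    have := Gc_pos d
    have e1 : (n:ℝ) ^ ε * (n:ℝ) ^ (-(α * s)) * (n * ((n:ℝ) ^ ε) ^ d) = (n:ℝ) ^ (1 - α * s + (d + 1) * ε) := by
      rw [← Real.rpow_natCast, ← Real.rpow_mul h0.le, ← Real.rpow_add h0]
      nth_rw 2 [← Real.rpow_one (n:ℝ)]
      rw [← Real.rpow_add h0, ← Real.rpow_add h0]; congr 1; ring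
    have e2 : (n:ℝ) * (hi z ((n:ℝ) ^ s) 0 L).card * Real.exp (-(n:ℝ) ^ ε) ≤ 1 := by
      have hc : ((hi z ((n:ℝ) ^ s) 0 L).card : ℝ) ≤ 3 ^ d * (n:ℝ) ^ d := by
        have : (hi z ((n:ℝ) ^ s) 0 L).card ≤ (2 * L + 1) ^ d := by
          rw [← card_box (0 : Fin d → ℤ) L]
          exact Finset.card_le_card fun y hy => (mem_hi.mp hy).1
        have h2 : (2 * L + 1) ^ d ≤ (3 * n) ^ d := Nat.pow_le_pow_left (by omega) d
        rw [← mul_pow]; exact_mod_cast this.trans h2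
      rw [Real.rpow_zero, one_mul] at hexp
      refine le_trans ?_ hexp
      have : (3:ℝ) ^ d * (n:ℝ) ^ ((d:ℝ) + 1) = n * (3 ^ d * (n:ℝ) ^ d) := by
        rw [Real.rpow_add h0, Real.rpow_natCast, Real.rpow_one]; ring
      rw [this]
      gcongr
    rw [e1]
    refine mul_le_mul_of_nonneg_left ?_ this.le
    linarith

end RWRS

namespace RWRS
open scoped ENNReal

section walk
variable {d : ℕ} {Ω : Type*} [MeasurableSpace Ω] {P : (Fin d → ℤ) → Measure Ω} {S : ℝ → Ω → (Fin d → ℤ)}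

lemma pkf_mono {u : ℝ} {f g : (Fin d → ℤ) → ℝ≥0∞} (h : ∀ y, f y ≤ g y) (x : Fin d → ℤ) : pkf d u f x ≤ pkf d u g x := by
  unfold pkf; exact ENNReal.tsum_le_tsum fun y => mul_le_mul_right (h y) _

lemma pkf_cmul {u : ℝ} (c : ℝ≥0∞) (f : (Fin d → ℤ) → ℝ≥0∞) (x : Fin d → ℤ) :
    pkf d u (fun y => c * f y) x = c * pkf d u f x := by
  unfold pkf; rw [← ENNReal.tsum_mul_left]; congr 1; ext y; ring

/-- truncated scenery: low part -/
noncomputable def vlow (z : (Fin d → ℤ) → ℝ) (h : ℝ) (L : ℕ) (y : Fin d → ℤ) : ℝ := by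
  classical exact if y ∈ box 0 L ∧ z y ≤ h then z y else 0

lemma vlow_le_levels (z : (Fin d → ℤ) → ℝ) {η : ℝ} (K : ℕ) {n : ℕ} (hn : 1 ≤ n) (L : ℕ) (y : Fin d → ℤ) :
    ENNReal.ofReal (vlow z ((n:ℝ) ^ (K * η)) L y) ≤
      1 + 1 * ∑ j ∈ Finset.range K, ENNReal.ofReal ((n:ℝ) ^ ((j + 1) * η)) * ind (hi z ((n:ℝ) ^ (j * η)) 0 L) y := by
  classical
  have h0 : (0:ℝ) < n := by exact_mod_cast hn
  unfold vlow
  split_ifs with h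
  · obtain ⟨hb, hz⟩ := h
    by_cases h1 : z y ≤ 1
    · refine le_trans ?_ le_self_add
      exact ENNReal.ofReal_le_one.mpr h1
    · push Not at h1
      -- find the level
      have hex : ∃ j : ℕ, z y ≤ (n:ℝ) ^ (j * η) := ⟨K, hz⟩
      set j := Nat.find hex with hj
      have hj1 : z y ≤ (n:ℝ) ^ (j * η) := Nat.find_spec hex
      have hjK : j ≤ K := Nat.find_min' hex hz
      have hj0 : j ≠ 0 := by
        intro h0
        rw [h0] at hj1; simp at hj1; linarith
      obtain ⟨i, hi'⟩ := Nat.exists_eq_succ_of_ne_zero hj0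
      have hi1 : (n:ℝ) ^ (i * η) < z y := by
        have := Nat.find_min hex (m := i) (by omega)
        exact not_le.mp this
      rw [one_mul]
      refine le_trans ?_ le_add_self
      refine le_trans ?_ (Finset.single_le_sum (f := fun j : ℕ => ENNReal.ofReal ((n:ℝ) ^ ((j + 1) * η)) * ind (hi z ((n:ℝ) ^ (j * η)) 0 L) y)
        (fun _ _ => zero_le) (Finset.mem_range.mpr (by omega : i < K)))
      have : ind (hi z ((n:ℝ) ^ (i * η)) 0 L) y = 1 := by
        simp only [ind]; rw [if_pos (mem_hi.mpr ⟨hb, hi1⟩)]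
      rw [this, mul_one]
      apply ENNReal.ofReal_le_ofReal
      rw [hi'] at hj1; push_cast at hj1; exact hj1
  · simp

lemma low_green (hS : IsCTSRW d P S) (hd : 3 ≤ d) {α ρ η ε : ℝ} (z : (Fin d → ℤ) → ℝ) (K : ℕ) (hη : 0 < η)
    (hρ : ρ = (K + 1) * η) (hρ1 : 1 + 4 * η ≤ ρ) (hαρ : 1 + 4 * η + 2 * α * η ≤ α * ρ) (hα : 0 < α)
    (hε : 0 < ε) (hε4 : ε ≤ 1/4) (hεd : (d + 2) * ε ≤ η / 4)
    (hE : ∀ j < K, E1 α z (j * η) ε) :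
    ∀ᶠ n : ℕ in atTop, ∀ L ≤ n, ∀ x ∈ box (0 : Fin d → ℤ) L,
      2 * ENNReal.ofReal ((n:ℝ) ^ (-ρ + η / 2)) *
        ∑ k ∈ Finset.range n, pkf d ((k : ℝ) + 1) (fun y => ENNReal.ofReal (vlow z ((n:ℝ) ^ (K * η)) L y)) x ≤ 1 := by
  have hall : ∀ᶠ n : ℕ in atTop, ∀ j ∈ Finset.range K, ∀ L ≤ n, ∀ x ∈ box (0 : Fin d → ℤ) n,
      ∑ k ∈ Finset.range n, pkf d ((k : ℝ) + 1) (ind (hi z ((n:ℝ) ^ (j * η)) 0 L)) x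
      ≤ ENNReal.ofReal (Gc d * (2 * (n:ℝ) ^ ε + (n:ℝ) ^ (1 - α * (j * η) + (d + 1) * ε))) := by
    rw [Filter.eventually_all_finset]
    intro j hj
    exact green_hi hd z hε hε4 (hE j (Finset.mem_range.mp hj))
  have hdε : (0:ℝ) ≤ d * ε := by positivity
  filter_upwards [hall, eventually_ge_atTop 1,
    ev_pow (2 * (1 + K * (3 * Gc d))) (by linarith : ρ - η + η / 4 < ρ - η / 2)] with n hn h1 hfin
  intro L hL x hx
  have h0 : (0:ℝ) < n := by exact_mod_cast h1
  have h1' : (1:ℝ) ≤ n := by exact_mod_cast h1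
  have hG := Gc_pos d
  have hx' := box_mono hL hx
  have hb : ∀ j ∈ Finset.range K, ENNReal.ofReal ((n:ℝ) ^ ((j + 1) * η)) *
      ∑ k ∈ Finset.range n, pkf d ((k : ℝ) + 1) (ind (hi z ((n:ℝ) ^ (j * η)) 0 L)) x
      ≤ ENNReal.ofReal (3 * Gc d * (n:ℝ) ^ (ρ - η + η / 4)) := by
    intro j hj
    refine (mul_le_mul_right (hn j hj L hL x hx') _).trans ?_
    rw [← ENNReal.ofReal_mul (by positivity)]
    apply ENNReal.ofReal_le_ofReal
    have hjK : (j:ℝ) + 1 ≤ K := by exact_mod_cast Finset.mem_range.mp hj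
    have i1 : (n:ℝ) ^ ((j + 1) * η) * (n:ℝ) ^ ε ≤ (n:ℝ) ^ (ρ - η + η / 4) := by
      rw [← Real.rpow_add h0]
      apply Real.rpow_le_rpow_of_exponent_le h1'
      nlinarith
    have i2 : (n:ℝ) ^ ((j + 1) * η) * (n:ℝ) ^ (1 - α * (j * η) + (d + 1) * ε) ≤ (n:ℝ) ^ (ρ - η + η / 4) := by
      rw [← Real.rpow_add h0]
      apply Real.rpow_le_rpow_of_exponent_le h1'
      have hjη : (j + 1) * η ≤ ρ - η := by nlinarith
      have hj0 : 0 ≤ (j:ℝ) * η := by positivity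
      rcases le_or_gt 1 α with h | h
      · nlinarith [mul_nonneg (by linarith : 0 ≤ α - 1) hj0]
      · nlinarith [mul_nonneg (by linarith : 0 ≤ 1 - α) (by linarith : 0 ≤ ρ - 2 * η - j * η)]
    calc _ = Gc d * (2 * ((n:ℝ) ^ ((j + 1) * η) * (n:ℝ) ^ ε) + (n:ℝ) ^ ((j + 1) * η) * (n:ℝ) ^ (1 - α * (j * η) + (d + 1) * ε)) := by ring
      _ ≤ Gc d * (2 * (n:ℝ) ^ (ρ - η + η / 4) + (n:ℝ) ^ (ρ - η + η / 4)) := by gcongr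
      _ = _ := by ring
  have hsum : ∑ k ∈ Finset.range n, pkf d ((k : ℝ) + 1) (fun y => ENNReal.ofReal (vlow z ((n:ℝ) ^ (K * η)) L y)) x
      ≤ ENNReal.ofReal ((1 + K * (3 * Gc d)) * (n:ℝ) ^ (ρ - η + η / 4)) := by
    calc _ ≤ ∑ k ∈ Finset.range n, (1 + 1 * ∑ j ∈ Finset.range K, ENNReal.ofReal ((n:ℝ) ^ ((j + 1) * η)) *
            pkf d ((k : ℝ) + 1) (ind (hi z ((n:ℝ) ^ (j * η)) 0 L)) x) := by
          refine Finset.sum_le_sum fun k _ => ?_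
          refine (pkf_mono (fun y => vlow_le_levels z K h1 L y) x).trans ?_
          rw [pkf_lin hS x (by positivity)]
          simp_rw [pkf_cmul]; rfl
      _ = n + ∑ j ∈ Finset.range K, ENNReal.ofReal ((n:ℝ) ^ ((j + 1) * η)) *
            ∑ k ∈ Finset.range n, pkf d ((k : ℝ) + 1) (ind (hi z ((n:ℝ) ^ (j * η)) 0 L)) x := by
          rw [Finset.sum_add_distrib]
          simp only [one_mul, Finset.mul_sum]
          rw [Finset.sum_comm]; simp
      _ ≤ n + ∑ j ∈ Finset.range K, ENNReal.ofReal (3 * Gc d * (n:ℝ) ^ (ρ - η + η / 4)) := by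
          gcongr with j hj; exact hb j hj
      _ ≤ ENNReal.ofReal ((n:ℝ) ^ (ρ - η + η / 4)) + ENNReal.ofReal (K * (3 * Gc d * (n:ℝ) ^ (ρ - η + η / 4))) := by
          refine add_le_add ?_ ?_
          · rw [← ENNReal.ofReal_natCast]
            apply ENNReal.ofReal_le_ofReal
            nth_rw 1 [← Real.rpow_one (n:ℝ)]
            exact Real.rpow_le_rpow_of_exponent_le h1' (by linarith)
          · rw [Finset.sum_const, Finset.card_range, nsmul_eq_mul, ENNReal.ofReal_mul (Nat.cast_nonneg K), ENNReal.ofReal_natCast]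
      _ = _ := by
          rw [← ENNReal.ofReal_add (by positivity) (by positivity)]; congr 1; ring
  calc _ ≤ 2 * ENNReal.ofReal ((n:ℝ) ^ (-ρ + η / 2)) * ENNReal.ofReal ((1 + K * (3 * Gc d)) * (n:ℝ) ^ (ρ - η + η / 4)) := by
        gcongr
    _ = ENNReal.ofReal ((n:ℝ) ^ (-ρ + η / 2) * (2 * (1 + K * (3 * Gc d)) * (n:ℝ) ^ (ρ - η + η / 4))) := by
        rw [show (2:ℝ≥0∞) = ENNReal.ofReal 2 by simp, ← ENNReal.ofReal_mul (by norm_num), ← ENNReal.ofReal_mul (by positivity)]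
        congr 1; ring
    _ ≤ ENNReal.ofReal ((n:ℝ) ^ (-ρ + η / 2) * (n:ℝ) ^ (ρ - η / 2)) := by
        apply ENNReal.ofReal_le_ofReal; gcongr
    _ = 1 := by
        rw [← Real.rpow_add h0]; simp

lemma low_part (hS : IsCTSRW d P S) (hd : 3 ≤ d) {α ρ η ε : ℝ} (z : (Fin d → ℤ) → ℝ) (hz : ∀ y, 0 ≤ z y) (K : ℕ) (hη : 0 < η)
    (hρ : ρ = (K + 1) * η) (hρ1 : 1 + 4 * η ≤ ρ) (hαρ : 1 + 4 * η + 2 * α * η ≤ α * ρ) (hα : 0 < α)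
    (hε : 0 < ε) (hε4 : ε ≤ 1/4) (hεd : (d + 2) * ε ≤ η / 4)
    (hE : ∀ j < K, E1 α z (j * η) ε) {c : ℝ} (hc : 0 < c) (D : ℝ) :
    ∀ᶠ n : ℕ in atTop, ∀ L ≤ n,
      P 0 {ω | ENNReal.ofReal (c * (n:ℝ) ^ ρ) ≤ ∫⁻ u in Ioc (0:ℝ) n, ENNReal.ofReal (vlow z ((n:ℝ) ^ (K * η)) L (S u ω))}
        ≤ ENNReal.ofReal ((n:ℝ) ^ D) := by
  filter_upwards [low_green hS hd z K hη hρ hρ1 hαρ hα hε hε4 hεd hE, eventually_ge_atTop 1,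
    ev_exp 3 1 D (by positivity : 0 < η / 2) (by positivity : 0 < c / 2)] with n hn h1 hexp
  intro L hL
  have h0 : (0:ℝ) < n := by exact_mod_cast h1
  have h1' : (1:ℝ) ≤ n := by exact_mod_cast h1
  have hcM : (n:ℝ) ^ (-ρ + η / 2) * (n:ℝ) ^ (K * η) ≤ 1 := by
    rw [← Real.rpow_add h0]
    apply Real.rpow_le_one_of_one_le_of_nonpos h1'
    rw [hρ]; linarith
  refine (low_tail hS 0 (vlow z ((n:ℝ) ^ (K * η)) L) (c := (n:ℝ) ^ (-ρ + η / 2)) (M := (n:ℝ) ^ (K * η)) n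
    (by positivity) (by positivity) (by positivity) ?_ ?_ hcM ?_).trans ?_
  · intro y; unfold vlow; split_ifs
    · exact hz y
    · exact le_rfl
  · intro y; unfold vlow; split_ifs with h
    · exact h.2
    · positivity
  · intro y hy
    apply hn L hL
    unfold vlow at hy
    by_contra hno
    exact hy (if_neg (fun h => hno h.1))
  · apply ENNReal.ofReal_le_ofReal
    refine le_trans ?_ hexp
    have e : (n:ℝ) ^ (-ρ + η / 2) * (c * (n:ℝ) ^ ρ) / 2 = c / 2 * (n:ℝ) ^ (η / 2) := by
      rw [show η / 2 = (-ρ + η / 2) + ρ by ring, Real.rpow_add h0 (-ρ + η / 2) ρ]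
      ring_nf
    rw [e, Real.rpow_one]
    gcongr
    nlinarith
    
end walk
end RWRS

namespace RWRS
open scoped ENNReal

section walk
variable {d : ℕ} {Ω : Type*} [MeasurableSpace Ω] {P : (Fin d → ℤ) → Measure Ω} {S : ℝ → Ω → (Fin d → ℤ)}

lemma high_part (hS : IsCTSRW d P S) (hd : 3 ≤ d) {α s ε κ : ℝ} (z : (Fin d → ℤ) → ℝ)
    (hα : 0 < α) (hε : 0 < ε) (hε4 : ε ≤ 1/4) (hκ : (d + 1) * ε + α * ε < κ)
    (hE : E1 α z s ε) (hE2 : E2 z (d / α + ε)) :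
    ∀ᶠ n : ℕ in atTop, ∀ L ≤ n, ∀ f : (Fin d → ℤ) → ℝ≥0∞, (∀ y, f y ≠ 0 → y ∈ hi z ((n:ℝ) ^ s) 0 L) →
      P 0 {ω | ∫⁻ u in Ioc (0:ℝ) n, f (S u ω) ≠ 0} ≤ ENNReal.ofReal ((n:ℝ) ^ (1 - α * s + κ)) := by
  obtain ⟨C, hC, hE2⟩ := hE2
  have hαε : 0 < α * ε := by positivity
  filter_upwards [hE, ev_scale hε4, eventually_ge_atTop 1,
    ev_exp (3 ^ d) (d + 1) (1 - α * s + (d + 1) * ε + α * ε) hε one_pos,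
    ev_pow (Real.exp (2 * d) * (Gc d * (1 + C ^ α + 1))) (by linarith : 1 - α * s + (d + 1) * ε + α * ε < 1 - α * s + κ)]
    with n hn hsc h1 hexp hfin
  intro L hL f hf
  have h0 : (0:ℝ) < n := by exact_mod_cast h1
  have h1' : (1:ℝ) ≤ n := by exact_mod_cast h1
  have hl : (1:ℝ) ≤ (n:ℝ) ^ ε := Real.one_le_rpow h1' hε.le
  have hG := Gc_pos d
  set H := hi z ((n:ℝ) ^ s) 0 L with hH
  refine (high_tail hS 0 f n H hf).trans ?_
  set b := (n:ℝ) ^ ε * (n:ℝ) ^ (-(α * s)) * ((1 + C ^ α) * (n:ℝ) ^ (α * ε)) with hb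
  have hb0 : 0 ≤ b := by positivity
  have hgr := green_ind hd n hl H (a := 0) (b := b) le_rfl hb0 0 (by
    intro R hR1 hR2
    have hRn : R ≤ n := by exact_mod_cast hR2.trans hsc.2
    have hRn' : (R:ℝ) ≤ n := by exact_mod_cast hRn
    have hR0 : (0:ℝ) < R := by exact_mod_cast hR1
    rw [zero_add]
    rcases (H.filter (· ∈ box 0 R)).eq_empty_or_nonempty with he | ⟨y, hy⟩
    · rw [he]; simp; positivity
    · rw [Finset.mem_filter] at hy
      have hzy := hE2 R hR1 y hy.2
      have hzy2 := (mem_hi.mp hy.1).2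
      have h3 : (n:ℝ) ^ (α * s) ≤ C ^ α * ((n:ℝ) ^ (α * ε) * (R:ℝ) ^ d) := by
        calc (n:ℝ) ^ (α * s) = ((n:ℝ) ^ s) ^ α := by rw [← Real.rpow_mul h0.le, mul_comm]
          _ ≤ (C * (R:ℝ) ^ (d / α + ε)) ^ α := by gcongr; linarith
          _ = C ^ α * (R:ℝ) ^ (d + α * ε) := by
              rw [Real.mul_rpow hC.le (by positivity), ← Real.rpow_mul hR0.le]; congr 2; field_simp
          _ = C ^ α * ((R:ℝ) ^ (α * ε) * (R:ℝ) ^ d) := by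
              rw [Real.rpow_add hR0, Real.rpow_natCast]; ring
          _ ≤ _ := by gcongr
      have h4 : 1 ≤ (n:ℝ) ^ (-(α * s)) * (C ^ α * ((n:ℝ) ^ (α * ε) * (R:ℝ) ^ d)) := by
        calc (1:ℝ) = (n:ℝ) ^ (-(α * s)) * (n:ℝ) ^ (α * s) := by rw [← Real.rpow_add h0]; simp
          _ ≤ _ := by gcongr
      have h5 : (1:ℝ) ≤ (n:ℝ) ^ (α * ε) := Real.one_le_rpow h1' hαε.le
      have h6 := hn 0 (by rw [mem_box]; simp) R hR1 hRn
      have h7 : ((H.filter (· ∈ box 0 R)).card : ℝ) ≤ ((hi z ((n:ℝ) ^ s) 0 R).card : ℝ) := by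
        have : H.filter (· ∈ box 0 R) ⊆ hi z ((n:ℝ) ^ s) 0 R := by
          intro y hy
          rw [Finset.mem_filter, mem_hi] at hy
          exact mem_hi.mpr ⟨hy.2, hy.1.2⟩
        exact_mod_cast Finset.card_le_card this
      refine h7.trans (h6.trans ?_)
      have h8 : (n:ℝ) ^ (-(α * s)) * (R:ℝ) ^ d ≤ (n:ℝ) ^ (-(α * s)) * (R:ℝ) ^ d * (n:ℝ) ^ (α * ε) :=
        le_mul_of_one_le_right (by positivity) h5
      calc _ ≤ (n:ℝ) ^ ε * ((n:ℝ) ^ (-(α * s)) * (C ^ α * ((n:ℝ) ^ (α * ε) * (R:ℝ) ^ d)) + (n:ℝ) ^ (-(α * s)) * (R:ℝ) ^ d * (n:ℝ) ^ (α * ε)) := by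
            gcongr
        _ = _ := by rw [hb]; ring)
  refine (mul_le_mul_right hgr _).trans ?_
  rw [← ENNReal.ofReal_mul (by positivity)]
  apply ENNReal.ofReal_le_ofReal
  have e1 : b * (n * ((n:ℝ) ^ ε) ^ d) = (1 + C ^ α) * (n:ℝ) ^ (1 - α * s + (d + 1) * ε + α * ε) := by
    have : (n:ℝ) ^ (1 - α * s + (d + 1) * ε + α * ε) = (n:ℝ) ^ ε * (n:ℝ) ^ (-(α * s)) * (n:ℝ) ^ (α * ε) * ((n:ℝ) ^ (1:ℝ) * ((n:ℝ) ^ ε) ^ d) := by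
      rw [← Real.rpow_natCast, ← Real.rpow_mul h0.le, ← Real.rpow_add h0, ← Real.rpow_add h0, ← Real.rpow_add h0, ← Real.rpow_add h0]
      congr 1; ring
    rw [this, hb, Real.rpow_one]; ring
  have e2 : (n:ℝ) * H.card * Real.exp (-(n:ℝ) ^ ε) ≤ (n:ℝ) ^ (1 - α * s + (d + 1) * ε + α * ε) := by
    have hc : (H.card : ℝ) ≤ 3 ^ d * (n:ℝ) ^ d := by
      have : H.card ≤ (2 * L + 1) ^ d := by
        rw [← card_box (0 : Fin d → ℤ) L]
        exact Finset.card_le_card fun y hy => (mem_hi.mp hy).1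
      have h2 : (2 * L + 1) ^ d ≤ (3 * n) ^ d := Nat.pow_le_pow_left (by omega) d
      rw [← mul_pow]; exact_mod_cast this.trans h2
    rw [one_mul] at hexp
    refine le_trans ?_ hexp
    have : (3:ℝ) ^ d * (n:ℝ) ^ ((d:ℝ) + 1) = n * (3 ^ d * (n:ℝ) ^ d) := by
      rw [Real.rpow_add h0, Real.rpow_natCast, Real.rpow_one]; ring
    rw [this]
    gcongr
  refine le_trans ?_ hfin
  rw [e1, zero_add]
  calc _ ≤ Real.exp (2 * d) * (Gc d * ((1 + C ^ α) * (n:ℝ) ^ (1 - α * s + (d + 1) * ε + α * ε) + (n:ℝ) ^ (1 - α * s + (d + 1) * ε + α * ε))) := by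
        gcongr
    _ = _ := by ring

lemma out_part (hS : IsCTSRW d P S) (hd : 3 ≤ d) {ρ q ε : ℝ} (z : (Fin d → ℤ) → ℝ) (hρ : 0 < ρ)
    (hε : 0 < ε) (hE2 : E2 z q) {c : ℝ} (hc : 0 < c) (D : ℝ) :
    ∀ᶠ n : ℕ in atTop, ∀ f : (Fin d → ℤ) → ℝ≥0∞, (∀ y ∈ box 0 (Ls ε n), f y = 0) → (∀ y, f y ≤ ENNReal.ofReal (z y)) →
      ∫⁻ ω, (∫⁻ u in Ioc (0:ℝ) n, f (S u ω)) ∂P 0 ≠ ∞ ∧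
      P 0 {ω | ENNReal.ofReal (c * (n:ℝ) ^ ρ) ≤ ∫⁻ u in Ioc (0:ℝ) n, f (S u ω)} ≤ ENNReal.ofReal ((n:ℝ) ^ D) := by
  obtain ⟨C, hC, hE2⟩ := hE2
  set Q := ⌈q⌉₊ with hQ
  have hz : ∀ R : ℕ, 1 ≤ R → ∀ y ∈ box (0 : Fin d → ℤ) R, z y ≤ C * (R : ℝ) ^ Q := by
    intro R hR y hy
    refine (hE2 R hR y hy).trans ?_
    gcongr
    rw [← Real.rpow_natCast]
    exact Real.rpow_le_rpow_of_exponent_le (by exact_mod_cast hR) (Nat.le_ceil q)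
  filter_upwards [eventually_ge_atTop 1, ev_exp (C * (2 ^ Q * Q.factorial) * (d * (2 * Real.exp (2 * d))) / c) (1 + Q / 2 - ρ) D hε (by norm_num : (0:ℝ) < 1 / 2)]
    with n h1 hexp
  intro f hf0 hfz
  have h0 : (0:ℝ) < n := by exact_mod_cast h1
  have h1' : (1:ℝ) ≤ n := by exact_mod_cast h1
  set B := C * ((2 * √n) ^ Q * Q.factorial * Real.exp (-((Ls ε n : ℕ) / √n / 2))) with hB
  have hB0 : 0 ≤ B := by positivity
  have hmean := out_mean hS (by omega) f hB0 h1 (by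
    intro y
    by_cases hy : y ∈ box 0 (Ls ε n)
    · rw [hf0 y hy]; exact zero_le
    · refine (hfz y).trans (ENNReal.ofReal_le_ofReal ?_)
      exact growth_exp z hC.le Q hz h1' (Ls ε n) y hy)
  refine ⟨ne_top_of_le_ne_top ENNReal.ofReal_ne_top hmean, ?_⟩
  have hT : 0 < c * (n:ℝ) ^ ρ := by positivity
  refine (meas_ge_le_lintegral_div (meas_A hS f _).aemeasurable (by simpa using hT) ENNReal.ofReal_ne_top).trans ?_
  refine (ENNReal.div_le_div_right hmean _).trans ?_
  rw [← ENNReal.ofReal_div_of_pos hT]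
  apply ENNReal.ofReal_le_ofReal
  refine le_trans ?_ hexp
  have hL : Real.exp (-((Ls ε n : ℕ) / √n / 2)) ≤ Real.exp (-(1 / 2 * (n:ℝ) ^ ε)) := by
    apply Real.exp_le_exp.mpr
    have h2 : (n:ℝ) ^ (1/2 + ε) ≤ (Ls ε n : ℕ) := Nat.le_ceil _
    have h3 : (n:ℝ) ^ ε ≤ (Ls ε n : ℕ) / √n := by
      rw [le_div_iff₀ (by positivity), Real.sqrt_eq_rpow, ← Real.rpow_add h0]
      rwa [add_comm ε]
    linarith
  have e : (2 * √n) ^ Q = 2 ^ Q * (n:ℝ) ^ ((Q:ℝ) / 2) := by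
    rw [mul_pow, Real.sqrt_eq_rpow, ← Real.rpow_natCast, ← Real.rpow_natCast, ← Real.rpow_mul h0.le]; congr 2; ring
  have e3 : (n:ℝ) ^ (1 + (Q:ℝ) / 2 - ρ) = n * (n:ℝ) ^ ((Q:ℝ) / 2) / (n:ℝ) ^ ρ := by
    rw [Real.rpow_sub h0, Real.rpow_add h0, Real.rpow_one]
  calc (n:ℝ) * (B * (d * (2 * Real.exp (2 * d)))) / (c * (n:ℝ) ^ ρ)
      ≤ (n:ℝ) * (C * (2 ^ Q * (n:ℝ) ^ ((Q:ℝ) / 2) * Q.factorial * Real.exp (-(1 / 2 * (n:ℝ) ^ ε))) * (d * (2 * Real.exp (2 * d)))) / (c * (n:ℝ) ^ ρ) := by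
        rw [hB, e]; gcongr
    _ = _ := by rw [e3]; field_simp


theorem upper (hS : IsCTSRW d P S) (hd : 3 ≤ d) {α ρ η ε : ℝ} (z : (Fin d → ℤ) → ℝ) (hz : ∀ y, 0 ≤ z y) (K : ℕ) (hη : 0 < η)
    (hρ : ρ = (K + 1) * η) (hρ1 : 1 + 4 * η ≤ ρ) (hαρ : 1 + 4 * η + 2 * α * η ≤ α * ρ) (hα : 0 < α)
    (hε : 0 < ε) (hε4 : ε ≤ 1/4) (hεd : (d + 2) * ε ≤ η / 4) (hεα : α * ε ≤ η / 4)
    (hE : ∀ j ≤ K, E1 α z (j * η) ε) (hE2 : E2 z (d / α + ε)) {c : ℝ} (hc : 0 < c) :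
    ∀ᶠ n : ℕ in atTop, P 0 {ω | ENNReal.ofReal (c * (n:ℝ) ^ ρ) ≤ ∫⁻ u in Ioc (0:ℝ) n, ENNReal.ofReal (z (S u ω))}
        ≤ ENNReal.ofReal ((n:ℝ) ^ (1 - α * ρ + (α + 2) * η)) ∧
       ∀ᵐ ω ∂P 0, ∫⁻ u in Ioc (0:ℝ) n, ENNReal.ofReal (z (S u ω)) ≠ ∞ := by
  have hdε : (0:ℝ) ≤ d * ε := by positivity
  have hρ0 : 0 < ρ := by rw [hρ]; positivity
  filter_upwards [low_part hS hd z hz K hη hρ hρ1 hαρ hα hε hε4 hεd (fun j hj => hE j hj.le) (half_pos hc) (1 - α * ρ + (α + 1) * η),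
    high_part hS hd (κ := η) z hα hε hε4 (by linarith) (hE K le_rfl) hE2,
    out_part hS hd z hρ0 hε hE2 (half_pos hc) (1 - α * ρ + (α + 1) * η), eventually_ge_atTop 1,
    ev_scale hε4, ev_pow 3 (by linarith : 1 - α * ρ + (α + 1) * η < 1 - α * ρ + (α + 2) * η)] with n hlow hhigh hout h1 hsc hfin
  classical
  have h0 : (0:ℝ) < n := by exact_mod_cast h1
  have hprob := hS.prob 0
  set L := Ls ε n with hL
  set h := (n:ℝ) ^ (K * η) with hh
  set f1 : (Fin d → ℤ) → ℝ≥0∞ := fun y => ENNReal.ofReal (vlow z h L y) with hf1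
  set f2 : (Fin d → ℤ) → ℝ≥0∞ := fun y => if y ∈ box 0 L ∧ h < z y then ENNReal.ofReal (z y) else 0 with hf2
  set f3 : (Fin d → ℤ) → ℝ≥0∞ := fun y => if y ∉ box 0 L then ENNReal.ofReal (z y) else 0 with hf3
  have hsplit : ∀ y, ENNReal.ofReal (z y) = f1 y + f2 y + f3 y := by
    intro y
    by_cases hy : y ∈ box 0 L
    · rcases le_or_gt (z y) h with hzy | hzy
      · simp [hf1, hf2, hf3, hy, vlow, hzy, not_lt.mpr hzy]
      · simp [hf1, hf2, hf3, hy, vlow, hzy, not_le.mpr hzy]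
    · simp [hf1, hf2, hf3, hy, vlow]
  have hms : ∀ (g : (Fin d → ℤ) → ℝ≥0∞) ω, Measurable fun u : ℝ => g (S u ω) := fun g ω =>
    (meas_joint0 hS g).comp (measurable_id.prodMk measurable_const)
  have hA : ∀ ω, ∫⁻ u in Ioc (0:ℝ) n, ENNReal.ofReal (z (S u ω)) =
      (∫⁻ u in Ioc (0:ℝ) n, f1 (S u ω)) + (∫⁻ u in Ioc (0:ℝ) n, f2 (S u ω)) + ∫⁻ u in Ioc (0:ℝ) n, f3 (S u ω) := by
    intro ω
    simp_rw [hsplit]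
    rw [lintegral_add_right _ (hms f3 ω), lintegral_add_left (hms f1 ω)]
  have b1 := hlow L hsc.1
  have b2 := hhigh L hsc.1 f2 (by
    intro y hy
    simp only [hf2] at hy
    by_contra hno
    exact hy (if_neg fun h => hno (mem_hi.mpr h)))
  have b3 := hout f3 (by intro y hy; simp [hf3, hy]) (by
    intro y; simp only [hf3]; split_ifs
    · exact zero_le
    · exact le_rfl)
  have hexp : 1 - α * (K * η) + η = 1 - α * ρ + (α + 1) * η := by rw [hρ]; ring
  rw [hexp] at b2
  constructor
  · set T1 := {ω | ENNReal.ofReal (c / 2 * (n:ℝ) ^ ρ) ≤ ∫⁻ u in Ioc (0:ℝ) n, f1 (S u ω)} with hT1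
    set T2 := {ω | ∫⁻ u in Ioc (0:ℝ) n, f2 (S u ω) ≠ 0} with hT2
    set T3 := {ω | ENNReal.ofReal (c / 2 * (n:ℝ) ^ ρ) ≤ ∫⁻ u in Ioc (0:ℝ) n, f3 (S u ω)} with hT3
    have hsub : {ω | ENNReal.ofReal (c * (n:ℝ) ^ ρ) ≤ ∫⁻ u in Ioc (0:ℝ) n, ENNReal.ofReal (z (S u ω))} ⊆ T1 ∪ T2 ∪ T3 := by
      intro ω hω
      have hω : ENNReal.ofReal (c * (n:ℝ) ^ ρ) ≤ ∫⁻ u in Ioc (0:ℝ) n, ENNReal.ofReal (z (S u ω)) := hω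
      by_contra hno
      simp only [Set.mem_union, not_or] at hno
      obtain ⟨⟨n1, n2⟩, n3⟩ := hno
      have n1 : ∫⁻ u in Ioc (0:ℝ) n, f1 (S u ω) < ENNReal.ofReal (c / 2 * (n:ℝ) ^ ρ) := not_le.mp n1
      have n2 : ∫⁻ u in Ioc (0:ℝ) n, f2 (S u ω) = 0 := not_not.mp n2
      have n3 : ∫⁻ u in Ioc (0:ℝ) n, f3 (S u ω) < ENNReal.ofReal (c / 2 * (n:ℝ) ^ ρ) := not_le.mp n3
      rw [hA, n2, add_zero] at hω
      have := ENNReal.add_lt_add n1 n3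
      rw [← ENNReal.ofReal_add (by positivity) (by positivity)] at this
      have e : c / 2 * (n:ℝ) ^ ρ + c / 2 * (n:ℝ) ^ ρ = c * (n:ℝ) ^ ρ := by ring
      rw [e] at this
      exact absurd this (not_lt.mpr hω)
    refine (measure_mono hsub).trans ((measure_union_le _ _).trans ((add_le_add (measure_union_le _ _) le_rfl).trans ?_))
    refine (add_le_add (add_le_add b1 b2) b3.2).trans ?_
    rw [← ENNReal.ofReal_add (by positivity) (by positivity), ← ENNReal.ofReal_add (by positivity) (by positivity)]
    apply ENNReal.ofReal_le_ofReal
    linarith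
  · have hfin3 := ae_lt_top (meas_A hS f3 (Ioc (0:ℝ) n)) b3.1
    filter_upwards [hfin3] with ω hω
    rw [hA]
    have hbd : ∀ (g : (Fin d → ℤ) → ℝ≥0∞) (M : ℝ), (∀ y, g y ≤ ENNReal.ofReal M) → ∫⁻ u in Ioc (0:ℝ) n, g (S u ω) < ∞ := by
      intro g M hg
      calc _ ≤ ∫⁻ u in Ioc (0:ℝ) n, ENNReal.ofReal M := lintegral_mono fun u => hg _
        _ = ENNReal.ofReal M * ENNReal.ofReal n := by simp
        _ < ∞ := ENNReal.mul_lt_top ENNReal.ofReal_lt_top ENNReal.ofReal_lt_top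
    have q1 := hbd f1 h (fun y => by
      simp only [hf1, vlow]; split_ifs with hy
      · exact ENNReal.ofReal_le_ofReal hy.2
      · simp)
    have q2 := hbd f2 (∑ y ∈ box 0 L, z y) (fun y => by
      simp only [hf2]; split_ifs with hy
      · exact ENNReal.ofReal_le_ofReal (Finset.single_le_sum (fun y _ => hz y) hy.1)
      · simp)
    exact (ENNReal.add_lt_top.mpr ⟨ENNReal.add_lt_top.mpr ⟨q1, q2⟩, hω⟩).ne

end walk
end RWRS

namespace RWRS
open scoped ENNReal

section walk
variable {d : ℕ} {Ω : Type*} [MeasurableSpace Ω] {P : (Fin d → ℤ) → Measure Ω} {S : ℝ → Ω → (Fin d → ℤ)}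

/-- equality indicator -/
noncomputable def eqI (a b : Fin d → ℤ) : ℝ≥0∞ := by classical exact if b = a then 1 else 0

lemma ind_mul_eqI (B : Finset (Fin d → ℤ)) (a b : Fin d → ℤ) :
    ind B a * eqI a b = ∑ y ∈ B, ind {y} a * ind {y} b := by
  classical
  by_cases ha : a ∈ B
  · rw [Finset.sum_eq_single a]
    · simp [ind, eqI, ha]
    · intro y _ hy; simp [ind, hy.symm]
    · intro h; exact absurd ha h
  · rw [Finset.sum_eq_zero]
    · simp [ind, ha]
    · intro y hy
      have : a ≠ y := fun h => ha (h ▸ hy)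
      simp [ind, this]

lemma ind_eq_sum (B : Finset (Fin d → ℤ)) (a : Fin d → ℤ) : ind B a = ∑ y ∈ B, ind {y} a := by
  have := ind_mul_eqI B a a
  simp only [eqI, if_true, mul_one] at this
  rw [this]
  refine Finset.sum_congr rfl fun y _ => ?_
  by_cases h : a = y <;> simp [ind, h]

lemma ind_le_one (B : Finset (Fin d → ℤ)) (a : Fin d → ℤ) : ind B a ≤ 1 := by
  classical
  unfold ind; split_ifs <;> simp

lemma stay (hS : IsCTSRW d P S) (x : Fin d → ℤ) (B : Finset (Fin d → ℤ)) {t u : ℝ} (ht : 0 ≤ t) (hu : t ≤ u) (hu1 : u ≤ t + 1) :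
    ENNReal.ofReal (Real.exp (-(2 * d))) * ∫⁻ ω, ind B (S t ω) ∂P x ≤ ∫⁻ ω, ind B (S t ω) * eqI (S t ω) (S u ω) ∂P x := by
  have hm : ∀ (g : (Fin d → ℤ) → ℝ≥0∞) t, Measurable (fun ω => g (S t ω)) := fun g t =>
    (measurable_of_countable g).comp (meas_S hS t)
  have hm2 : ∀ (g g' : (Fin d → ℤ) → ℝ≥0∞) t t', Measurable (fun ω => g (S t ω) * g' (S t' ω)) := fun g g' t t' =>
    (hm g t).mul (hm g' t')
  simp_rw [ind_mul_eqI, ind_eq_sum B]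
  rw [lintegral_finsetSum _ (fun y _ => hm _ t), lintegral_finsetSum _ (fun y _ => hm2 _ _ t u), Finset.mul_sum]
  refine Finset.sum_le_sum fun y _ => ?_
  rw [markov1 hS x ht hu, ← lintegral_const_mul _ (hm _ t)]
  refine lintegral_mono fun ω => ?_
  rw [mul_comm]
  by_cases h : S t ω = y
  · gcongr
    rw [pkf_ind (by linarith), h]
    apply ENNReal.ofReal_le_ofReal
    rw [Finset.sum_singleton]
    refine le_trans ?_ (heat_diag d (by linarith) y)
    apply Real.exp_le_exp.mpr
    have : (0:ℝ) ≤ d := Nat.cast_nonneg d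
    nlinarith
  · simp [ind, h]

/-- holding functional -/
noncomputable def Wk (S : ℝ → Ω → (Fin d → ℤ)) (k : ℕ) (ω : Ω) : ℝ≥0∞ :=
  ∫⁻ u in Ioc (k:ℝ) (k + 1), eqI (S k ω) (S u ω)

lemma meas_eqI (hS : IsCTSRW d P S) (k : ℕ) : Measurable fun p : ℝ × Ω => eqI (S k p.2) (S p.1 p.2) := by
  have h : Measurable fun q : (Fin d → ℤ) × (Fin d → ℤ) => eqI q.1 q.2 := measurable_of_countable _
  exact h.comp (((meas_S hS k).comp measurable_snd).prodMk hS.meas)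

lemma meas_Wk (hS : IsCTSRW d P S) (k : ℕ) : Measurable (Wk S k) :=
  Measurable.lintegral_prod_left' (meas_eqI hS k)

/-- event: at time `k` in `B` and stays long -/
def Ek (S : ℝ → Ω → (Fin d → ℤ)) (B : Finset (Fin d → ℤ)) (δ : ℝ) (k : ℕ) : Set Ω :=
  {ω | S k ω ∈ B ∧ ENNReal.ofReal δ ≤ Wk S k ω}

lemma meas_Ek (hS : IsCTSRW d P S) (B : Finset (Fin d → ℤ)) (δ : ℝ) (k : ℕ) : MeasurableSet (Ek S B δ k) := by
  have h1 : MeasurableSet {ω | S k ω ∈ B} := (meas_S hS k) (Finset.measurableSet B)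
  exact h1.inter (measurableSet_le measurable_const (meas_Wk hS k))

lemma Ek_prob (hS : IsCTSRW d P S) (x : Fin d → ℤ) (B : Finset (Fin d → ℤ)) (k : ℕ) :
    ENNReal.ofReal (Real.exp (-(2 * d)) / 2) * pkf d k (ind B) x ≤ P x (Ek S B (Real.exp (-(2 * d)) / 2) k) := by
  classical
  have := hS.prob x
  set p := Real.exp (-(2 * d)) with hp
  have hp0 : 0 < p := Real.exp_pos _
  have hm : ∀ (g : (Fin d → ℤ) → ℝ≥0∞) t, Measurable (fun ω => g (S t ω)) := fun g t =>
    (measurable_of_countable g).comp (meas_S hS t)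
  have hq := lint_at hS x (Nat.cast_nonneg k) (ind B)
  have h1 : ENNReal.ofReal p * pkf d k (ind B) x ≤ ∫⁻ ω, ind B (S k ω) * Wk S k ω ∂P x := by
    have e : ∀ ω, ind B (S k ω) * Wk S k ω = ∫⁻ u in Ioc (k:ℝ) (k + 1), ind B (S k ω) * eqI (S k ω) (S u ω) := by
      intro ω
      rw [Wk, lintegral_const_mul]
      exact (meas_eqI hS k).comp (measurable_id.prodMk measurable_const)
    simp_rw [e]
    rw [lintegral_lintegral_swap (f := fun ω u => ind B (S k ω) * eqI (S k ω) (S u ω))]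
    · calc _ = ∫⁻ u in Ioc (k:ℝ) (k + 1), ENNReal.ofReal p * ∫⁻ ω, ind B (S k ω) ∂P x := by
            rw [hq]; simp
        _ ≤ _ := by
            refine setLIntegral_mono' measurableSet_Ioc fun u hu => ?_
            exact stay hS x B (Nat.cast_nonneg k) hu.1.le hu.2
    · exact ((((hm (ind B) k).comp measurable_snd).mul (meas_eqI hS k)).comp measurable_swap).aemeasurable
  have h2 : ∀ ω, ind B (S k ω) * Wk S k ω ≤ ENNReal.ofReal (p / 2) * ind B (S k ω) + (Ek S B (p / 2) k).indicator 1 ω := by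
    intro ω
    have hW : Wk S k ω ≤ 1 := by
      calc _ ≤ ∫⁻ u in Ioc (k:ℝ) (k + 1), 1 := lintegral_mono fun u => by unfold eqI; split_ifs <;> simp
        _ = 1 := by simp
    by_cases hB : S k ω ∈ B
    · have hi1 : ind B (S k ω) = 1 := by simp [ind, hB]
      rw [hi1, one_mul, mul_one]
      rcases le_or_gt (ENNReal.ofReal (p / 2)) (Wk S k ω) with h | h
      · rw [indicator_of_mem (show ω ∈ Ek S B (p / 2) k from ⟨hB, h⟩)]
        exact hW.trans le_add_self
      · exact h.le.trans le_self_add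
    · simp [ind, hB]
  have h3 := h1.trans (lintegral_mono h2)
  rw [lintegral_add_left ((hm _ _).const_mul _), lintegral_const_mul _ (hm _ _), hq,
    lintegral_indicator_one (meas_Ek hS B _ k)] at h3
  have h4 : ENNReal.ofReal p = ENNReal.ofReal (p / 2) + ENNReal.ofReal (p / 2) := by
    rw [← ENNReal.ofReal_add (by positivity) (by positivity)]; congr 1; ring
  rw [h4, add_mul] at h3
  refine (ENNReal.add_le_add_iff_left ?_).mp h3
  refine ENNReal.mul_ne_top ENNReal.ofReal_ne_top ?_
  exact ne_top_of_le_ne_top ENNReal.one_ne_top (pkf_le hS x (Nat.cast_nonneg k) (ind_le_one B))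

lemma sum_sq_le (n : ℕ) (I : Finset ℕ) (hI : I ⊆ Finset.range n) (g : ℕ → ℕ → ℝ≥0∞) (hsym : ∀ k l, g k l = g l k) :
    ∑ k ∈ I, ∑ l ∈ I, g k l ≤ 2 * ∑ k ∈ I, (g k k + ∑ j ∈ Finset.range n, g k (k + 1 + j)) := by
  classical
  have h1 : ∀ k l, g k l ≤ (if k ≤ l then g k l else 0) + (if l ≤ k then g l k else 0) := by
    intro k l
    rcases le_total k l with h | h
    · rw [if_pos h]; exact le_self_add
    · rw [if_pos h, hsym k l]; exact le_add_self
  calc _ ≤ ∑ k ∈ I, ∑ l ∈ I, ((if k ≤ l then g k l else 0) + (if l ≤ k then g l k else 0)) :=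
        Finset.sum_le_sum fun k _ => Finset.sum_le_sum fun l _ => h1 k l
    _ = 2 * ∑ k ∈ I, ∑ l ∈ I, (if k ≤ l then g k l else 0) := by
        simp_rw [Finset.sum_add_distrib]
        rw [Finset.sum_comm (f := fun k l => if l ≤ k then g l k else 0), two_mul]
    _ ≤ _ := by
        gcongr with k hk
        rw [← Finset.sum_filter]
        calc _ ≤ ∑ l ∈ insert k ((Finset.range n).image (fun j => k + 1 + j)), g k l := by
              refine Finset.sum_le_sum_of_subset ?_
              intro l hl
              rw [Finset.mem_filter] at hl
              have := Finset.mem_range.mp (hI hl.1)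
              rcases eq_or_lt_of_le hl.2 with h | h
              · rw [← h]; exact Finset.mem_insert_self _ _
              · refine Finset.mem_insert_of_mem (Finset.mem_image.mpr ⟨l - k - 1, Finset.mem_range.mpr (by omega), by omega⟩)
          _ = _ := by
              rw [Finset.sum_insert, Finset.sum_image]
              · intro a _ b _ h; simpa using h
              · intro h; obtain ⟨j, _, hj⟩ := Finset.mem_image.mp h; omega

lemma second_moment (hS : IsCTSRW d P S) (x : Fin d → ℤ) (B : Finset (Fin d → ℤ)) (n : ℕ) (I : Finset ℕ) (hI : I ⊆ Finset.range n)
    {D : ℝ} (hD : 1 ≤ D) (hG : ∀ y ∈ B, 1 + ∑ j ∈ Finset.range n, pkf d ((j:ℝ) + 1) (ind B) y ≤ ENNReal.ofReal D) {σ : ℝ} (hσ : 0 ≤ σ)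
    (hσ' : ∑ k ∈ I, pkf d k (ind B) x = ENNReal.ofReal σ) :
    ENNReal.ofReal (σ * (Real.exp (-(2 * d)) ^ 2 / (8 * D))) ≤ P x (⋃ k ∈ I, Ek S B (Real.exp (-(2 * d)) / 2) k) := by
  classical
  have := hS.prob x
  set p := Real.exp (-(2 * d)) with hp
  have hp0 : 0 < p := Real.exp_pos _
  have hm : ∀ (g : (Fin d → ℤ) → ℝ≥0∞) t, Measurable (fun ω => g (S t ω)) := fun g t =>
    (measurable_of_countable g).comp (meas_S hS t)
  have hm2 : ∀ (g g' : (Fin d → ℤ) → ℝ≥0∞) t t', Measurable (fun ω => g (S t ω) * g' (S t' ω)) := fun g g' t t' =>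
    (hm g t).mul (hm g' t')
  set U := ⋃ k ∈ I, Ek S B (p / 2) k with hU
  have hUm : MeasurableSet U := Finset.measurableSet_biUnion _ fun k _ => meas_Ek hS B _ k
  set N : Ω → ℝ≥0∞ := fun ω => ∑ k ∈ I, ind B (S k ω) with hN
  set M : Ω → ℝ≥0∞ := fun ω => ∑ k ∈ I, (Ek S B (p / 2) k).indicator 1 ω with hM
  -- second moment
  have hN2 : ∫⁻ ω, N ω * N ω ∂P x ≤ ENNReal.ofReal (2 * D * σ) := by
    have e : ∀ ω, N ω * N ω = ∑ k ∈ I, ∑ l ∈ I, ind B (S k ω) * ind B (S l ω) := fun ω => Finset.sum_mul_sum _ _ _ _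
    simp_rw [e]
    rw [lintegral_finsetSum _ fun k _ => Finset.measurable_sum _ fun l _ => hm2 _ _ _ _]
    have e2 : ∀ k : ℕ, ∫⁻ ω, ∑ l ∈ I, ind B (S k ω) * ind B (S l ω) ∂P x = ∑ l ∈ I, ∫⁻ ω, ind B (S k ω) * ind B (S l ω) ∂P x :=
      fun k => lintegral_finsetSum _ fun l _ => hm2 _ _ _ _
    simp_rw [e2]
    refine (sum_sq_le n I hI (fun k l => ∫⁻ ω, ind B (S k ω) * ind B (S l ω) ∂P x) (fun k l => by simp_rw [mul_comm])).trans ?_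
    have e3 : ∀ k : ℕ, (∫⁻ ω, ind B (S k ω) * ind B (S k ω) ∂P x) + ∑ j ∈ Finset.range n, ∫⁻ ω, ind B (S k ω) * ind B (S ((k + 1 + j : ℕ) : ℝ) ω) ∂P x
        ≤ ENNReal.ofReal D * pkf d k (ind B) x := by
      intro k
      have e4 : ∀ j : ℕ, ∫⁻ ω, ind B (S k ω) * ind B (S ((k + 1 + j : ℕ) : ℝ) ω) ∂P x
          = ∫⁻ ω, ind B (S k ω) * pkf d ((j:ℝ) + 1) (ind B) (S k ω) ∂P x := by
        intro j
        have h4 : (k:ℝ) ≤ ((k + 1 + j : ℕ) : ℝ) := by exact_mod_cast (by omega : k ≤ k + 1 + j)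
        rw [markov1 hS x (Nat.cast_nonneg k) h4]
        have : ((k + 1 + j : ℕ) : ℝ) - k = (j:ℝ) + 1 := by push_cast; ring
        rw [this]
      simp_rw [e4]
      rw [← lintegral_finsetSum _ fun j _ => hm2 _ _ _ _, ← lintegral_add_left (hm2 _ _ _ _),
        ← lint_at hS x (Nat.cast_nonneg k), ← lintegral_const_mul _ (hm _ _)]
      refine lintegral_mono fun ω => ?_
      by_cases hB : S k ω ∈ B
      · have hi1 : ind B (S k ω) = 1 := by simp [ind, hB]
        simp only [hi1, one_mul, mul_one]
        exact hG _ hB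
      · simp [ind, hB]
    calc _ ≤ 2 * ∑ k ∈ I, ENNReal.ofReal D * pkf d k (ind B) x := by gcongr with k hk; exact e3 k
      _ = _ := by
          rw [← Finset.mul_sum, hσ', ENNReal.ofReal_mul (by positivity), ENNReal.ofReal_mul (by norm_num)]
          simp [mul_assoc]
  have hM1 : ENNReal.ofReal (p / 2 * σ) ≤ ∫⁻ ω, M ω ∂P x := by
    simp only [hM]
    rw [lintegral_finsetSum _ fun k _ => measurable_one.indicator (meas_Ek hS B _ k), ENNReal.ofReal_mul (by positivity), ← hσ', Finset.mul_sum]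
    refine Finset.sum_le_sum fun k _ => ?_
    rw [lintegral_indicator_one (meas_Ek hS B _ k)]
    exact Ek_prob hS x B k
  have hMN : ∀ ω, M ω ≤ N ω := by
    intro ω
    refine Finset.sum_le_sum fun k _ => ?_
    by_cases h : ω ∈ Ek S B (p / 2) k
    · simp [h, ind, h.1]
    · simp [h]
  set a := p / (4 * D) with ha
  have ha0 : 0 < a := by positivity
  have hpt : ∀ ω, ENNReal.ofReal (2 * a) * M ω ≤ U.indicator 1 ω + ENNReal.ofReal (a ^ 2) * (N ω * N ω) := by
    intro ω
    have hMc : M ω = ((I.filter (fun k => ω ∈ Ek S B (p / 2) k)).card : ℝ≥0∞) := by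
      simp only [hM, Set.indicator_apply, Pi.one_apply, Finset.sum_boole]
    by_cases hω : ω ∈ U
    · rw [indicator_of_mem hω, Pi.one_apply]
      refine le_trans ?_ (add_le_add le_rfl (mul_le_mul_right (mul_le_mul' (hMN ω) (hMN ω)) _))
      rw [hMc]
      set c := (I.filter (fun k => ω ∈ Ek S B (p / 2) k)).card
      rw [← ENNReal.ofReal_natCast, ← ENNReal.ofReal_mul (by positivity), ← ENNReal.ofReal_mul (by positivity),
        ← ENNReal.ofReal_mul (by positivity), ← ENNReal.ofReal_one, ← ENNReal.ofReal_add (by norm_num) (by positivity)]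
      apply ENNReal.ofReal_le_ofReal
      nlinarith [sq_nonneg (1 - a * c)]
    · have : M ω = 0 := by
        simp only [hM]
        refine Finset.sum_eq_zero fun k hk => ?_
        rw [indicator_of_notMem]
        intro h; exact hω (Set.mem_biUnion (Finset.mem_coe.mpr hk) h)
      rw [this]; simp
  have hMm : Measurable M := Finset.measurable_sum _ fun k _ => measurable_one.indicator (meas_Ek hS B _ k)
  have hNm : Measurable N := Finset.measurable_sum _ fun k _ => hm _ _
  have h5 := lintegral_mono (μ := P x) hpt
  have hNN : Measurable fun ω => N ω * N ω := hNm.mul hNm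
  rw [lintegral_const_mul _ hMm, lintegral_add_left (measurable_one.indicator hUm), lintegral_indicator_one hUm,
    lintegral_const_mul _ hNN] at h5
  have h6 : ENNReal.ofReal (2 * a) * ENNReal.ofReal (p / 2 * σ) ≤ P x U + ENNReal.ofReal (a ^ 2) * ENNReal.ofReal (2 * D * σ) :=
    (mul_le_mul_right hM1 _).trans (h5.trans (add_le_add le_rfl (mul_le_mul_right hN2 _)))
  rw [← ENNReal.ofReal_mul (by positivity), ← ENNReal.ofReal_mul (by positivity)] at h6
  have h7 : 2 * a * (p / 2 * σ) = σ * (p ^ 2 / (8 * D)) + a ^ 2 * (2 * D * σ) := by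
    rw [ha]; field_simp; ring
  rw [h7, ENNReal.ofReal_add (by positivity) (by positivity)] at h6
  exact (ENNReal.add_le_add_iff_right ENNReal.ofReal_ne_top).mp h6

/-- on the event `Ek`, the additive functional is large -/
lemma Ek_large (hS : IsCTSRW d P S) (z : (Fin d → ℤ) → ℝ) (B : Finset (Fin d → ℤ)) {h δ : ℝ} (hB : ∀ y ∈ B, h ≤ z y)
    {n k : ℕ} (hk : k < n) {ω : Ω} (hω : ω ∈ Ek S B δ k) :
    ENNReal.ofReal h * ENNReal.ofReal δ ≤ ∫⁻ u in Ioc (0:ℝ) n, ENNReal.ofReal (z (S u ω)) := by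
  classical
  calc _ ≤ ENNReal.ofReal h * Wk S k ω := by gcongr; exact hω.2
    _ = ∫⁻ u in Ioc (k:ℝ) (k + 1), ENNReal.ofReal h * eqI (S k ω) (S u ω) := by
        rw [Wk, lintegral_const_mul]
        exact (meas_eqI hS k).comp (measurable_id.prodMk measurable_const)
    _ ≤ ∫⁻ u in Ioc (k:ℝ) (k + 1), ENNReal.ofReal (z (S u ω)) := by
        refine lintegral_mono fun u => ?_
        unfold eqI; split_ifs with h1
        · rw [mul_one, h1]; exact ENNReal.ofReal_le_ofReal (hB _ hω.1)
        · simp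
    _ ≤ _ := by
        refine lintegral_mono_set ?_
        refine Ioc_subset_Ioc (Nat.cast_nonneg k) ?_
        exact_mod_cast hk

end walk
end RWRS

namespace RWRS
open scoped ENNReal

/-- lower density estimate -/
def E3 {d : ℕ} (α : ℝ) (z : (Fin d → ℤ) → ℝ) (s ε : ℝ) : Prop :=
  ∀ᶠ n : ℕ in atTop, (n:ℝ) ^ ((d:ℝ) / 2 - α * s - (d + 1) * ε) ≤ ((hi z ((n:ℝ) ^ s) 0 ⌊(n:ℝ) ^ (1 / 2 - ε)⌋₊).card : ℝ)

lemma heat_low (d : ℕ) {ε : ℝ} (hε : 0 < ε) : ∀ᶠ n : ℕ in atTop, ∀ y ∈ box (0 : Fin d → ℤ) ⌊(n:ℝ) ^ (1 / 2 - ε)⌋₊,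
    ∀ k : ℕ, (n:ℝ) / 2 ≤ k → k < n → (n:ℝ) ^ (-((d:ℝ) / 2) - ε) ≤ heatKernel d k 0 y := by
  set c := Real.exp (-(d:ℝ)) / 2 / (2 * Real.pi) ^ d with hc
  have hpi := Real.pi_pos
  have hc0 : 0 < c := by positivity
  filter_upwards [ev_pow d (by linarith : -(ε/2) < 0), ev_exp (4 / c) 0 (-((d:ℝ) / 2)) hε (by positivity : 0 < 2 / Real.pi ^ 2),
    ev_pow (2 / c) (by linarith : -((d:ℝ) / 2) - ε < -((d:ℝ) / 2)), eventually_ge_atTop 2] with n h1 h2 h3 hn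
  intro y hy k hk1 hk2
  have h0 : (0:ℝ) < n := by exact_mod_cast (by omega : 0 < n)
  have hn2 : (2:ℝ) ≤ n := by exact_mod_cast hn
  have hk : (1:ℝ) ≤ k := by linarith
  set h := (n:ℝ) ^ (-(1/2) + ε / 2) with hh
  have hh0 : 0 < h := by positivity
  refine le_trans ?_ (heat_ge d hk hh0.le 0 y ?_)
  · have e1 : (n:ℝ) ^ (-((d:ℝ) / 2)) ≤ ((k:ℝ) ^ (-(1/2) : ℝ)) ^ d := by
      have : (n:ℝ) ^ (-((d:ℝ) / 2)) = ((n:ℝ) ^ (-(1/2) : ℝ)) ^ d := by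
        rw [← Real.rpow_natCast, ← Real.rpow_mul h0.le]; congr 1; ring
      rw [this]
      refine pow_le_pow_left₀ (by positivity) ?_ d
      exact Real.rpow_le_rpow_of_nonpos (by linarith) (by exact_mod_cast hk2.le) (by norm_num)
    have e2 : Real.exp (-(4 / Real.pi ^ 2 * k * h ^ 2)) ≤ Real.exp (-(2 / Real.pi ^ 2 * (n:ℝ) ^ ε)) := by
      apply Real.exp_le_exp.mpr
      have : h ^ 2 = (n:ℝ) ^ (-1 + ε) := by
        rw [hh, ← Real.rpow_natCast, ← Real.rpow_mul h0.le]; congr 1; push_cast; ring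
      rw [this]
      have e3 : (n:ℝ) ^ ε = n * (n:ℝ) ^ (-1 + ε) := by
        nth_rw 2 [← Real.rpow_one (n:ℝ)]
        rw [← Real.rpow_add h0]; congr 1; ring
      rw [e3]
      have : 2 / Real.pi ^ 2 * (n * (n:ℝ) ^ (-1 + ε)) = 4 / Real.pi ^ 2 * (n / 2) * (n:ℝ) ^ (-1 + ε) := by ring
      rw [this]
      apply neg_le_neg
      gcongr
    rw [Real.rpow_zero, mul_one] at h2
    have h2' : 2 * Real.exp (-(2 / Real.pi ^ 2 * (n:ℝ) ^ ε)) ≤ c / 2 * (n:ℝ) ^ (-((d:ℝ) / 2)) := by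
      calc _ = c / 2 * (4 / c * Real.exp (-(2 / Real.pi ^ 2 * (n:ℝ) ^ ε))) := by field_simp; norm_num
        _ ≤ _ := by gcongr
    have h3' : (n:ℝ) ^ (-((d:ℝ) / 2) - ε) ≤ c / 2 * (n:ℝ) ^ (-((d:ℝ) / 2)) := by
      calc _ = c / 2 * (2 / c * (n:ℝ) ^ (-((d:ℝ) / 2) - ε)) := by field_simp
        _ ≤ _ := by gcongr
    have := mul_le_mul_of_nonneg_left e1 hc0.le
    linarith
  · rw [Real.rpow_zero] at h1
    refine le_trans ?_ h1
    calc _ ≤ ∑ j : Fin d, (n:ℝ) ^ (-(ε / 2)) := by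
          refine Finset.sum_le_sum fun j _ => ?_
          have hj := mem_box.mp hy j
          have hj' : ((|((0 : Fin d → ℤ) - y) j| : ℤ) : ℝ) ≤ (n:ℝ) ^ (1 / 2 - ε) := by
            have : |((0 : Fin d → ℤ) - y) j| = |y j - (0 : Fin d → ℤ) j| := abs_sub_comm _ _
            rw [this]
            have h5 : ((|y j - (0 : Fin d → ℤ) j| : ℤ) : ℝ) ≤ ((⌊(n:ℝ) ^ (1 / 2 - ε)⌋₊ : ℤ) : ℝ) := by exact_mod_cast hj
            refine h5.trans ?_
            push_cast
            exact Nat.floor_le (by positivity)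
          calc _ ≤ h * (n:ℝ) ^ (1 / 2 - ε) := by gcongr
            _ = _ := by rw [hh, ← Real.rpow_add h0]; congr 1; ring
      _ = _ := by simp

section walk
variable {d : ℕ} {Ω : Type*} [MeasurableSpace Ω] {P : (Fin d → ℤ) → Measure Ω} {S : ℝ → Ω → (Fin d → ℤ)}

lemma lower (hS : IsCTSRW d P S) (hd : 3 ≤ d) {α ρ s ε : ℝ} (z : (Fin d → ℤ) → ℝ)
    (hs : ρ < s) (hαs : 1 ≤ α * s) (hε : 0 < ε) (hε4 : ε ≤ 1/4) (hE1 : E1 α z s ε) (hE3 : E3 α z s ε) (c : ℝ) :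
    ∀ᶠ n : ℕ in atTop, ENNReal.ofReal ((n:ℝ) ^ (1 - α * s - (2 * d + 5) * ε)) ≤
      P 0 {ω | ENNReal.ofReal (c * (n:ℝ) ^ ρ) ≤ ∫⁻ u in Ioc (0:ℝ) n, ENNReal.ofReal (z (S u ω))} := by
  have hp0 : 0 < Real.exp (-(2 * (d:ℝ))) := Real.exp_pos _
  set p := Real.exp (-(2 * (d:ℝ))) with hp
  have hG := Gc_pos d
  have hdd : (0:ℝ) < d := by exact_mod_cast (by omega : 0 < d)
  filter_upwards [heat_low d hε, green_hi hd z hε hε4 hE1, hE3, eventually_ge_atTop 4, ev_pow (c / (p / 2)) hs,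
    ev_pow (1 + 3 * Gc d) (by nlinarith : ((d:ℝ) + 1) * ε < (d + 2) * ε),
    ev_pow (32 / p ^ 2) (by nlinarith : 1 - α * s - (2 * d + 5) * ε < 1 - α * s - (2 * d + 4) * ε)]
    with n hheat hgreen hcard hn hc hD hfin
  have h0 : (0:ℝ) < n := by exact_mod_cast (by omega : 0 < n)
  have hn1 : (1:ℝ) ≤ n := by exact_mod_cast (by omega : 1 ≤ n)
  set L := ⌊(n:ℝ) ^ (1 / 2 - ε)⌋₊ with hL
  have hLn : L ≤ n := by
    have h1 : (n:ℝ) ^ (1 / 2 - ε) ≤ n := by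
      conv_rhs => rw [← Real.rpow_one (n:ℝ)]
      exact Real.rpow_le_rpow_of_exponent_le hn1 (by linarith)
    exact_mod_cast (Nat.floor_le (by positivity)).trans h1
  set B := hi z ((n:ℝ) ^ s) 0 L with hB
  set I := Finset.Ico (n / 2 + 1) n with hI
  set σ := ∑ k ∈ I, ∑ y ∈ B, heatKernel d k 0 y with hσ
  have hσ' : ∑ k ∈ I, pkf d k (ind B) 0 = ENNReal.ofReal σ := by
    rw [hσ, ENNReal.ofReal_sum_of_nonneg]
    · exact Finset.sum_congr rfl fun k _ => pkf_ind (Nat.cast_nonneg k) B 0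
    · exact fun k _ => Finset.sum_nonneg fun y _ => heat_nonneg d (Nat.cast_nonneg k) _ _
  have hσ0 : 0 ≤ σ := Finset.sum_nonneg fun k _ => Finset.sum_nonneg fun y _ => heat_nonneg d (Nat.cast_nonneg k) _ _
  have hD1 : (1:ℝ) ≤ (n:ℝ) ^ (((d:ℝ) + 2) * ε) := Real.one_le_rpow hn1 (by positivity)
  have hsm := second_moment hS 0 B n I (fun k hk => Finset.mem_range.mpr (Finset.mem_Ico.mp hk).2) (D := (n:ℝ) ^ (((d:ℝ) + 2) * ε)) hD1
    (by
      intro y hy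
      have hyb : y ∈ box (0 : Fin d → ℤ) n := box_mono hLn (mem_hi.mp hy).1
      refine (add_le_add le_rfl (hgreen L hLn y hyb)).trans ?_
      rw [← ENNReal.ofReal_one, ← ENNReal.ofReal_add (by norm_num) (by positivity)]
      apply ENNReal.ofReal_le_ofReal
      refine le_trans ?_ hD
      have a1 : (1:ℝ) ≤ (n:ℝ) ^ (((d:ℝ) + 1) * ε) := Real.one_le_rpow hn1 (by positivity)
      have a2 : (n:ℝ) ^ ε ≤ (n:ℝ) ^ (((d:ℝ) + 1) * ε) := Real.rpow_le_rpow_of_exponent_le hn1 (by nlinarith)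
      have a3 : (n:ℝ) ^ (1 - α * s + (d + 1) * ε) ≤ (n:ℝ) ^ (((d:ℝ) + 1) * ε) := Real.rpow_le_rpow_of_exponent_le hn1 (by linarith)
      nlinarith) hσ0 hσ'
  have hσl : 1 / 4 * (n:ℝ) ^ (1 - α * s - (d + 2) * ε) ≤ σ := by
    have hIc : (n:ℝ) / 4 ≤ (I.card : ℝ) := by
      rw [hI, Nat.card_Ico]
      have : n ≤ 4 * (n - (n / 2 + 1)) := by omega
      have : (n:ℝ) ≤ 4 * ((n - (n / 2 + 1) : ℕ) : ℝ) := by exact_mod_cast this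
      linarith
    calc _ = (n:ℝ) / 4 * ((n:ℝ) ^ ((d:ℝ) / 2 - α * s - (d + 1) * ε) * (n:ℝ) ^ (-((d:ℝ) / 2) - ε)) := by
          rw [← Real.rpow_add h0]
          have : 1 - α * s - ((d:ℝ) + 2) * ε = 1 + ((d:ℝ) / 2 - α * s - (d + 1) * ε + (-((d:ℝ) / 2) - ε)) := by ring
          rw [this, Real.rpow_add h0 1, Real.rpow_one]; ring
      _ ≤ (I.card : ℝ) * ((B.card : ℝ) * (n:ℝ) ^ (-((d:ℝ) / 2) - ε)) := by gcongr
      _ = ∑ k ∈ I, ∑ y ∈ B, (n:ℝ) ^ (-((d:ℝ) / 2) - ε) := by simp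
      _ ≤ σ := by
          refine Finset.sum_le_sum fun k hk => Finset.sum_le_sum fun y hy => ?_
          have hk' := Finset.mem_Ico.mp hk
          refine hheat y (mem_hi.mp hy).1 k ?_ hk'.2
          have : n ≤ 2 * k := by omega
          have : (n:ℝ) ≤ 2 * k := by exact_mod_cast this
          linarith
  refine le_trans (ENNReal.ofReal_le_ofReal ?_) (hsm.trans (measure_mono ?_))
  · calc (n:ℝ) ^ (1 - α * s - (2 * d + 5) * ε) = p ^ 2 / 32 * (32 / p ^ 2 * (n:ℝ) ^ (1 - α * s - (2 * d + 5) * ε)) := by field_simp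
      _ ≤ p ^ 2 / 32 * (n:ℝ) ^ (1 - α * s - (2 * d + 4) * ε) := by gcongr
      _ = 1 / 4 * (n:ℝ) ^ (1 - α * s - (d + 2) * ε) * (p ^ 2 / (8 * (n:ℝ) ^ (((d:ℝ) + 2) * ε))) := by
          have : 1 - α * s - (2 * (d:ℝ) + 4) * ε = 1 - α * s - (d + 2) * ε - (d + 2) * ε := by ring
          rw [this, Real.rpow_sub h0]
          field_simp; ring
      _ ≤ _ := by gcongr
  · intro ω hω
    simp only [mem_iUnion] at hω
    obtain ⟨k, hk, hω⟩ := hω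
    refine le_trans ?_ (Ek_large hS z B (h := (n:ℝ) ^ s) (fun y hy => (mem_hi.mp hy).2.le) (Finset.mem_Ico.mp hk).2 hω)
    rw [← ENNReal.ofReal_mul (by positivity)]
    apply ENNReal.ofReal_le_ofReal
    calc c * (n:ℝ) ^ ρ = p / 2 * (c / (p / 2) * (n:ℝ) ^ ρ) := by field_simp
      _ ≤ p / 2 * (n:ℝ) ^ s := by gcongr
      _ = _ := by ring

end walk
end RWRS

namespace RWRS
open scoped ENNReal

lemma bc {Ω : Type*} [MeasurableSpace Ω] (μ : Measure Ω) (s : ℕ → Set Ω) (f : ℕ → ℝ) (hf : Summable f)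
    (h : ∀ᶠ n in atTop, μ (s n) ≤ ENNReal.ofReal (f n)) : ∀ᵐ ω ∂μ, ∀ᶠ n in atTop, ω ∉ s n := by
  obtain ⟨N, hN⟩ := eventually_atTop.mp h
  have h1 : ∑' n, μ (s (n + N)) ≠ ∞ := by
    refine ne_top_of_le_ne_top ?_ (ENNReal.tsum_le_tsum fun n => hN (n + N) (by omega))
    exact ((summable_nat_add_iff N).mpr hf).tsum_ofReal_ne_top
  filter_upwards [ae_eventually_notMem h1] with ω hω
  obtain ⟨M, hM⟩ := eventually_atTop.mp hω
  filter_upwards [eventually_ge_atTop (M + N)] with n hn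
  have := hM (n - N) (by omega)
  rwa [Nat.sub_add_cancel (by omega)] at this

section env
variable {d : ℕ} {α : ℝ} {Ω : Type*} [MeasurableSpace Ω] {μ : Measure Ω} {z : (Fin d → ℤ) → Ω → ℝ}

lemma tail_both (hz : IsScenery d α μ z) (hα : 0 < α) {s δ : ℝ} (hs : 0 < s) (hδ : 0 < δ) :
    ∀ᶠ n : ℕ in atTop, (n:ℝ) ^ (-(α * s) - δ) ≤ μ.real {ω | (n:ℝ) ^ s < z 0 ω} ∧
      μ.real {ω | (n:ℝ) ^ s < z 0 ω} ≤ (n:ℝ) ^ (-(α * s) + δ) := by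
  have h1 : Tendsto (fun n : ℕ => (n:ℝ) ^ s) atTop atTop :=
    (tendsto_rpow_atTop hs).comp tendsto_natCast_atTop_atTop
  have h2 := hz.tail.comp h1
  have hδs : 0 < δ / s := by positivity
  filter_upwards [h2.eventually (lt_mem_nhds (by linarith : -α - δ / s < -α)),
    h2.eventually (gt_mem_nhds (by linarith : -α < -α + δ / s)), h2.eventually (gt_mem_nhds (by linarith : -α < 0)),
    eventually_ge_atTop 2] with n hl hu hneg hn
  have hn1 : (1:ℝ) < n := by exact_mod_cast hn
  have h0 : (0:ℝ) < n := by linarith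
  have hlog : 0 < Real.log n := Real.log_pos hn1
  simp only [Function.comp, Real.log_rpow h0] at hl hu hneg
  set p := μ.real {ω | (n:ℝ) ^ s < z 0 ω} with hp
  have hp0 : 0 ≤ p := measureReal_nonneg
  change _ < Real.log p / _ at hl
  change Real.log p / _ < _ at hu
  change Real.log p / _ < _ at hneg
  have hsl : 0 < s * Real.log n := by positivity
  have hpp : 0 < p := by
    rcases hp0.lt_or_eq with h | h
    · exact h
    · rw [← h] at hneg; simp at hneg
  rw [lt_div_iff₀ hsl] at hl
  rw [div_lt_iff₀ hsl] at hu
  constructor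
  · rw [Real.rpow_def_of_pos h0, ← Real.le_log_iff_exp_le hpp]
    refine le_trans (le_of_eq ?_) hl.le
    field_simp
  · rw [Real.rpow_def_of_pos h0, ← Real.log_le_iff_le_exp hpp]
    refine hu.le.trans (le_of_eq ?_)
    field_simp

lemma tail_up (hz : IsScenery d α μ z) (hα : 0 < α) {s δ : ℝ} (hs : 0 ≤ s) (hδ : 0 < δ) :
    ∀ᶠ n : ℕ in atTop, μ.real {ω | (n:ℝ) ^ s < z 0 ω} ≤ (n:ℝ) ^ (-(α * s) + δ) := by
  rcases hs.lt_or_eq with h | h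
  · exact (tail_both hz hα h hδ).mono fun n hn => hn.2
  · have := hz.prob
    filter_upwards [eventually_ge_atTop 1] with n hn
    have hn1 : (1:ℝ) ≤ n := by exact_mod_cast hn
    refine measureReal_le_one.trans (Real.one_le_rpow hn1 ?_)
    rw [← h]; simpa using hδ.le

lemma prob_eq (hz : IsScenery d α μ z) (x : Fin d → ℤ) (h : ℝ) :
    μ {ω | h < z x ω} = μ {ω | h < z 0 ω} :=
  (hz.ident x).measure_mem_eq measurableSet_Ioi

/-- number of high points -/
noncomputable def cnt (z : (Fin d → ℤ) → Ω → ℝ) (h : ℝ) (F : Finset (Fin d → ℤ)) (ω : Ω) : ℝ :=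
  ∑ y ∈ F, (Ioi h).indicator (fun _ => (1:ℝ)) (z y ω)

lemma cnt_hi (z : (Fin d → ℤ) → Ω → ℝ) (h : ℝ) (x : Fin d → ℤ) (R : ℕ) (ω : Ω) :
    ((hi (fun y => z y ω) h x R).card : ℝ) = cnt z h (box x R) ω := by
  classical
  simp only [cnt, hi, Set.indicator_apply, mem_Ioi, Finset.sum_boole]

lemma cnt_nonneg (z : (Fin d → ℤ) → Ω → ℝ) (h : ℝ) (F : Finset (Fin d → ℤ)) (ω : Ω) : 0 ≤ cnt z h F ω :=
  Finset.sum_nonneg fun y _ => Set.indicator_nonneg (fun _ _ => zero_le_one) _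

lemma cnt_le (z : (Fin d → ℤ) → Ω → ℝ) (h : ℝ) (F : Finset (Fin d → ℤ)) (ω : Ω) : cnt z h F ω ≤ F.card := by
  rw [cnt, Finset.card_eq_sum_ones]
  push_cast
  exact Finset.sum_le_sum fun y _ => Set.indicator_le_self' (fun _ _ => zero_le_one) _

lemma cnt_meas (hz : IsScenery d α μ z) (h : ℝ) (F : Finset (Fin d → ℤ)) : Measurable (cnt z h F) :=
  Finset.measurable_sum _ fun y _ => (measurable_const.indicator measurableSet_Ioi).comp (hz.meas y)

lemma cnt_int (hz : IsScenery d α μ z) (h t : ℝ) (F : Finset (Fin d → ℤ)) :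
    Integrable (fun ω => Real.exp (t * cnt z h F ω)) μ := by
  have := hz.prob
  refine Integrable.of_bound (((cnt_meas hz h F).const_mul t).exp.aestronglyMeasurable) (Real.exp (|t| * F.card)) ?_
  refine ae_of_all _ fun ω => ?_
  rw [Real.norm_eq_abs, abs_of_pos (Real.exp_pos _)]
  apply Real.exp_le_exp.mpr
  have h1 := cnt_nonneg z h F ω
  have h2 := cnt_le z h F ω
  calc t * cnt z h F ω ≤ |t| * cnt z h F ω := by gcongr; exact le_abs_self t
    _ ≤ _ := by gcongr

lemma cnt_mgf (hz : IsScenery d α μ z) (h t : ℝ) (F : Finset (Fin d → ℤ)) :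
    mgf (cnt z h F) μ t ≤ Real.exp (μ.real {ω | h < z 0 ω} * F.card * (Real.exp t - 1)) := by
  have := hz.prob
  set g : ℝ → ℝ := (Ioi h).indicator (fun _ => (1:ℝ)) with hg
  have hgm : Measurable g := measurable_const.indicator measurableSet_Ioi
  have hind : iIndepFun (fun y ω => g (z y ω)) μ := hz.indep.comp (fun _ => g) (fun _ => hgm)
  have e1 : cnt z h F = ∑ y ∈ F, fun ω => g (z y ω) := by
    ext ω; simp [cnt, hg]
  rw [e1, hind.mgf_sum (fun y => hgm.comp (hz.meas y))]
  have e2 : ∀ y, mgf (fun ω => g (z y ω)) μ t = 1 + (Real.exp t - 1) * μ.real {ω | h < z 0 ω} := by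
    intro y
    have hm : MeasurableSet {ω | h < z y ω} := hz.meas y measurableSet_Ioi
    have e3 : ∀ ω, Real.exp (t * g (z y ω)) = 1 + {ω | h < z y ω}.indicator (fun _ => Real.exp t - 1) ω := by
      intro ω
      by_cases hω : h < z y ω
      · simp [hg, hω]
      · simp [hg, hω]
    simp only [mgf, e3]
    rw [integral_add (integrable_const _) ((integrable_const _).indicator hm), integral_indicator hm]
    simp only [integral_const, smul_eq_mul, probReal_univ, measureReal_restrict_apply MeasurableSet.univ, univ_inter]
    have : μ.real {ω | h < z y ω} = μ.real {ω | h < z 0 ω} := by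
      simp only [measureReal_def, prob_eq hz y h]
    rw [this]; ring
  simp_rw [e2]
  rw [Finset.prod_const]
  set p := μ.real {ω | h < z 0 ω}
  have hp0 : 0 ≤ p := measureReal_nonneg
  have hp1 : p ≤ 1 := measureReal_le_one
  have : p * F.card * (Real.exp t - 1) = F.card * ((Real.exp t - 1) * p) := by ring
  rw [this, Real.exp_nat_mul]
  have hpos : 0 ≤ 1 + (Real.exp t - 1) * p := by nlinarith [Real.exp_pos t]
  refine pow_le_pow_left₀ hpos ?_ _
  linarith [Real.add_one_le_exp ((Real.exp t - 1) * p)]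

lemma cnt_upper (hz : IsScenery d α μ z) (h k : ℝ) (F : Finset (Fin d → ℤ)) :
    μ {ω | k ≤ cnt z h F ω} ≤ ENNReal.ofReal (Real.exp (-k + 2 * (μ.real {ω | h < z 0 ω} * F.card))) := by
  have := hz.prob
  rw [← ofReal_measureReal]
  apply ENNReal.ofReal_le_ofReal
  refine (measure_ge_le_exp_mul_mgf (t := 1) k (by norm_num) (cnt_int hz h 1 F)).trans ?_
  refine (mul_le_mul_of_nonneg_left (cnt_mgf hz h 1 F) (Real.exp_pos _).le).trans ?_
  rw [← Real.exp_add]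
  apply Real.exp_le_exp.mpr
  have h1 : Real.exp 1 - 1 ≤ 2 := by linarith [Real.exp_one_lt_d9]
  have h2 : 0 ≤ μ.real {ω | h < z 0 ω} * F.card := by positivity
  nlinarith

lemma cnt_lower (hz : IsScenery d α μ z) (h k : ℝ) (F : Finset (Fin d → ℤ)) :
    μ {ω | cnt z h F ω ≤ k} ≤ ENNReal.ofReal (Real.exp (k - (μ.real {ω | h < z 0 ω} * F.card) / 2)) := by
  have := hz.prob
  rw [← ofReal_measureReal]
  apply ENNReal.ofReal_le_ofReal
  refine (measure_le_le_exp_mul_mgf (t := -1) k (by norm_num) (cnt_int hz h (-1) F)).trans ?_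
  refine (mul_le_mul_of_nonneg_left (cnt_mgf hz h (-1) F) (Real.exp_pos _).le).trans ?_
  rw [← Real.exp_add]
  apply Real.exp_le_exp.mpr
  have h1 : Real.exp (-1) - 1 ≤ -(1/2) := by linarith [Real.exp_neg_one_lt_d9]
  have h2 : 0 ≤ μ.real {ω | h < z 0 ω} * F.card := by positivity
  nlinarith

lemma summable2 : Summable (fun n : ℕ => (n:ℝ) ^ (-2:ℝ)) := Real.summable_nat_rpow.mpr (by norm_num)

lemma env1 (hz : IsScenery d α μ z) (hα : 0 < α) {s ε : ℝ} (hs : 0 ≤ s) (hε : 0 < ε) :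
    ∀ᵐ ω ∂μ, E1 α (fun y => z y ω) s ε := by
  have key := bc μ (fun n : ℕ => ⋃ q ∈ box (0 : Fin d → ℤ) n ×ˢ Finset.Icc 1 n,
    {ω | (n:ℝ) ^ ε * (1 + (n:ℝ) ^ (-(α * s)) * (q.2 : ℝ) ^ d) ≤ cnt z ((n:ℝ) ^ s) (box q.1 q.2) ω}) _ summable2 ?_
  · filter_upwards [key] with ω hω
    filter_upwards [hω] with n hn x hx R hR1 hR2
    by_contra hcon
    push Not at hcon
    refine hn (mem_biUnion (x := (x, R)) (Finset.mem_coe.mpr (Finset.mem_product.mpr ⟨hx, Finset.mem_Icc.mpr ⟨hR1, hR2⟩⟩)) ?_)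
    change _ ≤ cnt _ _ _ _
    rw [← cnt_hi]
    exact hcon.le
  · filter_upwards [tail_up hz hα hs (half_pos hε), ev_pow (2 * 3 ^ d) (by linarith : -(α * s) + ε / 2 < -(α * s) + ε),
      ev_exp (3 ^ d) (d + 1) (-2) hε one_pos, eventually_ge_atTop 1] with n ht hp he hn
    have h0 : (0:ℝ) < n := by exact_mod_cast hn
    calc _ ≤ ∑ q ∈ box (0 : Fin d → ℤ) n ×ˢ Finset.Icc 1 n, ENNReal.ofReal (Real.exp (-(n:ℝ) ^ ε)) := by
          refine (measure_biUnion_finset_le _ _).trans (Finset.sum_le_sum fun q hq => ?_)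
          obtain ⟨_, hq⟩ := Finset.mem_product.mp hq
          obtain ⟨hq1, hq2⟩ := Finset.mem_Icc.mp hq
          refine (cnt_upper hz _ _ _).trans (ENNReal.ofReal_le_ofReal (Real.exp_le_exp.mpr ?_))
          have hc : ((box q.1 q.2).card : ℝ) ≤ 3 ^ d * (q.2 : ℝ) ^ d := by
            rw [card_box, ← mul_pow]
            exact_mod_cast Nat.pow_le_pow_left (by omega) d
          have h5 : 2 * (μ.real {ω | (n:ℝ) ^ s < z 0 ω} * ((box q.1 q.2).card : ℝ)) ≤ (n:ℝ) ^ (-(α * s) + ε) * (q.2 : ℝ) ^ d := by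
            calc _ ≤ 2 * ((n:ℝ) ^ (-(α * s) + ε / 2) * (3 ^ d * (q.2 : ℝ) ^ d)) := by gcongr
              _ = 2 * 3 ^ d * (n:ℝ) ^ (-(α * s) + ε / 2) * (q.2 : ℝ) ^ d := by ring
              _ ≤ _ := by gcongr
          rw [Real.rpow_add h0] at h5
          linarith
      _ = ENNReal.ofReal (((2 * n + 1) ^ d * n : ℕ) * Real.exp (-(n:ℝ) ^ ε)) := by
          rw [Finset.sum_const, Finset.card_product, card_box, Nat.card_Icc, nsmul_eq_mul,
            ENNReal.ofReal_mul (by positivity), ENNReal.ofReal_natCast]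
          simp
      _ ≤ _ := by
          apply ENNReal.ofReal_le_ofReal
          refine le_trans ?_ he
          rw [one_mul, Real.rpow_add h0, Real.rpow_natCast, Real.rpow_one]
          gcongr
          rw [← mul_assoc, ← mul_pow]
          exact_mod_cast Nat.mul_le_mul_right n (Nat.pow_le_pow_left (by omega) d)

lemma env3 (hz : IsScenery d α μ z) (hα : 0 < α) {s ε : ℝ} (hs : 0 < s) (hε : 0 < ε) (hε2 : (d + 1) * ε < d / 2 - α * s) :
    ∀ᵐ ω ∂μ, E3 α (fun y => z y ω) s ε := by
  have key := bc μ (fun n : ℕ => {ω | cnt z ((n:ℝ) ^ s) (box 0 ⌊(n:ℝ) ^ (1 / 2 - ε)⌋₊) ω ≤ (n:ℝ) ^ ((d:ℝ) / 2 - α * s - (d + 1) * ε)}) _ summable2 ?_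
  · filter_upwards [key] with ω hω
    filter_upwards [hω] with n hn
    rw [cnt_hi]; exact (not_le.mp hn).le
  · set κ := (d:ℝ) / 2 - α * s - d * ε - ε / 2 with hκ
    have hκ0 : 0 < κ := by rw [hκ]; linarith
    filter_upwards [tail_both hz hα hs (half_pos hε), ev_pow 4 (by rw [hκ]; linarith : (d:ℝ) / 2 - α * s - (d + 1) * ε < κ),
      ev_exp 1 0 (-2) hκ0 (by norm_num : (0:ℝ) < 1/4), eventually_ge_atTop 1] with n ht hp he hn
    have h0 : (0:ℝ) < n := by exact_mod_cast hn
    refine (cnt_lower hz _ _ _).trans (ENNReal.ofReal_le_ofReal ?_)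
    rw [Real.rpow_zero, one_mul, one_mul] at he
    refine le_trans (Real.exp_le_exp.mpr ?_) he
    have hc : (n:ℝ) ^ ((d:ℝ) / 2 - d * ε) ≤ ((box (0 : Fin d → ℤ) ⌊(n:ℝ) ^ (1 / 2 - ε)⌋₊).card : ℝ) := by
      rw [card_box]
      have : (n:ℝ) ^ ((d:ℝ) / 2 - d * ε) = ((n:ℝ) ^ (1 / 2 - ε)) ^ d := by
        rw [← Real.rpow_natCast, ← Real.rpow_mul h0.le]; congr 1; ring
      rw [this]
      push_cast
      refine pow_le_pow_left₀ (by positivity) ?_ d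
      have h1 := (Nat.lt_floor_add_one ((n:ℝ) ^ (1 / 2 - ε))).le
      have h2 : (0:ℝ) ≤ (⌊(n:ℝ) ^ (1 / 2 - ε)⌋₊ : ℝ) := Nat.cast_nonneg _
      linarith
    have : (n:ℝ) ^ κ ≤ μ.real {ω | (n:ℝ) ^ s < z 0 ω} * ((box (0 : Fin d → ℤ) ⌊(n:ℝ) ^ (1 / 2 - ε)⌋₊).card : ℝ) := by
      calc (n:ℝ) ^ κ = (n:ℝ) ^ (-(α * s) - ε / 2) * (n:ℝ) ^ ((d:ℝ) / 2 - d * ε) := by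
            rw [← Real.rpow_add h0, hκ]; congr 1; ring
        _ ≤ _ := mul_le_mul ht.1 hc (by positivity) measureReal_nonneg
    linarith

lemma env2 (hz : IsScenery d α μ z) (hα : 0 < α) {ε : ℝ} (hε : 0 < ε) :
    ∀ᵐ ω ∂μ, E2 (fun y => z y ω) ((d:ℝ) / α + ε) := by
  have hprob := hz.prob
  set q := (d:ℝ) / α + ε with hq
  have hq0 : 0 < q := by positivity
  have hαq : α * q = d + α * ε := by rw [hq]; field_simp
  set r : ℝ := (2:ℝ) ^ (-(α * ε / 2)) with hr
  have hr1 : r < 1 := Real.rpow_lt_one_of_one_lt_of_neg (by norm_num) (by have : 0 < α * ε := by positivity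
                                                                          linarith)
  have hsum : Summable (fun m : ℕ => 5 ^ d * r ^ m) := (summable_geometric_of_lt_one (by positivity) hr1).mul_left _
  have key := bc μ (fun m : ℕ => ⋃ y ∈ box (0 : Fin d → ℤ) (2 ^ (m + 1)), {ω | (((2 ^ m : ℕ) : ℝ)) ^ q < z y ω}) _ hsum ?_
  · filter_upwards [key] with ω hω
    obtain ⟨M, hM⟩ := eventually_atTop.mp hω
    have hs0 : 0 ≤ ∑ y ∈ box (0 : Fin d → ℤ) (2 ^ M), z y ω := Finset.sum_nonneg fun y _ => hz.nonneg y ω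
    refine ⟨1 + ∑ y ∈ box (0 : Fin d → ℤ) (2 ^ M), z y ω, by linarith, ?_⟩
    intro R hR y hy
    have hR1 : (1:ℝ) ≤ R := by exact_mod_cast hR
    have hRq : (1:ℝ) ≤ (R:ℝ) ^ q := Real.one_le_rpow hR1 hq0.le
    by_cases hyM : y ∈ box (0 : Fin d → ℤ) (2 ^ M)
    · have : z y ω ≤ ∑ y ∈ box (0 : Fin d → ℤ) (2 ^ M), z y ω :=
        Finset.single_le_sum (f := fun y => z y ω) (fun y _ => hz.nonneg y ω) hyM
      nlinarith
    · have hRM : 2 ^ M < R := by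
        by_contra hcon
        exact hyM (box_mono (by omega) hy)
      have hm1 : 2 ^ (Nat.log 2 R) ≤ R := Nat.pow_log_le_self 2 (by omega)
      have hm2 : R < 2 ^ (Nat.log 2 R + 1) := Nat.lt_pow_succ_log_self (by norm_num) R
      have hMm : M ≤ Nat.log 2 R := (Nat.le_log_iff_pow_le (by norm_num) (by omega)).mpr hRM.le
      have h3 := hM _ hMm
      have h4 : z y ω ≤ (((2 ^ (Nat.log 2 R) : ℕ) : ℝ)) ^ q := by
        by_contra hcon
        push Not at hcon
        exact h3 (mem_biUnion (Finset.mem_coe.mpr (box_mono hm2.le hy)) hcon)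
      have h5 : (((2 ^ (Nat.log 2 R) : ℕ) : ℝ)) ^ q ≤ (R:ℝ) ^ q :=
        Real.rpow_le_rpow (by positivity) (by exact_mod_cast hm1) hq0.le
      nlinarith
  · have htend : Tendsto (fun m : ℕ => 2 ^ m) atTop atTop := tendsto_pow_atTop_atTop_of_one_lt (by norm_num)
    have hαε : 0 < α * ε / 2 := by positivity
    filter_upwards [htend.eventually (tail_up hz hα hq0.le hαε)] with m hm
    refine (measure_biUnion_finset_le _ _).trans ?_
    simp_rw [prob_eq hz]
    rw [Finset.sum_const, card_box, nsmul_eq_mul, ← ofReal_measureReal, ← ENNReal.ofReal_natCast, ← ENNReal.ofReal_mul (by positivity)]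
    apply ENNReal.ofReal_le_ofReal
    have h0 : (0:ℝ) < ((2 ^ m : ℕ) : ℝ) := by positivity
    have hc : (((2 * 2 ^ (m + 1) + 1) ^ d : ℕ) : ℝ) ≤ 5 ^ d * ((2 ^ m : ℕ) : ℝ) ^ d := by
      rw [← mul_pow]
      have : 2 * 2 ^ (m + 1) + 1 ≤ 5 * 2 ^ m := by have := Nat.one_le_two_pow (n := m); rw [pow_succ]; omega
      exact_mod_cast Nat.pow_le_pow_left this d
    calc _ ≤ (5 ^ d * ((2 ^ m : ℕ) : ℝ) ^ d) * ((2 ^ m : ℕ) : ℝ) ^ (-(α * q) + α * ε / 2) := by gcongr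
      _ = 5 ^ d * ((2 ^ m : ℕ) : ℝ) ^ (-(α * ε / 2)) := by
          rw [mul_assoc, ← Real.rpow_natCast (((2 ^ m : ℕ) : ℝ)) d, ← Real.rpow_add h0, hαq]; congr 2; ring
      _ = _ := by
          congr 1
          rw [hr]
          push_cast
          rw [← Real.rpow_natCast, ← Real.rpow_natCast, ← Real.rpow_mul (by norm_num), ← Real.rpow_mul (by norm_num), mul_comm]

end env
end RWRS

namespace RWRS
open scoped ENNReal

section walk
variable {d : ℕ} {Ω : Type*} [MeasurableSpace Ω] {P : (Fin d → ℤ) → Measure Ω} {S : ℝ → Ω → (Fin d → ℤ)}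

lemma rwrs_eq (hS : IsCTSRW d P S) {Ωz : Type*} (z : (Fin d → ℤ) → Ωz → ℝ) (ζ : Ωz) (hz : ∀ y, 0 ≤ z y ζ) (t : ℝ) (ω : Ω) :
    rwrs d z S t ζ ω = (∫⁻ u in Ioc (0:ℝ) t, ENNReal.ofReal (z (S u ω) ζ)).toReal := by
  rw [rwrs, integral_eq_lintegral_of_nonneg_ae]
  · exact ae_of_all _ fun u => hz _
  · have h1 : Measurable fun u : ℝ => S u ω := hS.meas.comp (measurable_id.prodMk measurable_const)
    exact ((measurable_of_countable (fun y => z y ζ)).comp h1).aestronglyMeasurable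

lemma final_lim (hS : IsCTSRW d P S) {Ωz : Type*} (z : (Fin d → ℤ) → Ωz → ℝ) (ζ : Ωz) (hz : ∀ y, 0 ≤ z y ζ) {α ρ : ℝ}
    (hρ : 0 < ρ) (hαρ : 1 < α * ρ)
    (hU : ∀ δ > (0:ℝ), ∀ c > (0:ℝ), ∀ᶠ n : ℕ in atTop,
      P 0 {ω | ENNReal.ofReal (c * (n:ℝ) ^ ρ) ≤ ∫⁻ u in Ioc (0:ℝ) n, ENNReal.ofReal (z (S u ω) ζ)} ≤ ENNReal.ofReal ((n:ℝ) ^ (1 - α * ρ + δ)))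
    (hT : ∀ᶠ n : ℕ in atTop, ∀ᵐ ω ∂P 0, ∫⁻ u in Ioc (0:ℝ) n, ENNReal.ofReal (z (S u ω) ζ) ≠ ∞)
    (hL : ∀ δ > (0:ℝ), ∀ c > (0:ℝ), ∀ᶠ n : ℕ in atTop, ENNReal.ofReal ((n:ℝ) ^ (1 - α * ρ - δ)) ≤
      P 0 {ω | ENNReal.ofReal (c * (n:ℝ) ^ ρ) ≤ ∫⁻ u in Ioc (0:ℝ) n, ENNReal.ofReal (z (S u ω) ζ)}) :
    Tendsto (fun t : ℝ => Real.log ((P 0) {ω | t ^ ρ ≤ rwrs d z S t ζ ω}).toReal / Real.log t)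
      atTop (nhds (-(α * ρ) + 1)) := by
  have hprob := hS.prob 0
  have mono : ∀ {a b : ℝ} (ω : Ω), a ≤ b → ∫⁻ u in Ioc (0:ℝ) a, ENNReal.ofReal (z (S u ω) ζ) ≤ ∫⁻ u in Ioc (0:ℝ) b, ENNReal.ofReal (z (S u ω) ζ) :=
    fun ω h => lintegral_mono_set (Ioc_subset_Ioc le_rfl h)
  -- lower bound
  have low : ∀ δ > (0:ℝ), ∀ᶠ t : ℝ in atTop, 0 < ((P 0) {ω | t ^ ρ ≤ rwrs d z S t ζ ω}).toReal ∧
      (1 - α * ρ - δ) ≤ Real.log ((P 0) {ω | t ^ ρ ≤ rwrs d z S t ζ ω}).toReal / Real.log t := by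
    intro δ hδ
    have hfl : Tendsto (fun t : ℝ => ⌊t⌋₊) atTop atTop := tendsto_nat_floor_atTop
    have hfl1 : Tendsto (fun t : ℝ => ⌊t⌋₊ + 1) atTop atTop := (tendsto_add_atTop_nat 1).comp hfl
    filter_upwards [hfl.eventually (hL δ hδ (2 ^ ρ) (by positivity)), hfl1.eventually hT, eventually_gt_atTop (1:ℝ)] with t h1 h2 ht
    set n := ⌊t⌋₊ with hn
    have hn1 : 1 ≤ n := Nat.le_floor (by exact_mod_cast ht.le)
    have hn1' : (1:ℝ) ≤ n := by exact_mod_cast hn1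
    have hnt : (n:ℝ) ≤ t := Nat.floor_le (by linarith)
    have htn : t < n + 1 := Nat.lt_floor_add_one t
    have h3 : (P 0) {ω | ENNReal.ofReal (2 ^ ρ * (n:ℝ) ^ ρ) ≤ ∫⁻ u in Ioc (0:ℝ) n, ENNReal.ofReal (z (S u ω) ζ)}
        ≤ (P 0) {ω | t ^ ρ ≤ rwrs d z S t ζ ω} := by
      refine measure_mono_ae ?_
      filter_upwards [h2] with ω hω hω2
      change t ^ ρ ≤ rwrs d z S t ζ ω
      rw [rwrs_eq hS z ζ hz]
      push_cast at hω
      have hfin : ∫⁻ u in Ioc (0:ℝ) t, ENNReal.ofReal (z (S u ω) ζ) ≠ ∞ := ne_top_of_le_ne_top hω (mono ω htn.le)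
      rw [← ENNReal.ofReal_le_iff_le_toReal hfin]
      refine le_trans (ENNReal.ofReal_le_ofReal ?_) (le_trans hω2 (mono ω hnt))
      rw [← Real.mul_rpow (by norm_num) (by linarith)]
      exact Real.rpow_le_rpow (by linarith) (by linarith) hρ.le
    have h4 : (n:ℝ) ^ (1 - α * ρ - δ) ≤ ((P 0) {ω | t ^ ρ ≤ rwrs d z S t ζ ω}).toReal :=
      (ENNReal.ofReal_le_iff_le_toReal (measure_ne_top _ _)).mp (h1.trans h3)
    have h0 : (0:ℝ) < n := by linarith
    have hpos : 0 < (n:ℝ) ^ (1 - α * ρ - δ) := by positivity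
    refine ⟨hpos.trans_le h4, ?_⟩
    rw [le_div_iff₀ (Real.log_pos ht)]
    refine le_trans ?_ (Real.log_le_log hpos h4)
    rw [Real.log_rpow h0]
    exact mul_le_mul_of_nonpos_left (Real.log_le_log h0 hnt) (by linarith)
  have up : ∀ δ > (0:ℝ), 1 - α * ρ + δ ≤ 0 → ∀ᶠ t : ℝ in atTop,
      Real.log ((P 0) {ω | t ^ ρ ≤ rwrs d z S t ζ ω}).toReal / Real.log t ≤ (1 - α * ρ + δ) := by
    intro δ hδ hneg
    have hce : Tendsto (fun t : ℝ => ⌈t⌉₊) atTop atTop := tendsto_nat_ceil_atTop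
    filter_upwards [low 1 one_pos, hce.eventually (hU δ hδ (2 ^ (-ρ)) (by positivity)), eventually_gt_atTop (1:ℝ)] with t h0 h1 ht
    set n := ⌈t⌉₊ with hn
    have hnt : t ≤ n := Nat.le_ceil t
    have htn : (n:ℝ) < t + 1 := Nat.ceil_lt_add_one (by linarith)
    have hn0 : (0:ℝ) < n := by linarith
    have h3 : (P 0) {ω | t ^ ρ ≤ rwrs d z S t ζ ω}
        ≤ (P 0) {ω | ENNReal.ofReal (2 ^ (-ρ) * (n:ℝ) ^ ρ) ≤ ∫⁻ u in Ioc (0:ℝ) n, ENNReal.ofReal (z (S u ω) ζ)} := by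
      refine measure_mono fun ω hω => ?_
      change t ^ ρ ≤ rwrs d z S t ζ ω at hω
      rw [rwrs_eq hS z ζ hz] at hω
      change ENNReal.ofReal _ ≤ _
      refine le_trans ?_ ((ENNReal.ofReal_le_ofReal hω).trans (ENNReal.ofReal_toReal_le.trans (mono ω hnt)))
      apply ENNReal.ofReal_le_ofReal
      have : (n:ℝ) ^ ρ ≤ 2 ^ ρ * t ^ ρ := by
        rw [← Real.mul_rpow (by norm_num) (by linarith)]
        exact Real.rpow_le_rpow (by linarith) (by linarith) hρ.le
      rw [Real.rpow_neg (by norm_num)]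
      rw [inv_mul_le_iff₀ (by positivity)]
      exact this
    have hpos : 0 < (n:ℝ) ^ (1 - α * ρ + δ) := by positivity
    have h4 : ((P 0) {ω | t ^ ρ ≤ rwrs d z S t ζ ω}).toReal ≤ (n:ℝ) ^ (1 - α * ρ + δ) :=
      ENNReal.toReal_le_of_le_ofReal hpos.le (h3.trans h1)
    rw [div_le_iff₀ (Real.log_pos ht)]
    refine (Real.log_le_log h0.1 h4).trans ?_
    rw [Real.log_rpow hn0]
    exact mul_le_mul_of_nonpos_left (Real.log_le_log (by linarith) hnt) hneg
  refine tendsto_order.mpr ⟨fun a ha => ?_, fun b hb => ?_⟩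
  · filter_upwards [low ((-(α * ρ) + 1 - a) / 2) (by linarith)] with t ht
    linarith [ht.2]
  · have hδ : 0 < min ((b - (-(α * ρ) + 1)) / 2) (α * ρ - 1) := lt_min (by linarith) (by linarith)
    have m1 := min_le_left ((b - (-(α * ρ) + 1)) / 2) (α * ρ - 1)
    have m2 := min_le_right ((b - (-(α * ρ) + 1)) / 2) (α * ρ - 1)
    filter_upwards [up _ hδ (by linarith)] with t ht
    linarith

end walk

theorem main (d : ℕ) (hd : 3 ≤ d) (α ρ : ℝ) (hα : 0 < α)
    (hρ₁ : max (1 / α) 1 < ρ) (hρ₂ : ρ < d / (2 * α))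
    {Ωz Ωw : Type*} [MeasurableSpace Ωz] [MeasurableSpace Ωw]
    (μ : Measure Ωz) (z : (Fin d → ℤ) → Ωz → ℝ) (hz : IsScenery d α μ z)
    (P : (Fin d → ℤ) → Measure Ωw) (S : ℝ → Ωw → (Fin d → ℤ)) (hS : IsCTSRW d P S) :
    ∀ᵐ ζ ∂ μ, Tendsto
      (fun t : ℝ => Real.log ((P 0) {ω | t ^ ρ ≤ rwrs d z S t ζ ω}).toReal / Real.log t)
      atTop (nhds (-(α * ρ) + 1)) := by
  have hρ1 : 1 < ρ := (le_max_right _ _).trans_lt hρ₁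
  have hρα : 1 < α * ρ := by
    have := (le_max_left _ _).trans_lt hρ₁
    rw [div_lt_iff₀ hα] at this; linarith
  have hρd : 0 < (d:ℝ) / 2 - α * ρ := by
    rw [lt_div_iff₀ (by positivity)] at hρ₂; linarith
  have hρ0 : 0 < ρ := by linarith
  set κ : ℝ := 1 / (4 * (d + 2) * (1 + α)) with hκ
  have hκ0 : 0 < κ := by positivity
  have hκd : ((d:ℝ) + 2) * κ ≤ 1 / 4 := by
    rw [hκ, mul_one_div, div_le_div_iff₀ (by positivity) (by norm_num)]
    nlinarith [(Nat.cast_nonneg d : (0:ℝ) ≤ d), mul_nonneg (Nat.cast_nonneg d : (0:ℝ) ≤ d) hα.le]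
  have hκα : α * κ ≤ 1 / 4 := by
    rw [hκ, mul_one_div, div_le_div_iff₀ (by positivity) (by norm_num)]
    nlinarith [(Nat.cast_nonneg d : (0:ℝ) ≤ d), mul_nonneg (Nat.cast_nonneg d : (0:ℝ) ≤ d) hα.le]
  set η : ℕ → ℝ := fun K => ρ / (K + 1) with hη
  have hη0 : ∀ K, 0 < η K := fun K => by simp only [hη]; positivity
  have hηlim : Tendsto η atTop (nhds 0) := by
    have := (tendsto_one_div_add_atTop_nhds_zero_nat (𝕜 := ℝ)).const_mul ρ
    simpa [hη, div_eq_mul_inv] using this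
  have hlin : ∀ A b : ℝ, 0 < b → ∀ᶠ K in atTop, A * η K < b := by
    intro A b hb
    have := hηlim.const_mul A
    rw [mul_zero] at this
    exact this.eventually (gt_mem_nhds hb)
  have henv : ∀ᵐ ζ ∂μ, ∀ K : ℕ, (∀ j : ℕ, E1 α (fun y => z y ζ) (j * η K) (κ * η K)) ∧
      E2 (fun y => z y ζ) ((d:ℝ) / α + κ * η K) ∧ E1 α (fun y => z y ζ) (ρ + η K) (κ * η K) ∧
      ((d + 1) * (κ * η K) < d / 2 - α * (ρ + η K) → E3 α (fun y => z y ζ) (ρ + η K) (κ * η K)) := by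
    rw [ae_all_iff]
    intro K
    have h1 := hη0 K
    have h2 : 0 < κ * η K := by positivity
    have h3 : ∀ᵐ ζ ∂μ, ((d + 1) * (κ * η K) < d / 2 - α * (ρ + η K) → E3 α (fun y => z y ζ) (ρ + η K) (κ * η K)) := by
      by_cases h : (d + 1) * (κ * η K) < d / 2 - α * (ρ + η K)
      · filter_upwards [env3 hz hα (by linarith : 0 < ρ + η K) h2 h] with ζ hζ _
        exact hζ
      · exact ae_of_all _ fun ζ h' => absurd h' h
    have h4 : ∀ᵐ ζ ∂μ, ∀ j : ℕ, E1 α (fun y => z y ζ) (j * η K) (κ * η K) :=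
      ae_all_iff.mpr fun j => env1 hz hα (by positivity) h2
    filter_upwards [h4, env2 hz hα h2, env1 hz hα (by linarith : 0 ≤ ρ + η K) h2, h3] with ζ a1 a2 a3 a4
    exact ⟨a1, a2, a3, a4⟩
  filter_upwards [henv] with ζ hζ
  -- upper bounds
  have hUT : ∀ δ > (0:ℝ), ∀ c > (0:ℝ), ∀ᶠ n : ℕ in atTop,
      P 0 {ω | ENNReal.ofReal (c * (n:ℝ) ^ ρ) ≤ ∫⁻ u in Ioc (0:ℝ) n, ENNReal.ofReal (z (S u ω) ζ)} ≤ ENNReal.ofReal ((n:ℝ) ^ (1 - α * ρ + δ)) ∧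
      ∀ᵐ ω ∂P 0, ∫⁻ u in Ioc (0:ℝ) n, ENNReal.ofReal (z (S u ω) ζ) ≠ ∞ := by
    intro δ hδ c hc
    obtain ⟨K, k1, k2, k3, k4⟩ := ((hlin 4 (ρ - 1) (by linarith)).and ((hlin (4 + 2 * α) (α * ρ - 1) (by linarith)).and
      ((hlin κ (1/4) (by norm_num)).and (hlin (α + 2) δ hδ)))).exists
    have h1 := hη0 K
    have hu := upper hS hd (α := α) (ρ := ρ) (η := η K) (ε := κ * η K) (fun y => z y ζ) (fun y => hz.nonneg y ζ) K h1
      (by simp only [hη]; field_simp) (by linarith) (by linarith) hα (by positivity) k3.le (by nlinarith) (by nlinarith)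
      (fun j _ => (hζ K).1 j) (hζ K).2.1 hc
    filter_upwards [hu, eventually_ge_atTop 1] with n hn hn1
    refine ⟨hn.1.trans (ENNReal.ofReal_le_ofReal ?_), hn.2⟩
    exact Real.rpow_le_rpow_of_exponent_le (by exact_mod_cast hn1) (by linarith)
  refine final_lim hS z ζ (fun y => hz.nonneg y ζ) hρ0 hρα (fun δ hδ c hc => (hUT δ hδ c hc).mono fun n h => h.1)
    ((hUT 1 one_pos 1 one_pos).mono fun n h => h.2) ?_
  intro δ hδ c hc
  obtain ⟨K, k1, k2, k3⟩ := ((hlin ((d + 1) * κ + α) (d / 2 - α * ρ) hρd).and ((hlin κ (1/4) (by norm_num)).and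
    (hlin (α + (2 * d + 5) * κ) δ hδ))).exists
  have h1 := hη0 K
  have hl := lower hS hd (α := α) (ρ := ρ) (s := ρ + η K) (ε := κ * η K) (fun y => z y ζ) (by linarith)
    (by nlinarith) (by positivity) k2.le (hζ K).2.2.1 ((hζ K).2.2.2 (by linarith)) c
  filter_upwards [hl, eventually_ge_atTop 1] with n hn hn1
  refine le_trans (ENNReal.ofReal_le_ofReal ?_) hn
  exact Real.rpow_le_rpow_of_exponent_le (by exact_mod_cast hn1) (by linarith)

end RWRS

/-- Theorem (upper deviation, power-law regime, unpinned):
for `d ≥ 3`, `0 < α < d/2` and `max(1/α,1) < ρ < d/(2α)`, ℙ-a.s.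
`P₀(A(t) ≥ t^ρ) = t^{-αρ+1+o(1)}` as `t → ∞`. -/
theorem stmt0 (d : ℕ) (hd : 3 ≤ d) (α ρ : ℝ) (hα : 0 < α) (hαd : α < d / 2)
    (hρ₁ : max (1 / α) 1 < ρ) (hρ₂ : ρ < d / (2 * α))
    {Ωz Ωw : Type*} [MeasurableSpace Ωz] [MeasurableSpace Ωw]
    (μ : Measure Ωz) (z : (Fin d → ℤ) → Ωz → ℝ) (hz : IsScenery d α μ z)
    (P : (Fin d → ℤ) → Measure Ωw) (S : ℝ → Ωw → (Fin d → ℤ)) (hS : IsCTSRW d P S) :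
    ∀ᵐ ζ ∂ μ, Tendsto
      (fun t : ℝ => Real.log ((P 0) {ω | t ^ ρ ≤ rwrs d z S t ζ ω}).toReal / Real.log t)
      atTop (nhds (-(α * ρ) + 1)) := by
  exact RWRS.main d hd α ρ hα hρ₁ hρ₂ μ z hz P S hS
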